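/- arXiv:0707.1974 — 3 statements merged into one kernel-verified Lean document; each statement's English description precedes it below -/
import Mathlib

section
/- Corollary (radial case, classical order 2β = 1). Let a, λ, α, A > 0, ν > 0, and let h : [0,∞) → ℝ be continuous and bounded with h(0) = 0. Define u(r,z,t) = (A/Γ(ν)) ∫_0^t (1/τ)·(r²/(4τ))^ν·exp(−r²/(4τ))·exp(λ(z+ατ)/(2a²))·[ ∫_0^{t−τ} ((z+ατ)/(2a√π))·w^{−3/2}·h(t−τ−w)·exp(−λ²w/(4a²))·exp(−(z+ατ)²/(4a²w)) dw ] dτ. Then u solves the classical boundary value problem: (i) ∂u/∂t(r,z,t) = a² ∂²u/∂z²(r,z,t) − λ ∂u/∂z(r,z,t) for all r, z, t > 0; (ii) ∂u/∂t(r,0,t) = ∂²u/∂r²(r,0,t) + ((1−2ν)/r) ∂u/∂r(r,0,t) + α ∂u/∂z(r,0,t) for all r, t > 0; (iii) u(r,z,t) → A·h(t) as (r,z) → (0,0) for each t > 0; (iv) u(r,z,t) → 0 as r² + z² → ∞ for each t > 0; (v) u(r,z,t) → 0 as t → 0⁺ for all r, z > 0. -/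
open MeasureTheory Real Filter Set

/-- The function `w ↦ w ^ (-m) * exp (-c / w)` on `(0, ∞)`, extended by zero. -/
noncomputable def expInvKernel (m c w : ℝ) : ℝ := if 0 < w then w ^ (-m) * exp (-c / w) else 0

lemma expInvKernel_of_pos (m c : ℝ) {w : ℝ} (hw : 0 < w) :
    expInvKernel m c w = w ^ (-m) * exp (-c / w) := if_pos hw

lemma expInvKernel_of_nonpos (m c : ℝ) {w : ℝ} (hw : w ≤ 0) : expInvKernel m c w = 0 :=
  if_neg hw.not_gt

lemma expInvKernel_nonneg (m c w : ℝ) : 0 ≤ expInvKernel m c w := by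
  unfold expInvKernel
  split_ifs with hw
  · positivity
  · exact le_rfl

lemma measurable_expInvKernel (m : ℝ) :
    Measurable fun p : ℝ × ℝ => expInvKernel m p.1 p.2 :=
  Measurable.ite (measurableSet_lt measurable_const measurable_snd) (by fun_prop)
    measurable_const

lemma inv_pow_mul_expInvKernel (m c : ℝ) (n : ℕ) {w : ℝ} (hw : 0 < w) :
    w⁻¹ ^ n * expInvKernel m c w = expInvKernel (m + n) c w := by
  rw [expInvKernel_of_pos _ _ hw, expInvKernel_of_pos _ _ hw, neg_add, rpow_add hw,
    rpow_neg hw.le (n : ℝ), rpow_natCast, inv_pow]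
  ring

lemma exists_expInvKernel_le {m : ℝ} (hm : 0 < m) :
    ∃ C, 0 ≤ C ∧ ∀ c w, 0 < c → expInvKernel m c w ≤ C * c ^ (-m) := by
  refine ⟨m ^ m, by positivity, fun c w hc => ?_⟩
  rcases le_or_gt w 0 with hw | hw
  · rw [expInvKernel_of_nonpos _ _ hw]; positivity
  rw [expInvKernel_of_pos _ _ hw]
  have key : (c / w) ^ m ≤ m ^ m * exp (c / w) := by
    have h1 : c / w ≤ m * exp (c / w / m) := by
      have := add_one_le_exp (c / w / m)
      have h2 : c / w = m * (c / w / m) := by field_simp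
      calc c / w = m * (c / w / m) := h2
        _ ≤ m * exp (c / w / m) := by gcongr; linarith
    calc (c / w) ^ m ≤ (m * exp (c / w / m)) ^ m := by gcongr
      _ = m ^ m * exp (c / w) := by
        rw [mul_rpow hm.le (exp_pos _).le, ← exp_mul]
        congr 2; field_simp
  have e1 : w ^ (-m) * exp (-c / w) = (c / w) ^ m * exp (-(c / w)) * c ^ (-m) := by
    rw [div_rpow hc.le hw.le, rpow_neg hw.le, rpow_neg hc.le, neg_div]
    have := (rpow_pos_of_pos hc m).ne'
    field_simp
  rw [e1]
  gcongr
  calc (c / w) ^ m * exp (-(c / w)) ≤ m ^ m * exp (c / w) * exp (-(c / w)) := by gcongr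
    _ = m ^ m := by rw [mul_assoc, ← exp_add]; simp

/-- The candidate Fréchet derivative of `expInvKernel m` in its last two variables. -/
noncomputable def expInvKernelFDeriv (m c w : ℝ) : ℝ × ℝ →L[ℝ] ℝ :=
  (-expInvKernel (m + 1) c w) • ContinuousLinearMap.fst ℝ ℝ ℝ +
    (-m * expInvKernel (m + 1) c w + c * expInvKernel (m + 2) c w) •
      ContinuousLinearMap.snd ℝ ℝ ℝ

lemma hasFDerivAt_expInvKernel {m : ℝ} (hm : 0 < m) {c : ℝ} (hc : 0 < c) (w : ℝ) :
    HasFDerivAt (fun p : ℝ × ℝ => expInvKernel m p.1 p.2) (expInvKernelFDeriv m c w) (c, w) := by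
  rcases lt_trichotomy w 0 with hw | rfl | hw
  · have hz : expInvKernelFDeriv m c w = 0 := by
      simp [expInvKernelFDeriv, expInvKernel_of_nonpos _ _ hw.le]
    rw [hz]
    refine (hasFDerivAt_const (0 : ℝ) _).congr_of_eventuallyEq ?_
    have : ∀ᶠ p : ℝ × ℝ in nhds (c, w), p.2 < 0 :=
      (continuous_snd.tendsto (c, w)).eventually (gt_mem_nhds hw)
    filter_upwards [this] with p hp
    exact expInvKernel_of_nonpos _ _ hp.le
  · have hz : expInvKernelFDeriv m c 0 = 0 := by
      simp [expInvKernelFDeriv, expInvKernel_of_nonpos _ _ le_rfl]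
    rw [hz]
    obtain ⟨C, hC0, hC⟩ := exists_expInvKernel_le (m := m + 2) (by linarith)
    refine HasFDerivAt.of_isLittleO ?_
    have hO : (fun p : ℝ × ℝ => expInvKernel m p.1 p.2) =O[nhds (c, 0)]
        fun p : ℝ × ℝ => ‖p - (c, 0)‖ ^ 2 := by
      refine Asymptotics.IsBigO.of_bound (C * (c / 2) ^ (-(m + 2))) ?_
      have : ∀ᶠ p : ℝ × ℝ in nhds (c, 0), c / 2 < p.1 :=
        (continuous_fst.tendsto (c, (0 : ℝ))).eventually (lt_mem_nhds (by simp; linarith))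
      filter_upwards [this] with p hp
      have hsq : p.2 ^ 2 ≤ ‖p - (c, 0)‖ ^ 2 := by
        rw [← sq_abs]
        have := norm_snd_le (p - (c, 0))
        simp only [Prod.snd_sub, sub_zero, Real.norm_eq_abs] at this
        gcongr
      rw [Real.norm_of_nonneg (expInvKernel_nonneg _ _ _), Real.norm_of_nonneg (by positivity)]
      rcases le_or_gt p.2 0 with h2 | h2
      · rw [expInvKernel_of_nonpos _ _ h2]; positivity
      · have e := inv_pow_mul_expInvKernel m p.1 2 h2
        have e' : expInvKernel m p.1 p.2 = p.2 ^ 2 * expInvKernel (m + 2) p.1 p.2 := by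
          push_cast at e
          rw [← e]; field_simp
        rw [e', mul_comm]
        have hp0 : 0 < p.1 := by linarith
        gcongr
        refine (hC p.1 p.2 hp0).trans ?_
        gcongr C * ?_
        exact rpow_le_rpow_of_nonpos (by positivity) hp.le (by linarith)
    have hlo : (fun p : ℝ × ℝ => ‖p - (c, 0)‖ ^ 2) =o[nhds (c, 0)]
        fun p : ℝ × ℝ => p - (c, 0) := by
      have := Asymptotics.isLittleO_pow_sub_sub ((c, 0) : ℝ × ℝ) (m := 2) (by norm_num)
      simpa using this
    refine (hO.trans_isLittleO hlo).congr_left fun p => ?_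
    simp [expInvKernel_of_nonpos _ _ le_rfl]
  · have hev : (fun p : ℝ × ℝ => expInvKernel m p.1 p.2) =ᶠ[nhds (c, w)]
        fun p => p.2 ^ (-m) * exp (-p.1 / p.2) := by
      have : ∀ᶠ p : ℝ × ℝ in nhds (c, w), 0 < p.2 :=
        (continuous_snd.tendsto (c, w)).eventually (lt_mem_nhds hw)
      filter_upwards [this] with p hp
      exact expInvKernel_of_pos _ _ hp
    refine HasFDerivAt.congr_of_eventuallyEq ?_ hev
    have hf : HasFDerivAt (fun p : ℝ × ℝ => p.1) (ContinuousLinearMap.fst ℝ ℝ ℝ) (c, w) :=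
      hasFDerivAt_fst
    have hs : HasFDerivAt (fun p : ℝ × ℝ => p.2) (ContinuousLinearMap.snd ℝ ℝ ℝ) (c, w) :=
      hasFDerivAt_snd
    have h1 := hs.rpow_const (p := -m) (Or.inl hw.ne')
    have hi : HasFDerivAt (fun p : ℝ × ℝ => p.2⁻¹) _ (c, w) :=
      (hasDerivAt_inv hw.ne').comp_hasFDerivAt (c, w) hs
    have h2 := (hf.neg.mul hi).exp
    have h3 := h1.mul h2
    refine h3.congr_fderiv ?_
    have r1 : w ^ (-m - 1) = w ^ (-m) * w⁻¹ := by
      rw [rpow_sub_one hw.ne', div_eq_mul_inv]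
    have r2 : w ^ (-(m + 1)) = w ^ (-m) * w⁻¹ := by rw [neg_add, ← sub_eq_add_neg, r1]
    have r3 : w ^ (-(m + 2)) = w ^ (-m) * w⁻¹ ^ 2 := by
      rw [neg_add, rpow_add hw, rpow_neg hw.le 2, inv_pow]; norm_num
    rw [expInvKernelFDeriv, expInvKernel_of_pos _ _ hw, expInvKernel_of_pos _ _ hw, r2, r3]
    ext
    · simp [div_eq_mul_inv]; ring
    · simp [div_eq_mul_inv, r1]; ring

/-- Integral of the kernel `expInvKernel m c (s - ρ v)` against a weight `φ`. -/
noncomputable def kernelIntegral (μ : Measure ℝ) (ρ φ : ℝ → ℝ) (m c s : ℝ) : ℝ :=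
  ∫ v, expInvKernel m c (s - ρ v) * φ v ∂μ

lemma measurable_kernelIntegral (μ : Measure ℝ) [SFinite μ] {ρ φ : ℝ → ℝ} (hρ : Measurable ρ)
    (hφ : Measurable φ) (m : ℝ) :
    Measurable fun p : ℝ × ℝ => kernelIntegral μ ρ φ m p.1 p.2 := by
  have h1 : Measurable fun q : (ℝ × ℝ) × ℝ =>
      expInvKernel m q.1.1 (q.1.2 - ρ q.2) * φ q.2 := by
    have h2 := (measurable_expInvKernel m).comp
      (f := fun q : (ℝ × ℝ) × ℝ => (q.1.1, q.1.2 - ρ q.2)) (by fun_prop)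
    exact h2.mul (by fun_prop)
  exact (h1.stronglyMeasurable.integral_prod_right' (ν := μ)).measurable

lemma exists_abs_kernelIntegral_le (μ : Measure ℝ) (ρ : ℝ → ℝ) {φ : ℝ → ℝ}
    (hφ : Integrable φ μ) {m : ℝ} (hm : 0 < m) :
    ∃ C, 0 ≤ C ∧ ∀ c s, 0 < c → |kernelIntegral μ ρ φ m c s| ≤ C * c ^ (-m) := by
  obtain ⟨C, hC0, hC⟩ := exists_expInvKernel_le hm
  refine ⟨C * ∫ v, |φ v| ∂μ, by positivity, fun c s hc => ?_⟩
  have := norm_integral_le_of_norm_le (μ := μ)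
    (f := fun v => expInvKernel m c (s - ρ v) * φ v) (hφ.norm.const_mul (C * c ^ (-m)))
    (Eventually.of_forall fun v => ?_)
  · rw [integral_const_mul] at this
    refine this.trans (le_of_eq ?_)
    simp only [Real.norm_eq_abs]; ring
  · rw [norm_mul, Real.norm_of_nonneg (expInvKernel_nonneg _ _ _)]
    gcongr
    exact hC _ _ hc

lemma integrable_expInvKernel_mul {μ : Measure ℝ} {ρ φ : ℝ → ℝ}
    (hρ : Measurable ρ) (hφ : Integrable φ μ) {m : ℝ} (hm : 0 < m) {c : ℝ} (hc : 0 < c) (s : ℝ) :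
    Integrable (fun v => expInvKernel m c (s - ρ v) * φ v) μ := by
  obtain ⟨C, hC0, hC⟩ := exists_expInvKernel_le hm
  have hmeas : Measurable fun v => expInvKernel m c (s - ρ v) :=
    (measurable_expInvKernel m).comp (f := fun v => (c, s - ρ v)) (by fun_prop)
  refine hφ.bdd_mul (c := C * c ^ (-m)) hmeas.aestronglyMeasurable ?_
  refine Eventually.of_forall fun v => ?_
  rw [Real.norm_of_nonneg (expInvKernel_nonneg _ _ _)]
  exact hC _ _ hc

lemma hasFDerivAt_kernelIntegral {μ : Measure ℝ} {ρ φ : ℝ → ℝ}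
    (hρ : Measurable ρ) (hφ : Integrable φ μ) {m : ℝ} (hm : 0 < m) {c : ℝ} (hc : 0 < c) (s : ℝ) :
    HasFDerivAt (fun p : ℝ × ℝ => kernelIntegral μ ρ φ m p.1 p.2)
      ((-kernelIntegral μ ρ φ (m + 1) c s) • ContinuousLinearMap.fst ℝ ℝ ℝ +
        (-m * kernelIntegral μ ρ φ (m + 1) c s + c * kernelIntegral μ ρ φ (m + 2) c s) •
          ContinuousLinearMap.snd ℝ ℝ ℝ) (c, s) := by
  obtain ⟨C₁, hC₁0, hC₁⟩ := exists_expInvKernel_le (m := m + 1) (by linarith)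
  obtain ⟨C₂, hC₂0, hC₂⟩ := exists_expInvKernel_le (m := m + 2) (by linarith)
  have hmeas : ∀ m' c' s' : ℝ, Measurable fun v => expInvKernel m' c' (s' - ρ v) :=
    fun m' c' s' => (measurable_expInvKernel m').comp (f := fun v => (c', s' - ρ v)) (by fun_prop)
  have hI1 := integrable_expInvKernel_mul hρ hφ (m := m + 1) (by linarith) hc s
  have hI2 := integrable_expInvKernel_mul hρ hφ (m := m + 2) (by linarith) hc s
  set B₁ := C₁ * (c / 2) ^ (-(m + 1))
  set B₂ := C₂ * (c / 2) ^ (-(m + 2))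
  have hB₁ : 0 ≤ B₁ := by positivity
  have hB₂ : 0 ≤ B₂ := by positivity
  have key := hasFDerivAt_integral_of_dominated_of_fderiv_le (μ := μ) (𝕜 := ℝ)
    (F := fun (p : ℝ × ℝ) v => expInvKernel m p.1 (p.2 - ρ v) * φ v) (x₀ := (c, s))
    (F' := fun p v => φ v • expInvKernelFDeriv m p.1 (p.2 - ρ v))
    (bound := fun v => (B₁ + (m * B₁ + 2 * c * B₂)) * ‖φ v‖)
    (s := {p : ℝ × ℝ | c / 2 < p.1 ∧ p.1 < 2 * c}) ?_ ?_ ?_ ?_ ?_ ?_ ?_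
  · refine key.congr_fderiv ?_
    simp only [expInvKernelFDeriv, smul_add, smul_smul]
    have hI1' : Integrable (fun v => φ v * -expInvKernel (m + 1) c (s - ρ v)) μ := by
      refine hI1.neg.congr (Eventually.of_forall fun v => ?_)
      simp [mul_comm]
    have hI2' : Integrable (fun v => φ v * (-m * expInvKernel (m + 1) c (s - ρ v) +
        c * expInvKernel (m + 2) c (s - ρ v))) μ := by
      refine ((hI1.const_mul (-m)).add (hI2.const_mul c)).congr (Eventually.of_forall fun v => ?_)
      simp only [Pi.add_apply]; ring
    rw [integral_add (hI1'.smul_const _) (hI2'.smul_const _), integral_smul_const,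
      integral_smul_const]
    congr 2
    · rw [kernelIntegral, ← integral_neg]
      congr 1; ext v; ring
    · rw [kernelIntegral, kernelIntegral, ← integral_const_mul, ← integral_const_mul,
        ← integral_add (hI1.const_mul _) (hI2.const_mul _)]
      congr 1; ext v; ring
  · refine IsOpen.mem_nhds ?_ ⟨by simp; linarith, by simp; linarith⟩
    exact (isOpen_lt continuous_const continuous_fst).inter
      (isOpen_lt continuous_fst continuous_const)
  · exact Eventually.of_forall fun p =>
      (hmeas _ _ _).aestronglyMeasurable.mul hφ.aestronglyMeasurable
  · exact integrable_expInvKernel_mul hρ hφ hm hc s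
  · refine hφ.aestronglyMeasurable.smul ?_
    refine AEStronglyMeasurable.add ?_ ?_
    · exact (hmeas _ _ _).neg.aestronglyMeasurable.smul_const _
    · exact (((hmeas _ _ _).const_mul _).add
        ((hmeas _ _ _).const_mul _)).aestronglyMeasurable.smul_const _
  · refine Eventually.of_forall fun v p hp => ?_
    have hp0 : 0 < p.1 := lt_trans (by positivity) hp.1
    have k1 : expInvKernel (m + 1) p.1 (p.2 - ρ v) ≤ B₁ := by
      refine (hC₁ _ _ hp0).trans ?_
      refine mul_le_mul_of_nonneg_left ?_ hC₁0
      exact rpow_le_rpow_of_nonpos (by positivity) hp.1.le (by linarith)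
    have k2 : expInvKernel (m + 2) p.1 (p.2 - ρ v) ≤ B₂ := by
      refine (hC₂ _ _ hp0).trans ?_
      refine mul_le_mul_of_nonneg_left ?_ hC₂0
      exact rpow_le_rpow_of_nonpos (by positivity) hp.1.le (by linarith)
    have n1 := expInvKernel_nonneg (m + 1) p.1 (p.2 - ρ v)
    have n2 := expInvKernel_nonneg (m + 2) p.1 (p.2 - ρ v)
    rw [norm_smul, mul_comm]
    gcongr
    unfold expInvKernelFDeriv
    refine (norm_add_le _ _).trans ?_
    gcongr
    · rw [norm_smul, norm_neg, Real.norm_of_nonneg n1]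
      calc _ ≤ expInvKernel (m + 1) p.1 (p.2 - ρ v) * 1 := by
            gcongr; exact ContinuousLinearMap.norm_fst_le ℝ ℝ ℝ
        _ ≤ B₁ := by simpa using k1
    · rw [norm_smul]
      calc _ ≤ ‖-m * expInvKernel (m + 1) p.1 (p.2 - ρ v) +
              p.1 * expInvKernel (m + 2) p.1 (p.2 - ρ v)‖ * 1 := by
            gcongr; exact ContinuousLinearMap.norm_snd_le ℝ ℝ ℝ
        _ ≤ m * B₁ + 2 * c * B₂ := by
          rw [mul_one]
          refine (norm_add_le _ _).trans ?_
          rw [norm_mul, norm_mul, norm_neg, Real.norm_of_nonneg hm.le, Real.norm_of_nonneg n1,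
            Real.norm_of_nonneg n2, Real.norm_of_nonneg hp0.le]
          have := hp.2.le
          gcongr
  · exact hφ.norm.const_mul _
  · refine Eventually.of_forall fun v p hp => ?_
    have hp0 : 0 < p.1 := lt_trans (by positivity) hp.1
    have h1 := hasFDerivAt_expInvKernel hm hp0 (p.2 - ρ v)
    have h2 : HasFDerivAt (fun p : ℝ × ℝ => (p.1, p.2 - ρ v)) (ContinuousLinearMap.id ℝ (ℝ × ℝ))
        p := by
      have := (hasFDerivAt_id (𝕜 := ℝ) p).sub_const ((0 : ℝ), ρ v)
      exact this.congr_of_eventuallyEq (Eventually.of_forall fun q => by ext <;> simp)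
    have h3 := (h1.comp p h2).mul_const (φ v)
    simpa [Function.comp_def] using! h3

/-- On `0 < x ≤ X`, `|s| ≤ X` the function `f x s` blows up at most polynomially as `x → 0`. -/
def SingularBound (X : ℝ) (f : ℝ → ℝ → ℝ) : Prop :=
  ∃ (C : ℝ) (N : ℕ), 0 ≤ C ∧
    ∀ x s, 0 < x → x ≤ X → |s| ≤ X → |f x s| ≤ C * (1 + x⁻¹) ^ N

namespace SingularBound

variable {X : ℝ} {f g : ℝ → ℝ → ℝ}

lemma add (hf : SingularBound X f) (hg : SingularBound X g) :
    SingularBound X fun x s => f x s + g x s := by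
  obtain ⟨C, N, hC, hf⟩ := hf
  obtain ⟨D, M, hD, hg⟩ := hg
  refine ⟨C + D, N + M, by positivity, fun x s hx hX hs => ?_⟩
  have h1 : 1 ≤ 1 + x⁻¹ := by have := inv_pos.2 hx; linarith
  calc |f x s + g x s| ≤ |f x s| + |g x s| := abs_add_le _ _
    _ ≤ C * (1 + x⁻¹) ^ N + D * (1 + x⁻¹) ^ M := add_le_add (hf x s hx hX hs) (hg x s hx hX hs)
    _ ≤ C * (1 + x⁻¹) ^ (N + M) + D * (1 + x⁻¹) ^ (N + M) := by
      gcongr <;> first | exact h1 | omega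
    _ = _ := by ring

lemma mul (hf : SingularBound X f) (hg : SingularBound X g) :
    SingularBound X fun x s => f x s * g x s := by
  obtain ⟨C, N, hC, hf⟩ := hf
  obtain ⟨D, M, hD, hg⟩ := hg
  refine ⟨C * D, N + M, by positivity, fun x s hx hX hs => ?_⟩
  rw [abs_mul]
  calc |f x s| * |g x s| ≤ (C * (1 + x⁻¹) ^ N) * (D * (1 + x⁻¹) ^ M) := by
        gcongr
        · exact hf x s hx hX hs
        · exact hg x s hx hX hs
    _ = _ := by ring

lemma of_continuous (X : ℝ) (hf : Continuous fun p : ℝ × ℝ => f p.1 p.2) : SingularBound X f := by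
  obtain ⟨C, hC⟩ := ((isCompact_Icc (a := -X) (b := X)).prod
    (isCompact_Icc (a := -X) (b := X))).exists_bound_of_continuousOn hf.continuousOn
  refine ⟨max C 0, 0, le_max_right _ _, fun x s hx hX hs => ?_⟩
  have := hC (x, s) ⟨⟨by linarith, hX⟩, abs_le.1 hs⟩
  simpa using Or.inl this

lemma kernelIntegral (X : ℝ) (μ : Measure ℝ) (ρ : ℝ → ℝ) {φ : ℝ → ℝ} (hφ : Integrable φ μ)
    {m : ℝ} (hm : 0 < m) {b : ℝ} (hb : 0 < b) :
    SingularBound X fun x s => kernelIntegral μ ρ φ m (b * x ^ 2) s := by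
  obtain ⟨C, hC0, hC⟩ := exists_abs_kernelIntegral_le μ ρ hφ hm
  obtain ⟨N, hN⟩ := exists_nat_ge (2 * m)
  refine ⟨C * b ^ (-m), N, by positivity, fun x s hx _ _ => ?_⟩
  have h1 : 1 ≤ 1 + x⁻¹ := by have := inv_pos.2 hx; linarith
  calc _ ≤ C * (b * x ^ 2) ^ (-m) := hC _ _ (by positivity)
    _ = C * b ^ (-m) * x⁻¹ ^ (2 * m) := by
      rw [mul_rpow hb.le (by positivity), inv_rpow hx.le, ← rpow_neg hx.le, ← rpow_natCast x 2,
        ← rpow_mul hx.le, mul_assoc]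
      push_cast
      ring_nf
    _ ≤ C * b ^ (-m) * (1 + x⁻¹) ^ (2 * m) := by gcongr; linarith
    _ ≤ C * b ^ (-m) * (1 + x⁻¹) ^ (N : ℝ) := by
      gcongr 2
    _ = _ := by rw [rpow_natCast]

/-- The kernel `expInvKernel m c` absorbs any polynomial singularity along `x ≥ α * τ`. -/
lemma exists_kernel_mul_le (hf : SingularBound X f) {m c α T : ℝ} (hm : 0 < m)
    (hc : 0 < c) (hα : 0 < α) (hT : 0 < T) :
    ∃ B, ∀ τ x s, 0 < τ → τ ≤ T → α * τ ≤ x → x ≤ X → |s| ≤ X →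
      |expInvKernel m c τ * f x s| ≤ B := by
  obtain ⟨C, N, hC, hf⟩ := hf
  obtain ⟨D, hD0, hD⟩ := exists_expInvKernel_le (m := m + N) (by positivity)
  refine ⟨C * (T + α⁻¹) ^ N * (D * c ^ (-(m + N))), fun τ x s hτ hτT hx hX hs => ?_⟩
  have hατ : 0 < α * τ := by positivity
  have hx0 : 0 < x := hατ.trans_le hx
  have h1 : 1 + x⁻¹ ≤ (T + α⁻¹) * τ⁻¹ := by
    have h2 : x⁻¹ ≤ (α * τ)⁻¹ := inv_anti₀ hατ hx
    have h3 : 1 ≤ T * τ⁻¹ := by rw [← div_eq_mul_inv, one_le_div hτ]; exact hτT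
    rw [mul_inv] at h2
    linarith
  have hk := expInvKernel_nonneg m c τ
  rw [abs_mul, abs_of_nonneg hk]
  calc _ ≤ expInvKernel m c τ * (C * ((T + α⁻¹) * τ⁻¹) ^ N) := by
        gcongr
        refine (hf x s hx0 hX hs).trans ?_
        gcongr
    _ = C * (T + α⁻¹) ^ N * (τ⁻¹ ^ N * expInvKernel m c τ) := by rw [mul_pow]; ring
    _ ≤ _ := by
      rw [inv_pow_mul_expInvKernel _ _ _ hτ]
      gcongr
      exact hD _ _ hc

end SingularBound

/-- A solution `V` of the advection-diffusion equation on `x > 0`, vanishing for `s ≤ 0`,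
with derivatives `V₁ = ∂V/∂x`, `V₂ = ∂²V/∂x²`, `Vₜ = ∂V/∂s` that are at most polynomially
singular at `x = 0`. -/
structure IsDiffusionProfile (a lam : ℝ) (V V₁ V₂ Vₜ : ℝ → ℝ → ℝ) : Prop where
  meas : Measurable fun p : ℝ × ℝ => V p.1 p.2
  meas₁ : Measurable fun p : ℝ × ℝ => V₁ p.1 p.2
  meas₂ : Measurable fun p : ℝ × ℝ => V₂ p.1 p.2
  measₜ : Measurable fun p : ℝ × ℝ => Vₜ p.1 p.2
  bound₁ : ∀ X, SingularBound X V₁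
  bound₂ : ∀ X, SingularBound X V₂
  boundₜ : ∀ X, SingularBound X Vₜ
  hasFDerivAt : ∀ x s, 0 < x → HasFDerivAt (fun p : ℝ × ℝ => V p.1 p.2)
    (V₁ x s • ContinuousLinearMap.fst ℝ ℝ ℝ + Vₜ x s • ContinuousLinearMap.snd ℝ ℝ ℝ) (x, s)
  hasDerivAt₁ : ∀ x s, 0 < x → HasDerivAt (fun y => V₁ y s) (V₂ x s) x
  pde : ∀ x s, Vₜ x s = a ^ 2 * V₂ x s - lam * V₁ x s
  eq_zero : ∀ x s, s ≤ 0 → V x s = 0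
  bounded : ∀ X, ∃ M, ∀ x s, |x| ≤ X → |s| ≤ X → |V x s| ≤ M

/-- The boundary layer potential of the weight `g` on `(0, T]` for the advection-diffusion
equation, up to normalization. -/
noncomputable def layerPotential (κ η b T : ℝ) (g : ℝ → ℝ) (x s : ℝ) : ℝ :=
  exp (κ * x - η * s) * (x * kernelIntegral (volume.restrict (Ioc 0 T)) id g (3 / 2) (b * x ^ 2) s)

section layerPotential

variable {κ η b T : ℝ} {g : ℝ → ℝ}

lemma layerPotential_of_nonpos (x : ℝ) {s : ℝ} (hs : s ≤ 0) :
    layerPotential κ η b T g x s = 0 := by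
  have : kernelIntegral (volume.restrict (Ioc 0 T)) id g (3 / 2) (b * x ^ 2) s = 0 := by
    unfold kernelIntegral
    refine setIntegral_eq_zero_of_forall_eq_zero fun v hv => ?_
    rw [expInvKernel_of_nonpos _ _ (by have := hv.1; simp only [id]; linarith), zero_mul]
  simp [layerPotential, this]

lemma exists_isDiffusionProfile_layerPotential {a lam : ℝ} (ha : 0 < a)
    (hκ : κ = lam / (2 * a ^ 2)) (hη : η = lam ^ 2 / (4 * a ^ 2)) (hb : b = 1 / (4 * a ^ 2))
    (hg : Measurable g) (hgi : IntegrableOn g (Ioc 0 T))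
    (hbdd : ∀ X, ∃ M, ∀ x s, |x| ≤ X → |s| ≤ X → |layerPotential κ η b T g x s| ≤ M) :
    ∃ V₁ V₂ Vₜ, IsDiffusionProfile a lam (layerPotential κ η b T g) V₁ V₂ Vₜ := by
  have hb0 : 0 < b := by rw [hb]; positivity
  set J := kernelIntegral (volume.restrict (Ioc 0 T)) id g with hJ
  have hJm : ∀ m, Measurable fun p : ℝ × ℝ => J m (b * p.1 ^ 2) p.2 := fun m =>
    (measurable_kernelIntegral _ measurable_id hg m).comp (f := fun p : ℝ × ℝ => (b * p.1 ^ 2, p.2))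
      (by fun_prop)
  have hJb : ∀ X m, 0 < m → SingularBound X fun x s => J m (b * x ^ 2) s := fun X m hm =>
    SingularBound.kernelIntegral X _ _ hgi hm hb0
  have hJd : ∀ m x s, 0 < m → 0 < x →
      HasFDerivAt (fun p : ℝ × ℝ => J m (b * p.1 ^ 2) p.2)
        ((-(2 * b * x) * J (m + 1) (b * x ^ 2) s) • ContinuousLinearMap.fst ℝ ℝ ℝ +
        (-m * J (m + 1) (b * x ^ 2) s + (b * x ^ 2) * J (m + 2) (b * x ^ 2) s) •
          ContinuousLinearMap.snd ℝ ℝ ℝ) (x, s) := by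
    intro m x s hm hx
    have h1 := hasFDerivAt_kernelIntegral (μ := volume.restrict (Ioc 0 T)) measurable_id hgi hm
      (c := b * x ^ 2) (by positivity) s
    have hf : HasFDerivAt (fun p : ℝ × ℝ => p.1) (ContinuousLinearMap.fst ℝ ℝ ℝ) (x, s) :=
      hasFDerivAt_fst
    have hs : HasFDerivAt (fun p : ℝ × ℝ => p.2) (ContinuousLinearMap.snd ℝ ℝ ℝ) (x, s) :=
      hasFDerivAt_snd
    have h2 := ((hf.pow 2).const_mul b).prodMk hs
    refine (HasFDerivAt.comp (x, s) h1 h2).congr_fderiv ?_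
    ext
    · simp [hJ]; ring
    · simp [hJ]
  have hE : ∀ x s, HasFDerivAt (fun p : ℝ × ℝ => exp (κ * p.1 - η * p.2))
      ((exp (κ * x - η * s) * κ) • ContinuousLinearMap.fst ℝ ℝ ℝ -
        (exp (κ * x - η * s) * η) • ContinuousLinearMap.snd ℝ ℝ ℝ) (x, s) := by
    intro x s
    have hf : HasFDerivAt (fun p : ℝ × ℝ => p.1) (ContinuousLinearMap.fst ℝ ℝ ℝ) (x, s) :=
      hasFDerivAt_fst
    have hs : HasFDerivAt (fun p : ℝ × ℝ => p.2) (ContinuousLinearMap.snd ℝ ℝ ℝ) (x, s) :=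
      hasFDerivAt_snd
    refine ((hf.const_mul κ).sub (hs.const_mul η)).exp.congr_fderiv ?_
    ext <;> simp
  refine ⟨fun x s => exp (κ * x - η * s) *
      ((κ * x + 1) * J (3 / 2) (b * x ^ 2) s + -(2 * b * x ^ 2) * J (5 / 2) (b * x ^ 2) s),
    fun x s => exp (κ * x - η * s) * ((κ * (κ * x + 1) + κ) * J (3 / 2) (b * x ^ 2) s +
      -(2 * b * κ * x ^ 2 + 2 * b * x * (κ * x + 1) + 4 * b * x) * J (5 / 2) (b * x ^ 2) s +
      4 * b ^ 2 * x ^ 3 * J (7 / 2) (b * x ^ 2) s),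
    fun x s => exp (κ * x - η * s) * (-(η * x) * J (3 / 2) (b * x ^ 2) s +
      -(3 / 2 * x) * J (5 / 2) (b * x ^ 2) s + b * x ^ 3 * J (7 / 2) (b * x ^ 2) s), ?_⟩
  have m3 := hJm (3 / 2)
  have m5 := hJm (5 / 2)
  have m7 := hJm (7 / 2)
  have b3 := fun X => hJb X (3 / 2) (by norm_num)
  have b5 := fun X => hJb X (5 / 2) (by norm_num)
  have b7 := fun X => hJb X (7 / 2) (by norm_num)
  refine ⟨?_, ?_, ?_, ?_, fun X => ?_, fun X => ?_, fun X => ?_, fun x s hx => ?_,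
    fun x s hx => ?_, fun x s => ?_, fun x s hs => layerPotential_of_nonpos x hs, hbdd⟩
  · unfold layerPotential
    exact Measurable.mul (by fun_prop) (measurable_fst.mul m3)
  · exact Measurable.mul (by fun_prop) (((by fun_prop : Measurable _).mul m3).add
      ((by fun_prop : Measurable _).mul m5))
  · exact Measurable.mul (by fun_prop) ((((by fun_prop : Measurable _).mul m3).add
      ((by fun_prop : Measurable _).mul m5)).add ((by fun_prop : Measurable _).mul m7))
  · exact Measurable.mul (by fun_prop) ((((by fun_prop : Measurable _).mul m3).add
      ((by fun_prop : Measurable _).mul m5)).add ((by fun_prop : Measurable _).mul m7))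
  · exact (SingularBound.of_continuous X (by fun_prop)).mul
      (((SingularBound.of_continuous X (by fun_prop)).mul (b3 X)).add
        ((SingularBound.of_continuous X (by fun_prop)).mul (b5 X)))
  · exact (SingularBound.of_continuous X (by fun_prop)).mul
      ((((SingularBound.of_continuous X (by fun_prop)).mul (b3 X)).add
        ((SingularBound.of_continuous X (by fun_prop)).mul (b5 X))).add
          ((SingularBound.of_continuous X (by fun_prop)).mul (b7 X)))
  · exact (SingularBound.of_continuous X (by fun_prop)).mul
      ((((SingularBound.of_continuous X (by fun_prop)).mul (b3 X)).add
        ((SingularBound.of_continuous X (by fun_prop)).mul (b5 X))).add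
          ((SingularBound.of_continuous X (by fun_prop)).mul (b7 X)))
  · have hf : HasFDerivAt (fun p : ℝ × ℝ => p.1) (ContinuousLinearMap.fst ℝ ℝ ℝ) (x, s) :=
      hasFDerivAt_fst
    have h3 := hJd (3 / 2) x s (by norm_num) hx
    rw [show (3 / 2 + 1 : ℝ) = 5 / 2 by norm_num, show (3 / 2 + 2 : ℝ) = 7 / 2 by norm_num] at h3
    refine ((hE x s).mul (hf.mul h3)).congr_fderiv ?_
    ext <;> simp <;> ring
  · have hid : HasFDerivAt (fun y : ℝ => (y, s))
        ((ContinuousLinearMap.id ℝ ℝ).prod (0 : ℝ →L[ℝ] ℝ)) x :=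
      (hasFDerivAt_id x).prodMk (hasFDerivAt_const s x)
    have hx1 : ∀ m, 0 < m → HasDerivAt (fun y => J m (b * y ^ 2) s)
        (-(2 * b * x) * J (m + 1) (b * x ^ 2) s) x := fun m hm => by
      have := ((hJd m x s hm hx).comp x hid).hasDerivAt
      simpa [Function.comp_def] using this
    have hx2 : HasDerivAt (fun y => exp (κ * y - η * s)) (exp (κ * x - η * s) * κ) x := by
      have := ((hE x s).comp x hid).hasDerivAt
      simpa [Function.comp_def] using this
    have h3 := hx1 (3 / 2) (by norm_num)
    have h5 := hx1 (5 / 2) (by norm_num)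
    rw [show (3 / 2 + 1 : ℝ) = 5 / 2 by norm_num] at h3
    rw [show (5 / 2 + 1 : ℝ) = 7 / 2 by norm_num] at h5
    have hl : HasDerivAt (fun y => κ * y + 1) κ x := by
      simpa using ((hasDerivAt_id x).const_mul κ).add_const 1
    have hq : HasDerivAt (fun y => -(2 * b * y ^ 2)) (-(2 * b * (2 * x))) x := by
      simpa using! ((hasDerivAt_pow 2 x).const_mul (2 * b)).neg
    refine (hx2.mul ((hl.mul h3).add (hq.mul h5))).congr_deriv ?_
    simp only [Pi.add_apply, Pi.mul_apply]
    ring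
  · subst hκ hη hb
    field_simp
    ring

end layerPotential

section kernelAverage

variable {f f' : ℝ → ℝ → ℝ} {m c α T : ℝ}

lemma measurable_kernel_mul_profile (hf : Measurable fun p : ℝ × ℝ => f p.1 p.2)
    (m c α z t : ℝ) : Measurable fun τ => expInvKernel m c τ * f (z + α * τ) (t - τ) :=
  ((measurable_expInvKernel m).comp (f := fun τ => (c, τ)) (by fun_prop)).mul
    (hf.comp (f := fun τ => (z + α * τ, t - τ)) (by fun_prop))

lemma exists_kernel_mul_profile_le (hf : ∀ X, SingularBound X f) (hm : 0 < m) (hc : 0 < c)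
    (hα : 0 < α) (hT : 0 < T) (R : ℝ) :
    ∃ B, ∀ z t, 0 ≤ z → z ≤ R → |t| ≤ R → ∀ τ ∈ Ioc 0 T,
      ‖expInvKernel m c τ * f (z + α * τ) (t - τ)‖ ≤ B := by
  obtain ⟨B, hB⟩ := (hf (R + α * T + T)).exists_kernel_mul_le hm hc hα hT
  refine ⟨B, fun z t hz hzR htR τ hτ => hB τ _ _ hτ.1 hτ.2 (by linarith) ?_ ?_⟩
  · have : α * τ ≤ α * T := by gcongr; exact hτ.2
    linarith
  · have h1 := abs_sub t τ
    have h2 : |τ| = τ := abs_of_pos hτ.1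
    have h3 : 0 ≤ α * T := by positivity
    linarith [hτ.2]

lemma integrableOn_kernel_mul_profile (hf : Measurable fun p : ℝ × ℝ => f p.1 p.2)
    (hfb : ∀ X, SingularBound X f) (hm : 0 < m) (hc : 0 < c) (hα : 0 < α) (hT : 0 < T)
    {z : ℝ} (hz : 0 ≤ z) (t : ℝ) :
    IntegrableOn (fun τ => expInvKernel m c τ * f (z + α * τ) (t - τ)) (Ioc 0 T) := by
  obtain ⟨B, hB⟩ := exists_kernel_mul_profile_le hfb hm hc hα hT (z + |t|)
  refine Measure.integrableOn_of_bounded (M := B) (by simp)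
    (measurable_kernel_mul_profile hf m c α z t).aestronglyMeasurable ?_
  filter_upwards [ae_restrict_mem measurableSet_Ioc] with τ hτ
  exact hB z t hz (by linarith [abs_nonneg t]) (by linarith) τ hτ

lemma hasDerivAt_space_kernelAverage (hf : Measurable fun p : ℝ × ℝ => f p.1 p.2)
    (hfb : ∀ X, SingularBound X f) (hf' : Measurable fun p : ℝ × ℝ => f' p.1 p.2)
    (hfb' : ∀ X, SingularBound X f')
    (hd : ∀ x s, 0 < x → HasDerivAt (fun y => f y s) (f' x s) x)
    (hm : 0 < m) (hc : 0 < c) (hα : 0 < α) (hT : 0 < T) {z : ℝ} (hz : 0 < z) (t : ℝ) :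
    HasDerivAt (fun z' => ∫ τ in Ioc 0 T, expInvKernel m c τ * f (z' + α * τ) (t - τ))
      (∫ τ in Ioc 0 T, expInvKernel m c τ * f' (z + α * τ) (t - τ)) z := by
  obtain ⟨B, hB⟩ := exists_kernel_mul_profile_le hfb' hm hc hα hT (2 * z + |t|)
  have hnonneg := abs_nonneg t
  refine (hasDerivAt_integral_of_dominated_loc_of_deriv_le (μ := volume.restrict (Ioc 0 T))
    (F := fun z' τ => expInvKernel m c τ * f (z' + α * τ) (t - τ))
    (F' := fun z' τ => expInvKernel m c τ * f' (z' + α * τ) (t - τ))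
    (bound := fun _ => B) (s := Ioo 0 (2 * z)) (Ioo_mem_nhds hz (by linarith)) ?_ ?_ ?_ ?_ ?_ ?_).2
  · exact Eventually.of_forall fun z' =>
      (measurable_kernel_mul_profile hf m c α z' t).aestronglyMeasurable
  · exact integrableOn_kernel_mul_profile hf hfb hm hc hα hT hz.le t
  · exact (measurable_kernel_mul_profile hf' m c α z t).aestronglyMeasurable
  · filter_upwards [ae_restrict_mem measurableSet_Ioc] with τ hτ z' hz'
    exact hB z' t hz'.1.le (by linarith [hz'.2]) (by linarith) τ hτ
  · exact integrable_const _
  · filter_upwards [ae_restrict_mem measurableSet_Ioc] with τ hτ z' hz'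
    have hx : 0 < z' + α * τ := add_pos hz'.1 (mul_pos hα hτ.1)
    exact ((hd _ (t - τ) hx).comp_add_const z' (α * τ)).const_mul _

lemma hasDerivAt_time_kernelAverage (hf : Measurable fun p : ℝ × ℝ => f p.1 p.2)
    (hfb : ∀ X, SingularBound X f) (hf' : Measurable fun p : ℝ × ℝ => f' p.1 p.2)
    (hfb' : ∀ X, SingularBound X f')
    (hd : ∀ x s, 0 < x → HasDerivAt (fun s' => f x s') (f' x s) s)
    (hm : 0 < m) (hc : 0 < c) (hα : 0 < α) (hT : 0 < T) {z : ℝ} (hz : 0 ≤ z) (t : ℝ) :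
    HasDerivAt (fun t' => ∫ τ in Ioc 0 T, expInvKernel m c τ * f (z + α * τ) (t' - τ))
      (∫ τ in Ioc 0 T, expInvKernel m c τ * f' (z + α * τ) (t - τ)) t := by
  obtain ⟨B, hB⟩ := exists_kernel_mul_profile_le hfb' hm hc hα hT (z + |t| + 1)
  have hnonneg := abs_nonneg t
  refine (hasDerivAt_integral_of_dominated_loc_of_deriv_le (μ := volume.restrict (Ioc 0 T))
    (F := fun t' τ => expInvKernel m c τ * f (z + α * τ) (t' - τ))
    (F' := fun t' τ => expInvKernel m c τ * f' (z + α * τ) (t' - τ))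
    (bound := fun _ => B) (s := Metric.ball t 1) (Metric.ball_mem_nhds t one_pos)
    ?_ ?_ ?_ ?_ ?_ ?_).2
  · exact Eventually.of_forall fun t' =>
      (measurable_kernel_mul_profile hf m c α z t').aestronglyMeasurable
  · exact integrableOn_kernel_mul_profile hf hfb hm hc hα hT hz t
  · exact (measurable_kernel_mul_profile hf' m c α z t).aestronglyMeasurable
  · filter_upwards [ae_restrict_mem measurableSet_Ioc] with τ hτ t' ht'
    refine hB z t' hz (by linarith) ?_ τ hτ
    have h1 : |t' - t| < 1 := ht'
    have h2 := abs_add_le t (t' - t)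
    rw [add_sub_cancel] at h2
    linarith
  · exact integrable_const _
  · filter_upwards [ae_restrict_mem measurableSet_Ioc] with τ hτ t' ht'
    have hx : 0 < z + α * τ := add_pos_of_nonneg_of_pos hz (mul_pos hα hτ.1)
    exact ((hd _ (t' - τ) hx).comp_sub_const t' τ).const_mul _

end kernelAverage

namespace IsDiffusionProfile

variable {a lam : ℝ} {V V₁ V₂ Vₜ : ℝ → ℝ → ℝ}

lemma bound (hV : IsDiffusionProfile a lam V V₁ V₂ Vₜ)
    (X : ℝ) : SingularBound X V := by
  obtain ⟨M, hM⟩ := hV.bounded X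
  refine ⟨max M 0, 0, le_max_right _ _, fun x s hx hX hs => ?_⟩
  have := hM x s (by rwa [abs_of_pos hx]) hs
  simpa using Or.inl this

lemma hasDerivAt_space (hV : IsDiffusionProfile a lam V V₁ V₂ Vₜ)
    {x : ℝ} (s : ℝ) (hx : 0 < x) : HasDerivAt (fun y => V y s) (V₁ x s) x := by
  have hid : HasFDerivAt (fun y : ℝ => (y, s))
      ((ContinuousLinearMap.id ℝ ℝ).prod (0 : ℝ →L[ℝ] ℝ)) x :=
    (hasFDerivAt_id x).prodMk (hasFDerivAt_const s x)
  simpa [Function.comp_def] using ((hV.hasFDerivAt x s hx).comp x hid).hasDerivAt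

lemma hasDerivAt_time (hV : IsDiffusionProfile a lam V V₁ V₂ Vₜ)
    {x : ℝ} (s : ℝ) (hx : 0 < x) :
    HasDerivAt (fun s' => V x s') (Vₜ x s) s := by
  have hid : HasFDerivAt (fun s' : ℝ => (x, s'))
      ((0 : ℝ →L[ℝ] ℝ).prod (ContinuousLinearMap.id ℝ ℝ)) s :=
    (hasFDerivAt_const x s).prodMk (hasFDerivAt_id s)
  simpa [Function.comp_def] using ((hV.hasFDerivAt x s hx).comp s hid).hasDerivAt

lemma hasDerivAt_ray (hV : IsDiffusionProfile a lam V V₁ V₂ Vₜ)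
    {α τ : ℝ} (t : ℝ) (hα : 0 < α) (hτ : 0 < τ) :
    HasDerivAt (fun τ' => V (α * τ') (t - τ')) (α * V₁ (α * τ) (t - τ) - Vₜ (α * τ) (t - τ)) τ := by
  have h1 : HasDerivAt (fun τ' : ℝ => α * τ') α τ := by
    simpa using (hasDerivAt_id τ).const_mul α
  have h2 : HasDerivAt (fun τ' : ℝ => t - τ') (-1) τ := by
    simpa using (hasDerivAt_id τ).const_sub t
  have h3 := (hV.hasFDerivAt (α * τ) (t - τ) (by positivity)).comp_hasDerivAt τ (h1.prodMk h2)
  refine h3.congr_deriv ?_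
  simp
  ring

/-- The profile is Lipschitz at `x₀ > 0`, with a constant that is at most polynomially singular. -/
lemma exists_abs_sub_le (hV : IsDiffusionProfile a lam V V₁ V₂ Vₜ)
    (X : ℝ) :
    ∃ L : ℝ → ℝ → ℝ, Measurable (fun p : ℝ × ℝ => L p.1 p.2) ∧ (∀ Y, SingularBound Y L) ∧
      ∀ x x₀ s, 0 < x₀ → |x| ≤ X → x₀ ≤ X → |s| ≤ X → |V x s - V x₀ s| ≤ L x₀ s * |x - x₀| := by
  obtain ⟨M, hM⟩ := hV.bounded X
  obtain ⟨C, N, hC, h1⟩ := hV.bound₁ X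
  refine ⟨fun x₀ _ => C * (1 + 2 * x₀⁻¹) ^ N + 4 * max M 0 * x₀⁻¹, by fun_prop, fun Y => ?_, ?_⟩
  · have hinv : SingularBound Y fun x _ => x⁻¹ := by
      refine ⟨1, 1, zero_le_one, fun x s hx _ _ => ?_⟩
      rw [abs_of_pos (inv_pos.2 hx)]
      linarith
    have hpow : ∀ n : ℕ, SingularBound Y fun x _ => (1 + 2 * x⁻¹) ^ n := by
      intro n
      induction n with
      | zero => simpa using SingularBound.of_continuous (f := fun _ _ => 1) Y (by fun_prop)
      | succ n ih =>
        simp only [pow_succ]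
        exact ih.mul ((SingularBound.of_continuous (f := fun _ _ => 1) Y (by fun_prop)).add
          ((SingularBound.of_continuous (f := fun _ _ => 2) Y (by fun_prop)).mul hinv))
    exact ((SingularBound.of_continuous (f := fun _ _ => C) Y (by fun_prop)).mul (hpow N)).add
      ((SingularBound.of_continuous (f := fun _ _ => 4 * max M 0) Y (by fun_prop)).mul hinv)
  · intro x x₀ s hx₀ hx hx₀X hs
    have hi : 0 < x₀⁻¹ := inv_pos.2 hx₀
    have hmax : 0 ≤ max M 0 := le_max_right _ _
    rcases le_or_gt (x₀ / 2) x with hxx | hxx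
    · have key := Convex.norm_image_sub_le_of_norm_hasDerivWithin_le (s := Icc (x₀ / 2) X)
        (f := fun y => V y s) (f' := fun y => V₁ y s) (x := x₀) (y := x)
        (C := C * (1 + 2 * x₀⁻¹) ^ N) ?_ ?_ (convex_Icc _ _) ⟨by linarith, hx₀X⟩
        ⟨hxx, (le_abs_self x).trans hx⟩
      · refine key.trans ?_
        rw [Real.norm_eq_abs]
        gcongr
        have : 0 ≤ 4 * max M 0 * x₀⁻¹ := by positivity
        linarith
      · intro y hy
        exact (hV.hasDerivAt_space s (by linarith [hy.1])).hasDerivWithinAt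
      · intro y hy
        have hy0 : 0 < y := by linarith [hy.1]
        refine (h1 y s hy0 hy.2 hs).trans ?_
        have : y⁻¹ ≤ 2 * x₀⁻¹ := by
          rw [show 2 * x₀⁻¹ = (x₀ / 2)⁻¹ by rw [inv_div]; ring]
          exact inv_anti₀ (by positivity) hy.1
        gcongr
    · have hfar : 1 ≤ 2 * x₀⁻¹ * |x - x₀| := by
        have h2 : x₀ / 2 ≤ |x - x₀| := by
          rw [abs_sub_comm]
          exact le_trans (by linarith) (le_abs_self _)
        calc (1 : ℝ) = 2 * x₀⁻¹ * (x₀ / 2) := by field_simp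
          _ ≤ _ := by gcongr
      have hx₀a : |x₀| ≤ X := by rwa [abs_of_pos hx₀]
      calc |V x s - V x₀ s| ≤ |V x s| + |V x₀ s| := abs_sub _ _
        _ ≤ 2 * max M 0 * 1 := by
          have := (hM x s hx hs).trans (le_max_left M 0)
          have := (hM x₀ s hx₀a hs).trans (le_max_left M 0)
          linarith
        _ ≤ 2 * max M 0 * (2 * x₀⁻¹ * |x - x₀|) := by gcongr
        _ ≤ (C * (1 + 2 * x₀⁻¹) ^ N + 4 * max M 0 * x₀⁻¹) * |x - x₀| := by
          have : 0 ≤ C * (1 + 2 * x₀⁻¹) ^ N * |x - x₀| := by positivity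
          linarith

variable {m c α T : ℝ}

lemma hasDerivAt_boundary_kernelAverage (hV : IsDiffusionProfile a lam V V₁ V₂ Vₜ)
    (hm : 0 < m) (hc : 0 < c) (hα : 0 < α) (hT : 0 < T)
    (t : ℝ) :
    HasDerivAt (fun z' => ∫ τ in Ioc 0 T, expInvKernel m c τ * V (z' + α * τ) (t - τ))
      (∫ τ in Ioc 0 T, expInvKernel m c τ * V₁ (0 + α * τ) (t - τ)) 0 := by
  obtain ⟨L, hLm, hLb, hL⟩ := hV.exists_abs_sub_le (1 + α * T + |t| + T)
  have hnonneg := abs_nonneg t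
  have hαT : 0 ≤ α * T := by positivity
  have hi₁ := integrableOn_kernel_mul_profile hV.meas₁ hV.bound₁ hm hc hα hT le_rfl t
  have key := (hasFDerivAt_integral_of_dominated_loc_of_lip' (μ := volume.restrict (Ioc 0 T))
    (𝕜 := ℝ) (x₀ := (0 : ℝ)) (s := Metric.ball 0 1)
    (F := fun z' τ => expInvKernel m c τ * V (z' + α * τ) (t - τ))
    (F' := fun τ => ContinuousLinearMap.toSpanSingleton ℝ
      (expInvKernel m c τ * V₁ (0 + α * τ) (t - τ)))
    (bound := fun τ => expInvKernel m c τ * L (0 + α * τ) (t - τ))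
    (Metric.ball_mem_nhds 0 one_pos) ?_ ?_ ?_ ?_ ?_ ?_).2
  · refine (hasDerivAt_iff_hasFDerivAt.2 ?_)
    refine key.congr_fderiv ?_
    ext
    rw [ContinuousLinearMap.integral_apply]
    · simp
    · exact (ContinuousLinearMap.toSpanSingletonCLE (𝕜 := ℝ) (E := ℝ)).toContinuousLinearMap
        |>.integrable_comp hi₁
  · exact fun z' _ => (measurable_kernel_mul_profile hV.meas m c α z' t).aestronglyMeasurable
  · exact integrableOn_kernel_mul_profile hV.meas hV.bound hm hc hα hT le_rfl t
  · exact (ContinuousLinearMap.toSpanSingletonCLE (𝕜 := ℝ) (E := ℝ)).continuous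
      |>.comp_aestronglyMeasurable hi₁.aestronglyMeasurable
  · filter_upwards [ae_restrict_mem measurableSet_Ioc] with τ hτ z' hz'
    have hατ : 0 < α * τ := mul_pos hα hτ.1
    have hατT : α * τ ≤ α * T := by gcongr; exact hτ.2
    have hz1 : |z'| < 1 := by simpa using hz'
    rw [← mul_sub, norm_mul, Real.norm_of_nonneg (expInvKernel_nonneg _ _ _), mul_assoc]
    refine mul_le_mul_of_nonneg_left ?_ (expInvKernel_nonneg _ _ _)
    have h1 := abs_add_le z' (α * τ)
    have h2 := abs_sub t τ
    rw [abs_of_pos hατ] at h1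
    rw [abs_of_pos hτ.1] at h2
    have := hL (z' + α * τ) (0 + α * τ) (t - τ) (by linarith) (by linarith) (by linarith)
      (by linarith [hτ.2])
    simpa using this
  · exact integrableOn_kernel_mul_profile hLm hLb hm hc hα hT le_rfl t
  · filter_upwards [ae_restrict_mem measurableSet_Ioc] with τ hτ
    have hx : 0 < 0 + α * τ := by have := mul_pos hα hτ.1; linarith
    exact (((hV.hasDerivAt_space (t - τ) hx).comp_add_const 0 (α * τ)).const_mul _).hasFDerivAt

/-- Integration by parts along the ray `(α τ, t - τ)`. -/
lemma integral_kernel_deriv (hV : IsDiffusionProfile a lam V V₁ V₂ Vₜ)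
    (hm : 0 < m) (hc : 0 < c) (hα : 0 < α) {t : ℝ} (ht : 0 < t)
    (hT : t < T) :
    ∫ τ in Ioc 0 T, (-m * expInvKernel (m + 1) c τ + c * expInvKernel (m + 2) c τ) *
        V (0 + α * τ) (t - τ) =
      (∫ τ in Ioc 0 T, expInvKernel m c τ * Vₜ (0 + α * τ) (t - τ)) -
        α * ∫ τ in Ioc 0 T, expInvKernel m c τ * V₁ (0 + α * τ) (t - τ) := by
  have hT0 : 0 < T := ht.trans hT
  have hi₁ := integrableOn_kernel_mul_profile hV.meas₁ hV.bound₁ hm hc hα hT0 le_rfl t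
  have hiₜ := integrableOn_kernel_mul_profile hV.measₜ hV.boundₜ hm hc hα hT0 le_rfl t
  have hj₁ := integrableOn_kernel_mul_profile (m := m + 1) hV.meas hV.bound (by linarith) hc hα
    hT0 le_rfl t
  have hj₂ := integrableOn_kernel_mul_profile (m := m + 2) hV.meas hV.bound (by linarith) hc hα
    hT0 le_rfl t
  have hk : ∀ τ, HasDerivAt (fun τ => expInvKernel m c τ)
      (-m * expInvKernel (m + 1) c τ + c * expInvKernel (m + 2) c τ) τ := by
    intro τ
    have hid : HasFDerivAt (fun s' : ℝ => (c, s'))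
        ((0 : ℝ →L[ℝ] ℝ).prod (ContinuousLinearMap.id ℝ ℝ)) τ :=
      (hasFDerivAt_const c τ).prodMk (hasFDerivAt_id τ)
    have := ((hasFDerivAt_expInvKernel hm hc τ).comp τ hid).hasDerivAt
    simpa [Function.comp_def, expInvKernelFDeriv] using this
  have hd : ∀ τ, 0 < τ → HasDerivAt (fun τ => expInvKernel m c τ * V (α * τ) (t - τ))
      ((-m * expInvKernel (m + 1) c τ + c * expInvKernel (m + 2) c τ) * V (0 + α * τ) (t - τ) +
        expInvKernel m c τ * (α * V₁ (0 + α * τ) (t - τ) - Vₜ (0 + α * τ) (t - τ))) τ := by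
    intro τ hτ
    rw [zero_add]
    exact (hk τ).mul (hV.hasDerivAt_ray t hα hτ)
  have hcont : ContinuousOn (fun τ => expInvKernel m c τ * V (α * τ) (t - τ)) (Icc 0 T) := by
    intro τ hτ
    rcases hτ.1.eq_or_lt with rfl | h0
    · obtain ⟨M, hM⟩ := hV.bounded (α * T + t + T)
      have hz : expInvKernel m c 0 * V (α * 0) (t - 0) = 0 := by
        rw [expInvKernel_of_nonpos _ _ le_rfl, zero_mul]
      rw [ContinuousWithinAt, hz]
      have hlim : Tendsto (fun τ => expInvKernel m c τ * M) (nhdsWithin 0 (Icc 0 T)) (nhds 0) := by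
        have := ((hk 0).continuousAt.tendsto.mul_const M).mono_left
          (nhdsWithin_le_nhds (s := Icc 0 T))
        rwa [expInvKernel_of_nonpos _ _ le_rfl, zero_mul] at this
      refine squeeze_zero_norm' ?_ hlim
      filter_upwards [self_mem_nhdsWithin] with σ hσ
      rw [norm_mul, Real.norm_of_nonneg (expInvKernel_nonneg _ _ _)]
      refine mul_le_mul_of_nonneg_left (hM _ _ ?_ ?_) (expInvKernel_nonneg _ _ _)
      · have h1 : 0 ≤ α * σ := mul_nonneg hα.le hσ.1
        have h2 : α * σ ≤ α * T := by gcongr; exact hσ.2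
        rw [abs_of_nonneg h1]; linarith
      · have h2 : 0 ≤ α * T := by positivity
        rw [abs_le]; constructor <;> linarith [hσ.1, hσ.2]
    · exact (hd τ h0).continuousAt.continuousWithinAt
  have hker₁ : IntegrableOn (fun τ => (-m * expInvKernel (m + 1) c τ +
      c * expInvKernel (m + 2) c τ) * V (0 + α * τ) (t - τ)) (Ioc 0 T) := by
    refine ((hj₁.const_mul (-m)).add (hj₂.const_mul c)).congr (Eventually.of_forall fun τ => ?_)
    simp only [Pi.add_apply]; ring
  have hker₂ : IntegrableOn (fun τ => expInvKernel m c τ *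
      (α * V₁ (0 + α * τ) (t - τ) - Vₜ (0 + α * τ) (t - τ))) (Ioc 0 T) := by
    refine ((hi₁.const_mul α).sub hiₜ).congr (Eventually.of_forall fun τ => ?_)
    simp only [Pi.sub_apply]; ring
  have hftc := intervalIntegral.integral_eq_sub_of_hasDerivAt_of_le hT0.le hcont
    (fun τ hτ => hd τ hτ.1)
    ((intervalIntegrable_iff_integrableOn_Ioc_of_le hT0.le).2 (hker₁.add hker₂))
  rw [intervalIntegral.integral_of_le hT0.le, integral_add hker₁ hker₂,
    hV.eq_zero _ (t - T) (by linarith), expInvKernel_of_nonpos _ _ (le_refl (0 : ℝ))] at hftc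
  have hsplit : ∫ τ in Ioc 0 T, expInvKernel m c τ *
      (α * V₁ (0 + α * τ) (t - τ) - Vₜ (0 + α * τ) (t - τ)) =
      α * (∫ τ in Ioc 0 T, expInvKernel m c τ * V₁ (0 + α * τ) (t - τ)) -
        ∫ τ in Ioc 0 T, expInvKernel m c τ * Vₜ (0 + α * τ) (t - τ) := by
    rw [← integral_const_mul, ← integral_sub (hi₁.const_mul α) hiₜ]
    congr 1; ext τ; ring
  rw [hsplit] at hftc
  linarith

end IsDiffusionProfile

/-- The radial operator `∂²/∂r² + ((1 - 2ν) / r) ∂/∂r` applied to `(r² / 4) ^ ν * H₁ (r² / 4)`. -/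
lemma radial_operator_rpow_mul {H₁ H₂ H₃ : ℝ → ℝ} (K ν : ℝ)
    (h₁ : ∀ c, 0 < c → HasDerivAt H₁ (-H₂ c) c) (h₂ : ∀ c, 0 < c → HasDerivAt H₂ (-H₃ c) c)
    {r : ℝ} (hr : 0 < r) :
    iteratedDeriv 2 (fun r => K * ((r ^ 2 / 4) ^ ν * H₁ (r ^ 2 / 4))) r +
        (1 - 2 * ν) / r * deriv (fun r => K * ((r ^ 2 / 4) ^ ν * H₁ (r ^ 2 / 4))) r =
      K * ((r ^ 2 / 4) ^ ν * (-(1 + ν) * H₂ (r ^ 2 / 4) + r ^ 2 / 4 * H₃ (r ^ 2 / 4))) := by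
  have hc : ∀ r : ℝ, HasDerivAt (fun r : ℝ => r ^ 2 / 4) (r / 2) r := fun r => by
    refine ((hasDerivAt_pow 2 r).div_const 4).congr_deriv ?_
    norm_num; ring
  have hp : ∀ r : ℝ, 0 < r → HasDerivAt (fun r : ℝ => (r ^ 2 / 4) ^ ν)
      ((r ^ 2 / 4) ^ ν * (2 * ν / r)) r := fun r hr => by
    have hne : r ^ 2 / 4 ≠ 0 := by positivity
    refine ((hc r).rpow_const (Or.inl hne)).congr_deriv ?_
    rw [rpow_sub_one hne]
    field_simp
    norm_num
    ring
  have hH₁ : ∀ r : ℝ, 0 < r → HasDerivAt (fun r => H₁ (r ^ 2 / 4)) (-H₂ (r ^ 2 / 4) * (r / 2)) r :=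
    fun r hr => (h₁ _ (by positivity)).comp r (hc r)
  have hH₂ : ∀ r : ℝ, 0 < r → HasDerivAt (fun r => H₂ (r ^ 2 / 4)) (-H₃ (r ^ 2 / 4) * (r / 2)) r :=
    fun r hr => (h₂ _ (by positivity)).comp r (hc r)
  have hd : ∀ r : ℝ, 0 < r → HasDerivAt (fun r => K * ((r ^ 2 / 4) ^ ν * H₁ (r ^ 2 / 4)))
      (K * ((r ^ 2 / 4) ^ ν * (2 * ν / r * H₁ (r ^ 2 / 4) - r / 2 * H₂ (r ^ 2 / 4)))) r :=
    fun r hr => (((hp r hr).mul (hH₁ r hr)).const_mul K).congr_deriv (by ring)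
  have hdd : deriv (deriv fun r => K * ((r ^ 2 / 4) ^ ν * H₁ (r ^ 2 / 4))) r =
      deriv (fun r => K * ((r ^ 2 / 4) ^ ν *
        (2 * ν / r * H₁ (r ^ 2 / 4) - r / 2 * H₂ (r ^ 2 / 4)))) r := by
    refine Filter.EventuallyEq.deriv_eq ?_
    filter_upwards [lt_mem_nhds hr] with r' hr'
    exact (hd r' hr').deriv
  have hq : HasDerivAt (fun r : ℝ => 2 * ν / r) (-(2 * ν / r ^ 2)) r := by
    refine ((hasDerivAt_inv hr.ne').const_mul (2 * ν)).congr_deriv ?_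
    ring
  have hl : HasDerivAt (fun r : ℝ => r / 2) (1 / 2) r := (hasDerivAt_id r).div_const 2
  have hd2 : HasDerivAt (fun r => K * ((r ^ 2 / 4) ^ ν *
      (2 * ν / r * H₁ (r ^ 2 / 4) - r / 2 * H₂ (r ^ 2 / 4)))) _ r :=
    ((hp r hr).mul ((hq.mul (hH₁ r hr)).sub (hl.mul (hH₂ r hr)))).const_mul K
  rw [iteratedDeriv_succ, iteratedDeriv_one, hdd, (hd r hr).deriv, hd2.deriv]
  simp only [Pi.mul_apply, Pi.sub_apply]
  field_simp
  ring

lemma hasDerivAt_setIntegral_expInvKernel_mul {s : Set ℝ} {φ : ℝ → ℝ} (hφ : IntegrableOn φ s)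
    {m c : ℝ} (hm : 0 < m) (hc : 0 < c) :
    HasDerivAt (fun c => ∫ τ in s, expInvKernel m c τ * φ τ)
      (-∫ τ in s, expInvKernel (m + 1) c τ * φ τ) c := by
  have h1 := hasFDerivAt_kernelIntegral (ρ := fun v => -v) measurable_neg hφ hm hc 0
  have hid : HasFDerivAt (fun y : ℝ => (y, (0 : ℝ)))
      ((ContinuousLinearMap.id ℝ ℝ).prod (0 : ℝ →L[ℝ] ℝ)) c :=
    (hasFDerivAt_id c).prodMk (hasFDerivAt_const 0 c)
  have := (h1.comp c hid).hasDerivAt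
  simpa [Function.comp_def, kernelIntegral] using this

/-- The substitution `τ = c / y` turns the kernel into the Gamma density. -/
lemma setIntegral_expInvKernel_mul (ν : ℝ) {c : ℝ} (hc : 0 < c) (G : ℝ → ℝ) :
    c ^ ν * ∫ τ in Ioi 0, expInvKernel (1 + ν) c τ * G τ =
      ∫ y in Ioi 0, exp (-y) * y ^ (ν - 1) * G (c / y) := by
  rw [← integral_comp_rpow_Ioi (fun τ => expInvKernel (1 + ν) c τ * G τ) (p := -1) (by norm_num)]
  have h1 := integral_comp_mul_left_Ioi (fun x : ℝ => (|(-1 : ℝ)| * x ^ ((-1 : ℝ) - 1)) •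
    (expInvKernel (1 + ν) c (x ^ (-1 : ℝ)) * G (x ^ (-1 : ℝ)))) 0 (inv_pos.2 hc)
  rw [mul_zero, inv_inv, smul_eq_mul] at h1
  rw [← mul_right_inj' hc.ne', mul_left_comm, ← h1, ← integral_const_mul, ← integral_const_mul]
  refine setIntegral_congr_fun measurableSet_Ioi fun y hy => ?_
  have hy : 0 < y := hy
  have e1 : (c⁻¹ * y) ^ (-1 : ℝ) = c / y := by
    rw [rpow_neg_one, mul_inv, inv_inv, div_eq_mul_inv]
  have e2 : (c⁻¹ * y) ^ ((-1 : ℝ) - 1) = (c / y) ^ 2 := by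
    rw [← e1, ← rpow_natCast, ← rpow_mul (by positivity)]; norm_num
  have e3 : -c / (c / y) = -y := by field_simp
  have e4 : (c / y) ^ (-(1 + ν)) = c⁻¹ * y * ((c ^ ν)⁻¹ * y ^ ν) := by
    rw [neg_add, rpow_add (by positivity), rpow_neg_one, inv_div, div_rpow hc.le hy.le,
      rpow_neg hc.le, rpow_neg hy.le]
    field_simp
  simp only [smul_eq_mul]
  rw [e1, e2, expInvKernel_of_pos _ _ (div_pos hc hy), e3, e4, rpow_sub_one hy.ne']
  have := (rpow_pos_of_pos hc ν).ne'
  simp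
  field_simp

lemma setIntegral_expInvKernel {ν c : ℝ} (hν : 0 < ν) (hc : 0 < c) :
    ∫ τ in Ioi 0, expInvKernel (1 + ν) c τ = Gamma ν * c ^ (-ν) := by
  have h := setIntegral_expInvKernel_mul ν hc fun _ => 1
  simp only [mul_one] at h
  rw [← Gamma_eq_integral hν] at h
  rw [rpow_neg hc.le, ← h]
  have := (rpow_pos_of_pos hc ν).ne'
  field_simp

lemma integral_expInvKernel {ν c : ℝ} (hν : 0 < ν) (hc : 0 < c) :
    ∫ τ, expInvKernel (1 + ν) c τ = Gamma ν * c ^ (-ν) := by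
  rw [← setIntegral_expInvKernel hν hc]
  refine (setIntegral_eq_integral_of_forall_compl_eq_zero fun τ hτ => ?_).symm
  exact expInvKernel_of_nonpos _ _ (not_lt.1 hτ)

lemma integrable_expInvKernel {ν c : ℝ} (hν : 0 < ν) (hc : 0 < c) :
    Integrable (expInvKernel (1 + ν) c) := by
  refine Integrable.of_integral_ne_zero ?_
  rw [integral_expInvKernel hν hc]
  have := Gamma_pos_of_pos hν
  positivity

lemma expInvKernel_le_exp_mul (m : ℝ) {c w S : ℝ} (hc : 0 < c) (hw : w ≤ S) :
    expInvKernel m c w ≤ exp (-c / (2 * S)) * expInvKernel m (c / 2) w := by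
  rcases le_or_gt w 0 with h0 | h0
  · simp [expInvKernel_of_nonpos _ _ h0]
  · rw [expInvKernel_of_pos _ _ h0, expInvKernel_of_pos _ _ h0, mul_left_comm, ← exp_add]
    gcongr
    have h1 : c / (2 * S) ≤ c / (2 * w) := by gcongr
    have h2 : -c / w = -(c / (2 * w)) + -(c / 2) / w := by field_simp; ring
    rw [h2, neg_div (2 * S) c]
    linarith

section layerPotential

variable {κ η b T : ℝ} {g : ℝ → ℝ}

lemma abs_layerPotential_le (hη : 0 ≤ η) (hb : 0 < b) {M : ℝ} (hM : 0 ≤ M)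
    (hg : ∀ v ∈ Ioc 0 T, |g v| ≤ M * exp (η * v)) {s S : ℝ} (hs : s ≤ S) (x : ℝ) :
    |layerPotential κ η b T g x s| ≤
      M * Gamma (1 / 2) * (b / 2) ^ (-(1 / 2) : ℝ) * exp (κ * x - b * x ^ 2 / (2 * S)) := by
  have hG : 0 < Gamma (1 / 2) := Gamma_pos_of_pos (by norm_num)
  rcases eq_or_ne x 0 with rfl | hx
  · simp only [layerPotential, zero_mul, mul_zero, abs_zero]; positivity
  have hc : 0 < b * x ^ 2 := by positivity
  have hker : Integrable fun v => expInvKernel (3 / 2) (b * x ^ 2 / 2) (s - v) := by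
    have := (integrable_expInvKernel (ν := 1 / 2) (by norm_num) (half_pos hc)).comp_sub_left s
    norm_num at this
    exact this
  have hval : ∫ v, expInvKernel (3 / 2) (b * x ^ 2 / 2) (s - v) =
      Gamma (1 / 2) * (b * x ^ 2 / 2) ^ (-(1 / 2) : ℝ) := by
    rw [integral_sub_left_eq_self (fun v => expInvKernel (3 / 2) (b * x ^ 2 / 2) v),
      ← integral_expInvKernel (by norm_num) (half_pos hc)]
    norm_num
  have hpow : |x| * (b * x ^ 2 / 2) ^ (-(1 / 2) : ℝ) = (b / 2) ^ (-(1 / 2) : ℝ) := by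
    have hx' : 0 < |x| := abs_pos.2 hx
    rw [show b * x ^ 2 / 2 = (b / 2) * |x| ^ 2 by rw [sq_abs]; ring,
      mul_rpow (by positivity) (by positivity), ← rpow_natCast |x| 2, ← rpow_mul hx'.le]
    norm_num
    rw [rpow_neg_one]
    field_simp
  have hJ : |kernelIntegral (volume.restrict (Ioc 0 T)) id g (3 / 2) (b * x ^ 2) s| ≤
      M * exp (η * s) * exp (-(b * x ^ 2) / (2 * S)) *
        (Gamma (1 / 2) * (b * x ^ 2 / 2) ^ (-(1 / 2) : ℝ)) := by
    rw [← hval]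
    have h1 := norm_integral_le_of_norm_le (μ := volume.restrict (Ioc 0 T))
      (f := fun v => expInvKernel (3 / 2) (b * x ^ 2) (s - id v) * g v)
      (hker.integrableOn.const_mul (M * exp (η * s) * exp (-(b * x ^ 2) / (2 * S)))) ?_
    · refine h1.trans ?_
      rw [integral_const_mul]
      exact mul_le_mul_of_nonneg_left (setIntegral_le_integral hker
        (Eventually.of_forall fun v => expInvKernel_nonneg _ _ _)) (by positivity)
    · filter_upwards [ae_restrict_mem measurableSet_Ioc] with v hv
      rw [norm_mul, Real.norm_of_nonneg (expInvKernel_nonneg _ _ _), id]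
      rcases le_or_gt s v with hsv | hsv
      · rw [expInvKernel_of_nonpos _ _ (by linarith), expInvKernel_of_nonpos _ _ (by linarith)]
        simp
      · have k1 := expInvKernel_le_exp_mul (3 / 2) hc (w := s - v) (S := S) (by linarith [hv.1])
        have k2 : ‖g v‖ ≤ M * exp (η * s) := by
          refine (hg v hv).trans ?_
          gcongr
        calc _ ≤ (exp (-(b * x ^ 2) / (2 * S)) *
              expInvKernel (3 / 2) (b * x ^ 2 / 2) (s - v)) * (M * exp (η * s)) := by
              have := expInvKernel_nonneg (3 / 2) (b * x ^ 2 / 2) (s - v)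
              gcongr
          _ = _ := by ring
  rw [layerPotential, abs_mul, abs_mul, abs_of_pos (exp_pos _)]
  calc _ ≤ exp (κ * x - η * s) * (|x| * (M * exp (η * s) * exp (-(b * x ^ 2) / (2 * S)) *
        (Gamma (1 / 2) * (b * x ^ 2 / 2) ^ (-(1 / 2) : ℝ)))) := by gcongr
    _ = M * Gamma (1 / 2) * (|x| * (b * x ^ 2 / 2) ^ (-(1 / 2) : ℝ)) *
        (exp (κ * x - η * s) * exp (η * s) * exp (-(b * x ^ 2) / (2 * S))) := by ring
    _ = _ := by
      rw [hpow, ← exp_add, ← exp_add]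
      congr 2
      ring

lemma exists_layerPotential_bound (hη : 0 ≤ η) (hb : 0 < b) {M : ℝ} (hM : 0 ≤ M)
    (hg : ∀ v ∈ Ioc 0 T, |g v| ≤ M * exp (η * v)) (X : ℝ) :
    ∃ B, ∀ x s, |x| ≤ X → |s| ≤ X → |layerPotential κ η b T g x s| ≤ B := by
  refine ⟨M * Gamma (1 / 2) * (b / 2) ^ (-(1 / 2) : ℝ) * exp (|κ| * X), fun x s hx hs => ?_⟩
  have hG : 0 < Gamma (1 / 2) := Gamma_pos_of_pos (by norm_num)
  have hX : 0 ≤ X := (abs_nonneg x).trans hx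
  refine (abs_layerPotential_le hη hb hM hg ((le_abs_self s).trans hs) x).trans ?_
  gcongr
  have h1 : κ * x ≤ |κ| * X := (le_abs_self _).trans (by rw [abs_mul]; gcongr)
  have h2 : 0 ≤ b * x ^ 2 / (2 * X) := by positivity
  linarith

lemma layerPotential_eq_setIntegral {h : ℝ → ℝ} (hh : ∀ v, v ≤ 0 → h v = 0) {s : ℝ} (hs : s ≤ T)
    (x : ℝ) :
    layerPotential κ η b T (fun v => exp (η * v) * h v) x s =
      exp (κ * x) * (x * ∫ w in Ioi 0, expInvKernel (3 / 2) (b * x ^ 2) w *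
        (exp (-η * w) * h (s - w))) := by
  have h1 : kernelIntegral (volume.restrict (Ioc 0 T)) id (fun v => exp (η * v) * h v) (3 / 2)
      (b * x ^ 2) s =
      ∫ v, expInvKernel (3 / 2) (b * x ^ 2) (s - v) * (exp (η * v) * h v) := by
    refine setIntegral_eq_integral_of_forall_compl_eq_zero fun v hv => ?_
    rcases le_or_gt v 0 with h0 | h0
    · simp [hh v h0]
    · have : T < v := by by_contra! hcon; exact hv ⟨h0, hcon⟩
      rw [id, expInvKernel_of_nonpos _ _ (by linarith), zero_mul]
  have h2 := integral_sub_left_eq_self (fun w => expInvKernel (3 / 2) (b * x ^ 2) w *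
    (exp (η * (s - w)) * h (s - w))) volume s
  simp only [sub_sub_cancel] at h2
  have h3 : ∫ w, expInvKernel (3 / 2) (b * x ^ 2) w * (exp (η * (s - w)) * h (s - w)) =
      exp (η * s) * ∫ w in Ioi 0, expInvKernel (3 / 2) (b * x ^ 2) w *
        (exp (-η * w) * h (s - w)) := by
    rw [setIntegral_eq_integral_of_forall_compl_eq_zero, ← integral_const_mul]
    · congr 1; ext w
      rw [show η * (s - w) = η * s + -η * w by ring, exp_add]; ring
    · intro w hw
      rw [expInvKernel_of_nonpos _ _ (not_lt.1 hw), zero_mul]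
  rw [layerPotential, h1, h2, h3, sub_eq_add_neg, exp_add, exp_neg]
  field_simp

/-- The layer potential attains its boundary values. -/
lemma tendsto_layerPotential {h : ℝ → ℝ} (hcont : Continuous h) (hη : 0 ≤ η) (hb : 0 < b) {M : ℝ}
    (hM : ∀ v, |h v| ≤ M) (hh : ∀ v, v ≤ 0 → h v = 0) {t : ℝ} (ht : t < T) {ι : Type*}
    {l : Filter ι} [l.IsCountablyGenerated] {x s : ι → ℝ} (hx : Tendsto x l (nhds 0))
    (hx0 : ∀ᶠ i in l, 0 < x i) (hs : Tendsto s l (nhds t)) :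
    Tendsto (fun i => layerPotential κ η b T (fun v => exp (η * v) * h v) (x i) (s i)) l
      (nhds (b ^ (-(1 / 2) : ℝ) * (Gamma (1 / 2) * h t))) := by
  have hlim : Tendsto (fun i => ∫ y in Ioi 0, exp (-y) * y ^ ((1 / 2 : ℝ) - 1) *
      (exp (-η * (b * x i ^ 2 / y)) * h (s i - b * x i ^ 2 / y))) l
      (nhds (∫ y in Ioi 0, exp (-y) * y ^ ((1 / 2 : ℝ) - 1) * h t)) := by
    refine tendsto_integral_filter_of_dominated_convergence
      (fun y => exp (-y) * y ^ ((1 / 2 : ℝ) - 1) * M) ?_ ?_ ?_ ?_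
    · refine Eventually.of_forall fun i => Measurable.aestronglyMeasurable ?_
      have := hcont.measurable
      fun_prop
    · refine Eventually.of_forall fun i => ?_
      filter_upwards [ae_restrict_mem measurableSet_Ioi] with y hy
      have hy : 0 < y := hy
      rw [norm_mul, Real.norm_of_nonneg (by positivity : 0 ≤ exp (-y) * y ^ ((1 / 2 : ℝ) - 1)),
        norm_mul, Real.norm_of_nonneg (exp_pos _).le]
      gcongr
      refine (mul_le_of_le_one_left (norm_nonneg _) ?_).trans (hM _)
      rw [exp_le_one_iff, neg_mul, neg_nonpos]
      positivity
    · exact (GammaIntegral_convergent (s := 1 / 2) (by norm_num)).mul_const M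
    · refine Eventually.of_forall fun y => ?_
      have hq : Tendsto (fun i => b * x i ^ 2 / y) l (nhds 0) := by
        simpa using ((hx.pow 2).const_mul b).div_const y
      have h1 : Tendsto (fun i => exp (-η * (b * x i ^ 2 / y))) l (nhds 1) := by
        simpa using (hq.const_mul (-η)).rexp
      have h2 : Tendsto (fun i => h (s i - b * x i ^ 2 / y)) l (nhds (h t)) :=
        (hcont.tendsto t).comp (by simpa using hs.sub hq)
      simpa using (h1.mul h2).const_mul (exp (-y) * y ^ ((1 / 2 : ℝ) - 1))
  rw [integral_mul_const, ← Gamma_eq_integral (by norm_num)] at hlim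
  have hE : Tendsto (fun i => exp (κ * x i) * b ^ (-(1 / 2) : ℝ)) l
      (nhds (b ^ (-(1 / 2) : ℝ))) := by
    simpa using (hx.const_mul κ).rexp.mul_const (b ^ (-(1 / 2) : ℝ))
  refine (hE.mul hlim).congr' ?_
  filter_upwards [hx0, hs.eventually (gt_mem_nhds ht)] with i hi hsi
  rw [layerPotential_eq_setIntegral hh hsi.le, ← setIntegral_expInvKernel_mul (1 / 2)
    (c := b * x i ^ 2) (by positivity) (fun w => exp (-η * w) * h (s i - w))]
  have hp : (b * x i ^ 2) ^ (1 / 2 : ℝ) = b ^ (1 / 2 : ℝ) * x i := by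
    rw [mul_rpow hb.le (by positivity), ← sqrt_eq_rpow (x i ^ 2), sqrt_sq hi.le]
  rw [hp, rpow_neg hb.le]
  have : b ^ (1 / 2 : ℝ) ≠ 0 := (rpow_pos_of_pos hb _).ne'
  norm_num
  field_simp

end layerPotential

namespace IsDiffusionProfile

variable {a lam : ℝ} {V V₁ V₂ Vₜ : ℝ → ℝ → ℝ} {α T : ℝ}

lemma kernelAverage_pde (hV : IsDiffusionProfile a lam V V₁ V₂ Vₜ) {m c : ℝ} (hm : 0 < m)
    (hc : 0 < c) (hα : 0 < α) (hT : 0 < T) {z : ℝ} (hz : 0 < z) (t K : ℝ) :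
    deriv (fun t' => K * ∫ τ in Ioc 0 T, expInvKernel m c τ * V (z + α * τ) (t' - τ)) t =
      a ^ 2 * iteratedDeriv 2
          (fun z' => K * ∫ τ in Ioc 0 T, expInvKernel m c τ * V (z' + α * τ) (t - τ)) z -
        lam * deriv
          (fun z' => K * ∫ τ in Ioc 0 T, expInvKernel m c τ * V (z' + α * τ) (t - τ)) z := by
  have hd₁ : ∀ z', 0 < z' → HasDerivAt
      (fun z' => K * ∫ τ in Ioc 0 T, expInvKernel m c τ * V (z' + α * τ) (t - τ))
      (K * ∫ τ in Ioc 0 T, expInvKernel m c τ * V₁ (z' + α * τ) (t - τ)) z' := fun z' hz' =>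
    (hasDerivAt_space_kernelAverage hV.meas hV.bound hV.meas₁ hV.bound₁
      (fun x s hx => hV.hasDerivAt_space s hx) hm hc hα hT hz' t).const_mul K
  have hd₂ := (hasDerivAt_space_kernelAverage hV.meas₁ hV.bound₁ hV.meas₂ hV.bound₂
    hV.hasDerivAt₁ hm hc hα hT hz t).const_mul K
  have hdₜ := (hasDerivAt_time_kernelAverage hV.meas hV.bound hV.measₜ hV.boundₜ
    (fun x s hx => hV.hasDerivAt_time s hx) hm hc hα hT hz.le t).const_mul K
  have hdd : deriv (deriv fun z' => K *
        ∫ τ in Ioc 0 T, expInvKernel m c τ * V (z' + α * τ) (t - τ)) z =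
      deriv (fun z' => K * ∫ τ in Ioc 0 T, expInvKernel m c τ * V₁ (z' + α * τ) (t - τ)) z := by
    refine Filter.EventuallyEq.deriv_eq ?_
    filter_upwards [lt_mem_nhds hz] with z' hz'
    exact (hd₁ z' hz').deriv
  have hi₁ := integrableOn_kernel_mul_profile hV.meas₁ hV.bound₁ hm hc hα hT hz.le t
  have hi₂ := integrableOn_kernel_mul_profile hV.meas₂ hV.bound₂ hm hc hα hT hz.le t
  have hpde : ∫ τ in Ioc 0 T, expInvKernel m c τ * Vₜ (z + α * τ) (t - τ) =
      a ^ 2 * (∫ τ in Ioc 0 T, expInvKernel m c τ * V₂ (z + α * τ) (t - τ)) -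
        lam * ∫ τ in Ioc 0 T, expInvKernel m c τ * V₁ (z + α * τ) (t - τ) := by
    rw [← integral_const_mul, ← integral_const_mul,
      ← integral_sub (hi₂.const_mul _) (hi₁.const_mul _)]
    congr 1; ext τ
    rw [hV.pde]; ring
  rw [hdₜ.deriv, iteratedDeriv_succ, iteratedDeriv_one, hdd, hd₂.deriv, (hd₁ z hz).deriv, hpde]
  ring

lemma integrableOn_boundary (hV : IsDiffusionProfile a lam V V₁ V₂ Vₜ) (α T t : ℝ) :
    IntegrableOn (fun τ => V (0 + α * τ) (t - τ)) (Ioc 0 T) := by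
  obtain ⟨M, hM⟩ := hV.bounded (|α| * |T| + |t| + |T|)
  refine Measure.integrableOn_of_bounded (M := M) (by simp)
    (hV.meas.comp (f := fun τ => (0 + α * τ, t - τ)) (by fun_prop)).aestronglyMeasurable ?_
  filter_upwards [ae_restrict_mem measurableSet_Ioc] with τ hτ
  have h1 : |τ| ≤ |T| := by
    rw [abs_of_pos hτ.1]; exact hτ.2.trans (le_abs_self T)
  have h2 := abs_sub t τ
  have h3 : |α * τ| ≤ |α| * |T| := by rw [abs_mul]; gcongr
  have := abs_nonneg t
  have := abs_nonneg T
  have : 0 ≤ |α| * |T| := by positivity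
  exact hM _ _ (by rw [zero_add]; linarith) (by linarith)

lemma kernelAverage_boundary_condition (hV : IsDiffusionProfile a lam V V₁ V₂ Vₜ) {ν r t : ℝ}
    (hν : 0 < ν) (hα : 0 < α) (hr : 0 < r) (ht : 0 < t) (hT : t < T) (K : ℝ) :
    deriv (fun t' => K * ((r ^ 2 / 4) ^ ν *
          ∫ τ in Ioc 0 T, expInvKernel (1 + ν) (r ^ 2 / 4) τ * V (0 + α * τ) (t' - τ))) t =
      iteratedDeriv 2 (fun r' => K * ((r' ^ 2 / 4) ^ ν *
          ∫ τ in Ioc 0 T, expInvKernel (1 + ν) (r' ^ 2 / 4) τ * V (0 + α * τ) (t - τ))) r +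
        (1 - 2 * ν) / r * deriv (fun r' => K * ((r' ^ 2 / 4) ^ ν *
          ∫ τ in Ioc 0 T, expInvKernel (1 + ν) (r' ^ 2 / 4) τ * V (0 + α * τ) (t - τ))) r +
        α * deriv (fun z' => K * ((r ^ 2 / 4) ^ ν *
          ∫ τ in Ioc 0 T, expInvKernel (1 + ν) (r ^ 2 / 4) τ * V (z' + α * τ) (t - τ))) 0 := by
  have hT0 : 0 < T := ht.trans hT
  have hm : 0 < 1 + ν := by linarith
  have hc : 0 < r ^ 2 / 4 := by positivity
  have hφ := hV.integrableOn_boundary α T t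
  have hR := radial_operator_rpow_mul K ν
    (fun c hc => hasDerivAt_setIntegral_expInvKernel_mul hφ hm hc)
    (fun c hc => hasDerivAt_setIntegral_expInvKernel_mul hφ (m := 1 + ν + 1) (by linarith) hc) hr
  have hdₜ := ((hasDerivAt_time_kernelAverage hV.meas hV.bound hV.measₜ hV.boundₜ
    (fun x s hx => hV.hasDerivAt_time s hx) hm hc hα hT0 le_rfl t).const_mul
      ((r ^ 2 / 4) ^ ν)).const_mul K
  have hdz := ((hV.hasDerivAt_boundary_kernelAverage hm hc hα hT0 t).const_mul
      ((r ^ 2 / 4) ^ ν)).const_mul K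
  have hibp := hV.integral_kernel_deriv hm hc hα ht hT
  have hj₁ := integrableOn_kernel_mul_profile (m := 1 + ν + 1) hV.meas hV.bound (by linarith) hc hα
    hT0 le_rfl t
  have hj₂ := integrableOn_kernel_mul_profile (m := 1 + ν + 2) hV.meas hV.bound (by linarith) hc hα
    hT0 le_rfl t
  have hsplit : ∫ τ in Ioc 0 T, (-(1 + ν) * expInvKernel (1 + ν + 1) (r ^ 2 / 4) τ +
        r ^ 2 / 4 * expInvKernel (1 + ν + 2) (r ^ 2 / 4) τ) * V (0 + α * τ) (t - τ) =
      -(1 + ν) * (∫ τ in Ioc 0 T,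
          expInvKernel (1 + ν + 1) (r ^ 2 / 4) τ * V (0 + α * τ) (t - τ)) +
        r ^ 2 / 4 * ∫ τ in Ioc 0 T,
          expInvKernel (1 + ν + 1 + 1) (r ^ 2 / 4) τ * V (0 + α * τ) (t - τ) := by
    rw [show 1 + ν + 1 + 1 = 1 + ν + 2 by ring, ← integral_const_mul, ← integral_const_mul,
      ← integral_add (hj₁.const_mul _) (hj₂.const_mul _)]
    congr 1; ext τ
    ring
  rw [hR, hdₜ.deriv, hdz.deriv, ← hsplit, hibp]
  ring

end IsDiffusionProfile

section layerPotential

variable {κ η b T α ν : ℝ}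

/-- Gaussian decay of the averaged layer potential, locally uniform in time. -/
lemma abs_kernelAverage_layerPotential_le {g : ℝ → ℝ} (hη : 0 ≤ η) (hb : 0 < b) (hα : 0 < α)
    (hν : 0 < ν) {M : ℝ} (hM : 0 ≤ M) (hg : ∀ v ∈ Ioc 0 T, |g v| ≤ M * exp (η * v))
    {c z t : ℝ} (hc : 0 < c) (hz : 0 ≤ z) (ht : 0 < t) :
    |c ^ ν * ∫ τ in Ioc 0 T, expInvKernel (1 + ν) c τ *
        layerPotential κ η b T g (z + α * τ) (t - τ)| ≤
      M * Gamma (1 / 2) * (b / 2) ^ (-(1 / 2) : ℝ) * (2 ^ ν * Gamma ν) *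
        exp (κ ^ 2 * t / b) * exp (-(b * z ^ 2 / 4 + c / 2) / t) := by
  have hG : 0 < Gamma (1 / 2) := Gamma_pos_of_pos (by norm_num)
  set D := M * Gamma (1 / 2) * (b / 2) ^ (-(1 / 2) : ℝ) with hD
  have hD0 : 0 ≤ D := by positivity
  set E := D * exp (κ ^ 2 * t / b) * exp (-(b * z ^ 2 / 4 + c / 2) / t) with hE
  have hker := integrable_expInvKernel hν (half_pos hc)
  have h1 := norm_integral_le_of_norm_le (μ := volume.restrict (Ioc 0 T))
    (f := fun τ => expInvKernel (1 + ν) c τ * layerPotential κ η b T g (z + α * τ) (t - τ))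
    (hker.integrableOn.const_mul E) ?_
  · rw [abs_mul, abs_of_pos (rpow_pos_of_pos hc ν)]
    have h2 : ∫ τ in Ioc 0 T, E * expInvKernel (1 + ν) (c / 2) τ ≤
        E * (Gamma ν * (c / 2) ^ (-ν)) := by
      rw [integral_const_mul, ← integral_expInvKernel hν (half_pos hc)]
      exact mul_le_mul_of_nonneg_left (setIntegral_le_integral hker
        (Eventually.of_forall fun v => expInvKernel_nonneg _ _ _)) (by positivity)
    calc _ ≤ c ^ ν * (E * (Gamma ν * (c / 2) ^ (-ν))) :=
          mul_le_mul_of_nonneg_left (h1.trans h2) (by positivity)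
      _ = _ := by
        rw [rpow_neg (by positivity), div_rpow hc.le (by norm_num)]
        have := (rpow_pos_of_pos hc ν).ne'
        have : (2 : ℝ) ^ ν ≠ 0 := by positivity
        rw [hE]
        field_simp
  · filter_upwards [ae_restrict_mem measurableSet_Ioc] with τ hτ
    rcases le_or_gt t τ with htτ | htτ
    · rw [layerPotential_of_nonpos _ (by linarith), mul_zero, norm_zero]
      have := expInvKernel_nonneg (1 + ν) (c / 2) τ
      positivity
    · rw [norm_mul, Real.norm_of_nonneg (expInvKernel_nonneg _ _ _), Real.norm_eq_abs]
      have k1 := expInvKernel_le_exp_mul (1 + ν) hc htτ.le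
      have k2 := abs_layerPotential_le (κ := κ) hη hb hM hg (s := t - τ) (S := t)
        (by linarith [hτ.1]) (z + α * τ)
      have hxz : z ^ 2 ≤ (z + α * τ) ^ 2 := by
        have : 0 < α * τ := mul_pos hα hτ.1
        gcongr
        linarith
      have k3 : κ * (z + α * τ) - b * (z + α * τ) ^ 2 / (2 * t) ≤
          κ ^ 2 * t / b - b * z ^ 2 / 4 / t := by
        set x := z + α * τ
        have e1 : κ ^ 2 * t / b - b * x ^ 2 / 4 / t - (κ * x - b * x ^ 2 / (2 * t)) =
            (κ * t - b * x / 2) ^ 2 / (b * t) := by field_simp; ring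
        have e2 : 0 ≤ (κ * t - b * x / 2) ^ 2 / (b * t) := by positivity
        have e3 : b * z ^ 2 / 4 / t ≤ b * x ^ 2 / 4 / t := by gcongr
        linarith
      have k0 := expInvKernel_nonneg (1 + ν) (c / 2) τ
      calc _ ≤ exp (-c / (2 * t)) * expInvKernel (1 + ν) (c / 2) τ *
            (D * exp (κ ^ 2 * t / b - b * z ^ 2 / 4 / t)) := by
            refine mul_le_mul k1 (k2.trans ?_) (abs_nonneg _) (by positivity)
            gcongr
        _ = D * (exp (-c / (2 * t)) * exp (κ ^ 2 * t / b - b * z ^ 2 / 4 / t)) *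
            expInvKernel (1 + ν) (c / 2) τ := by ring
        _ = _ := by
          rw [hE, ← exp_add, mul_assoc D (exp _) (exp _), ← exp_add]
          congr 3
          field_simp
          ring

/-- The averaged layer potential attains its boundary values at the origin. -/
lemma tendsto_kernelAverage_layerPotential {h : ℝ → ℝ} (hcont : Continuous h) (hη : 0 ≤ η)
    (hb : 0 < b) (hα : 0 < α) (hν : 0 < ν) {M : ℝ} (hM : ∀ v, |h v| ≤ M)
    (hh : ∀ v, v ≤ 0 → h v = 0) {t : ℝ} (ht : 0 < t) (htT : t < T)
    (hmeas : Measurable fun p : ℝ × ℝ =>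
      layerPotential κ η b T (fun v => exp (η * v) * h v) p.1 p.2)
    {ι : Type*} {l : Filter ι} [l.IsCountablyGenerated] {c z : ι → ℝ} (hc : Tendsto c l (nhds 0))
    (hc0 : ∀ᶠ i in l, 0 < c i) (hz : Tendsto z l (nhds 0)) (hz0 : ∀ᶠ i in l, 0 < z i) :
    Tendsto (fun i => c i ^ ν * ∫ τ in Ioc 0 T, expInvKernel (1 + ν) (c i) τ *
        layerPotential κ η b T (fun v => exp (η * v) * h v) (z i + α * τ) (t - τ)) l
      (nhds (Gamma ν * (b ^ (-(1 / 2) : ℝ) * (Gamma (1 / 2) * h t)))) := by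
  set V := layerPotential κ η b T (fun v => exp (η * v) * h v) with hV
  have hM0 : 0 ≤ M := (abs_nonneg _).trans (hM 0)
  have hG : 0 < Gamma (1 / 2) := Gamma_pos_of_pos (by norm_num)
  have hg : ∀ v ∈ Ioc 0 T, |exp (η * v) * h v| ≤ M * exp (η * v) := fun v _ => by
    rw [abs_mul, abs_of_pos (exp_pos _), mul_comm]
    gcongr
    exact hM v
  have hlim : Tendsto (fun i => ∫ y in Ioi 0, exp (-y) * y ^ (ν - 1) *
      V (z i + α * (c i / y)) (t - c i / y)) l
      (nhds (∫ y in Ioi 0, exp (-y) * y ^ (ν - 1) *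
        (b ^ (-(1 / 2) : ℝ) * (Gamma (1 / 2) * h t)))) := by
    refine tendsto_integral_filter_of_dominated_convergence
      (fun y => exp (-y) * y ^ (ν - 1) *
        (M * Gamma (1 / 2) * (b / 2) ^ (-(1 / 2) : ℝ) * exp (κ ^ 2 * t / b))) ?_ ?_ ?_ ?_
    · refine Eventually.of_forall fun i => Measurable.aestronglyMeasurable ?_
      have := hmeas.comp (f := fun y => (z i + α * (c i / y), t - c i / y)) (by fun_prop)
      exact Measurable.mul (by fun_prop) this
    · filter_upwards [hc0] with i hi
      filter_upwards [ae_restrict_mem measurableSet_Ioi] with y hy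
      have hy : 0 < y := hy
      rw [norm_mul, Real.norm_of_nonneg (by positivity : 0 ≤ exp (-y) * y ^ (ν - 1))]
      gcongr
      have hcy : 0 < c i / y := div_pos hi hy
      refine (abs_layerPotential_le hη hb hM0 hg (s := t - c i / y) (S := t) (by linarith)
        (z i + α * (c i / y))).trans ?_
      gcongr
      generalize z i + α * (c i / y) = x
      have e1 : κ ^ 2 * t / b - (κ * x - b * x ^ 2 / (2 * t)) =
          (κ * t - b * x / 2) ^ 2 / (b * t) + b * x ^ 2 / 4 / t := by field_simp; ring
      have e2 : 0 ≤ (κ * t - b * x / 2) ^ 2 / (b * t) + b * x ^ 2 / 4 / t := by positivity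
      linarith
    · exact (GammaIntegral_convergent hν).mul_const _
    · filter_upwards [ae_restrict_mem measurableSet_Ioi] with y hy
      have hy : 0 < y := hy
      have hq : Tendsto (fun i => c i / y) l (nhds 0) := by simpa using hc.div_const y
      refine (tendsto_layerPotential hcont hη hb hM hh htT ?_ ?_ ?_).const_mul _
      · simpa using hz.add (hq.const_mul α)
      · filter_upwards [hc0, hz0] with i hi hi'
        positivity
      · simpa using hq.const_sub t
  rw [integral_mul_const, ← Gamma_eq_integral hν] at hlim
  refine hlim.congr' ?_
  filter_upwards [hc0] with i hi
  rw [← setIntegral_expInvKernel_mul ν hi (fun τ => V (z i + α * τ) (t - τ))]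
  congr 1
  refine (setIntegral_eq_of_subset_of_forall_sdiff_eq_zero measurableSet_Ioi Ioc_subset_Ioi_self
    fun τ hτ => ?_)
  have : T < τ := by by_contra! hcon; exact hτ.2 ⟨hτ.1, hcon⟩
  rw [hV, layerPotential_of_nonpos _ (by linarith), mul_zero]

end layerPotential

lemma incompleteLumped_eq_kernelAverage {a lam α ν A : ℝ} (ha : 0 < a) {h H : ℝ → ℝ}
    (hH : ∀ v, 0 ≤ v → H v = h v) (hH0 : ∀ v, v ≤ 0 → H v = 0) {T t : ℝ} (ht : 0 < t)
    (htT : t ≤ T) (r z : ℝ) :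
    (A / Gamma ν) * ∫ τ in (0 : ℝ)..t, (1 / τ) * (r ^ 2 / (4 * τ)) ^ ν *
          exp (-r ^ 2 / (4 * τ)) * exp (lam * (z + α * τ) / (2 * a ^ 2)) *
          ∫ w in (0 : ℝ)..(t - τ), ((z + α * τ) / (2 * a * √π)) *
            w ^ (-(3 / 2 : ℝ)) * h (t - τ - w) *
            exp (-lam ^ 2 * w / (4 * a ^ 2)) *
            exp (-(z + α * τ) ^ 2 / (4 * a ^ 2 * w)) =
      A / Gamma ν * (1 / (2 * a * √π)) * ((r ^ 2 / 4) ^ ν *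
        ∫ τ in Ioc 0 T, expInvKernel (1 + ν) (r ^ 2 / 4) τ *
          layerPotential (lam / (2 * a ^ 2)) (lam ^ 2 / (4 * a ^ 2)) (1 / (4 * a ^ 2)) T
            (fun v => exp (lam ^ 2 / (4 * a ^ 2) * v) * H v) (z + α * τ) (t - τ)) := by
  have hinner : ∀ x s : ℝ, 0 ≤ s → ∫ w in (0 : ℝ)..s, (x / (2 * a * √π)) *
        w ^ (-(3 / 2 : ℝ)) * h (s - w) * exp (-lam ^ 2 * w / (4 * a ^ 2)) *
        exp (-x ^ 2 / (4 * a ^ 2 * w)) =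
      1 / (2 * a * √π) * (x * ∫ w in Ioi 0, expInvKernel (3 / 2) (1 / (4 * a ^ 2) * x ^ 2) w *
        (exp (-(lam ^ 2 / (4 * a ^ 2)) * w) * H (s - w))) := by
    intro x s hs
    rw [intervalIntegral.integral_of_le hs, setIntegral_eq_of_subset_of_forall_sdiff_eq_zero
      (s := Ioc 0 s) (t := Ioi 0) measurableSet_Ioi Ioc_subset_Ioi_self, ← integral_const_mul,
      ← integral_const_mul]
    · refine setIntegral_congr_fun measurableSet_Ioc fun w hw => ?_
      have hw0 : 0 < w := hw.1
      rw [expInvKernel_of_pos _ _ hw0, hH _ (by linarith [hw.2]),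
        show -lam ^ 2 * w / (4 * a ^ 2) = -(lam ^ 2 / (4 * a ^ 2)) * w by ring,
        show -x ^ 2 / (4 * a ^ 2 * w) = -(1 / (4 * a ^ 2) * x ^ 2) / w by field_simp]
      ring
    · intro w hw
      have : s < w := by by_contra! hcon; exact hw.2 ⟨hw.1, hcon⟩
      rw [hH0 _ (by linarith), mul_zero, mul_zero]
  rw [mul_assoc (A / Gamma ν)]
  congr 1
  rw [intervalIntegral.integral_of_le ht.le, setIntegral_eq_of_subset_of_forall_sdiff_eq_zero
    (s := Ioc 0 t) (t := Ioc 0 T) measurableSet_Ioc (Ioc_subset_Ioc_right htT),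
    ← integral_const_mul, ← integral_const_mul]
  · refine setIntegral_congr_fun measurableSet_Ioc fun τ hτ => ?_
    have hτ0 : 0 < τ := hτ.1
    rw [hinner _ _ (by linarith [hτ.2]), layerPotential_eq_setIntegral hH0 (by linarith),
      expInvKernel_of_pos _ _ hτ0, neg_add, rpow_add hτ0, rpow_neg_one, rpow_neg hτ0.le,
      show r ^ 2 / (4 * τ) = r ^ 2 / 4 / τ by field_simp, div_rpow (by positivity) hτ0.le,
      show -r ^ 2 / (4 * τ) = -(r ^ 2 / 4) / τ by field_simp,
      show lam * (z + α * τ) / (2 * a ^ 2) = lam / (2 * a ^ 2) * (z + α * τ) by ring]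
    ring
  · intro τ hτ
    have : t < τ := by by_contra! hcon; exact hτ.2 ⟨hτ.1.1, hcon⟩
    rw [layerPotential_of_nonpos _ (by linarith), mul_zero]

/-- Corollary to Theorem 3 (radial case, classical order `2β = 1`): the function
`u(r,z,t) = (A/Γ(ν)) ∫_0^t (1/τ)(r²/(4τ))^ν e^{−r²/(4τ)} e^{λ(z+ατ)/(2a²)}
  [ ∫_0^{t−τ} ((z+ατ)/(2a√π)) w^{−3/2} h(t−τ−w) e^{−λ²w/(4a²)} e^{−(z+ατ)²/(4a²w)} dw ] dτ`
solves the classical radial boundary value problem (5.17)–(5.19). -/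
theorem classical_incomplete_lumped_radial
    (a lam α A ν : ℝ) (ha : 0 < a) (hlam : 0 < lam) (hα : 0 < α) (hA : 0 < A)
    (hν : 0 < ν)
    (h : ℝ → ℝ) (hcont : ContinuousOn h (Ici 0))
    (hbdd : ∃ Cb : ℝ, ∀ t : ℝ, 0 ≤ t → |h t| ≤ Cb) (h0 : h 0 = 0)
    (u : ℝ → ℝ → ℝ → ℝ)
    (hu : ∀ r z t : ℝ, u r z t =
      (A / Real.Gamma ν) *
        ∫ τ in (0 : ℝ)..t, (1 / τ) * (r ^ 2 / (4 * τ)) ^ ν *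
          Real.exp (-r ^ 2 / (4 * τ)) * Real.exp (lam * (z + α * τ) / (2 * a ^ 2)) *
          ∫ w in (0 : ℝ)..(t - τ), ((z + α * τ) / (2 * a * Real.sqrt π)) *
            w ^ (-(3 / 2 : ℝ)) * h (t - τ - w) *
            Real.exp (-lam ^ 2 * w / (4 * a ^ 2)) *
            Real.exp (-(z + α * τ) ^ 2 / (4 * a ^ 2 * w))) :
    -- (i) the heat equation for `r, z, t > 0`
    (∀ r z t : ℝ, 0 < r → 0 < z → 0 < t →
      deriv (fun t' => u r z t') t =
        a ^ 2 * iteratedDeriv 2 (fun z' => u r z' t) z -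
          lam * deriv (fun z' => u r z' t) z) ∧
    -- (ii) the boundary condition at `z = 0`
    (∀ r t : ℝ, 0 < r → 0 < t →
      deriv (fun t' => u r 0 t') t =
        iteratedDeriv 2 (fun r' => u r' 0 t) r +
          ((1 - 2 * ν) / r) * deriv (fun r' => u r' 0 t) r +
          α * deriv (fun z' => u r z' t) 0) ∧
    -- (iii) `u → A h(t)` as `(r,z) → (0,0)`
    (∀ t : ℝ, 0 < t →
      Tendsto (fun w : ℝ × ℝ => u w.1 w.2 t)
        (nhdsWithin (0, 0) (Ioi (0 : ℝ) ×ˢ Ioi (0 : ℝ))) (nhds (A * h t))) ∧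
    -- (iv) `u → 0` as `r² + z² → ∞`
    (∀ t : ℝ, 0 < t →
      Tendsto (fun w : ℝ × ℝ => u w.1 w.2 t)
        ((comap (fun w : ℝ × ℝ => w.1 ^ 2 + w.2 ^ 2) atTop) ⊓
          𝓟 (Ioi (0 : ℝ) ×ˢ Ioi (0 : ℝ))) (nhds 0)) ∧
    -- (v) `u → 0` as `t → 0⁺`
    (∀ r z : ℝ, 0 < r → 0 < z →
      Tendsto (fun t => u r z t) (nhdsWithin 0 (Ioi 0)) (nhds 0)) := by
  have hη : 0 ≤ lam ^ 2 / (4 * a ^ 2) := by positivity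
  have hb : 0 < 1 / (4 * a ^ 2) := by positivity
  have hΓ : 0 < Gamma ν := Gamma_pos_of_pos hν
  set H : ℝ → ℝ := fun v => h (max v 0) with hHdef
  have hH : ∀ v, 0 ≤ v → H v = h v := fun v hv => by rw [hHdef]; simp only [max_eq_left hv]
  have hH0 : ∀ v, v ≤ 0 → H v = 0 := fun v hv => by rw [hHdef]; simp only [max_eq_right hv, h0]
  have hHc : Continuous H :=
    hcont.comp_continuous (by fun_prop) fun v => mem_Ici.2 (le_max_right v 0)
  obtain ⟨M, hMh⟩ := hbdd
  have hM : ∀ v, |H v| ≤ M := fun v => hMh _ (le_max_right v 0)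
  have hM0 : 0 ≤ M := (abs_nonneg _).trans (hM 0)
  set g : ℝ → ℝ := fun v => exp (lam ^ 2 / (4 * a ^ 2) * v) * H v with hgdef
  have hgc : Continuous g := by fun_prop
  have hg : ∀ T, ∀ v ∈ Ioc 0 T, |g v| ≤ M * exp (lam ^ 2 / (4 * a ^ 2) * v) := fun T v _ => by
    rw [hgdef, abs_mul, abs_of_pos (exp_pos _), mul_comm]
    gcongr
    exact hM v
  have hprof : ∀ T, ∃ V₁ V₂ Vₜ, IsDiffusionProfile a lam
      (layerPotential (lam / (2 * a ^ 2)) (lam ^ 2 / (4 * a ^ 2)) (1 / (4 * a ^ 2)) T g)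
      V₁ V₂ Vₜ := fun T =>
    exists_isDiffusionProfile_layerPotential ha rfl rfl rfl hgc.measurable hgc.integrableOn_Ioc
      (exists_layerPotential_bound hη hb hM0 (hg T))
  set K := A / Gamma ν * (1 / (2 * a * √π)) with hK
  have rep : ∀ {T t : ℝ}, 0 < t → t ≤ T → ∀ r z, u r z t = K * ((r ^ 2 / 4) ^ ν *
      ∫ τ in Ioc 0 T, expInvKernel (1 + ν) (r ^ 2 / 4) τ *
        layerPotential (lam / (2 * a ^ 2)) (lam ^ 2 / (4 * a ^ 2)) (1 / (4 * a ^ 2)) T g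
          (z + α * τ) (t - τ)) := fun ht htT r z =>
    (hu r z _).trans (incompleteLumped_eq_kernelAverage ha hH hH0 ht htT r z)
  have near : ∀ {t : ℝ}, 0 < t → ∀ᶠ t' in nhds t, 0 < t' ∧ t' ≤ t + 1 := fun {t} ht => by
    filter_upwards [Ioo_mem_nhds ht (lt_add_one t)] with t' ht'
    exact ⟨ht'.1, ht'.2.le⟩
  have hdecay : ∃ C, ∀ r z t, 0 < r → 0 < z → 0 < t → ‖u r z t‖ ≤
      C * exp ((lam / (2 * a ^ 2)) ^ 2 * t / (1 / (4 * a ^ 2))) *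
        exp (-(1 / (4 * a ^ 2) * z ^ 2 / 4 + r ^ 2 / 4 / 2) / t) := by
    refine ⟨|K| * (M * Gamma (1 / 2) * (1 / (4 * a ^ 2) / 2) ^ (-(1 / 2) : ℝ) *
      (2 ^ ν * Gamma ν)), fun r z t hr hz ht => ?_⟩
    rw [rep ht le_rfl, norm_mul, mul_assoc |K|, mul_assoc |K|]
    exact mul_le_mul_of_nonneg_left (abs_kernelAverage_layerPotential_le hη hb hα hν hM0 (hg t)
      (by positivity) hz.le ht) (abs_nonneg K)
  obtain ⟨C, hC⟩ := hdecay
  refine ⟨fun r z t hr hz ht => ?_, fun r t hr ht => ?_, fun t ht => ?_, fun t ht => ?_,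
    fun r z hr hz => ?_⟩
  · obtain ⟨V₁, V₂, Vₜ, hV⟩ := hprof (t + 1)
    have e1 : (fun t' => u r z t') =ᶠ[nhds t] _ :=
      (near ht).mono fun t' ht' => (rep ht'.1 ht'.2 r z).trans (mul_assoc _ _ _).symm
    have e2 : (fun z' => u r z' t) = _ :=
      funext fun z' => (rep ht (lt_add_one t).le r z').trans (mul_assoc _ _ _).symm
    rw [e1.deriv_eq, e2]
    exact hV.kernelAverage_pde (by linarith) (by positivity) hα (by linarith) hz t _
  · obtain ⟨V₁, V₂, Vₜ, hV⟩ := hprof (t + 1)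
    have e1 : (fun t' => u r 0 t') =ᶠ[nhds t] _ :=
      (near ht).mono fun t' ht' => rep ht'.1 ht'.2 r 0
    have e2 : (fun z' => u r z' t) = _ := funext fun z' => rep ht (lt_add_one t).le r z'
    have e3 : (fun r' => u r' 0 t) = _ := funext fun r' => rep ht (lt_add_one t).le r' 0
    rw [e1.deriv_eq, e2, e3]
    exact hV.kernelAverage_boundary_condition hν hα hr ht (lt_add_one t) K
  · obtain ⟨V₁, V₂, Vₜ, hV⟩ := hprof (t + 1)
    have hmem : ∀ᶠ w : ℝ × ℝ in nhdsWithin (0, 0) (Ioi (0 : ℝ) ×ˢ Ioi (0 : ℝ)),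
        0 < w.1 ∧ 0 < w.2 := eventually_mem_nhdsWithin
    have hfst : Tendsto (fun w : ℝ × ℝ => w.1 ^ 2 / 4)
        (nhdsWithin (0, 0) (Ioi (0 : ℝ) ×ˢ Ioi (0 : ℝ))) (nhds 0) :=
      tendsto_nhdsWithin_of_tendsto_nhds
        ((by fun_prop : Continuous fun w : ℝ × ℝ => w.1 ^ 2 / 4).tendsto' _ _ (by simp))
    have hsnd : Tendsto (fun w : ℝ × ℝ => w.2)
        (nhdsWithin (0, 0) (Ioi (0 : ℝ) ×ˢ Ioi (0 : ℝ))) (nhds 0) :=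
      tendsto_nhdsWithin_of_tendsto_nhds (continuous_snd.tendsto' _ _ rfl)
    have hlim := (tendsto_kernelAverage_layerPotential hHc hη hb hα hν hM hH0 ht (lt_add_one t)
      hV.meas hfst (hmem.mono fun w hw => by have := hw.1; positivity) hsnd
      (hmem.mono fun w hw => hw.2)).const_mul K
    have hval : K * (Gamma ν * ((1 / (4 * a ^ 2)) ^ (-(1 / 2) : ℝ) * (Gamma (1 / 2) * H t))) =
        A * h t := by
      have e1 : (1 / (4 * a ^ 2)) ^ (-(1 / 2) : ℝ) = 2 * a := by
        rw [one_div, inv_rpow (by positivity), rpow_neg (by positivity), inv_inv, ← sqrt_eq_rpow,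
          show 4 * a ^ 2 = (2 * a) ^ 2 by ring, sqrt_sq (by positivity)]
      have := sqrt_pos.2 pi_pos
      rw [e1, Gamma_one_half_eq, hH t ht.le, hK]
      field_simp
    rw [hval] at hlim
    exact hlim.congr fun w => (rep ht (lt_add_one t).le w.1 w.2).symm
  · set δ := min (1 / (4 * a ^ 2) / 4) (1 / 8) with hδ
    have hδ0 : 0 < δ := lt_min (by positivity) (by norm_num)
    have hN : Tendsto (fun w : ℝ × ℝ => w.1 ^ 2 + w.2 ^ 2)
        (comap (fun w : ℝ × ℝ => w.1 ^ 2 + w.2 ^ 2) atTop ⊓ 𝓟 (Ioi (0 : ℝ) ×ˢ Ioi (0 : ℝ)))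
        atTop := tendsto_comap.mono_left inf_le_left
    have hlim := (tendsto_exp_neg_atTop_nhds_zero.comp
      ((hN.const_mul_atTop hδ0).atTop_div_const ht)).const_mul
        (|C| * exp ((lam / (2 * a ^ 2)) ^ 2 * t / (1 / (4 * a ^ 2))))
    rw [mul_zero] at hlim
    refine squeeze_zero_norm' ?_ hlim
    filter_upwards [mem_inf_of_right (mem_principal_self _)] with w hw
    refine (hC w.1 w.2 t hw.1 hw.2 ht).trans ?_
    rw [Function.comp_apply, ← neg_div]
    have h1 : δ * w.2 ^ 2 ≤ 1 / (4 * a ^ 2) / 4 * w.2 ^ 2 := by gcongr; exact min_le_left _ _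
    have h2 : δ * w.1 ^ 2 ≤ 1 / 8 * w.1 ^ 2 := by gcongr; exact min_le_right _ _
    gcongr
    · exact le_abs_self C
    · linarith
  · have hE : Tendsto (fun t : ℝ => C * exp ((lam / (2 * a ^ 2)) ^ 2 * t / (1 / (4 * a ^ 2))))
        (nhdsWithin 0 (Ioi 0)) (nhds C) :=
      tendsto_nhdsWithin_of_tendsto_nhds (Continuous.tendsto' (by fun_prop) _ _ (by simp))
    have hq : 0 < 1 / (4 * a ^ 2) * z ^ 2 / 4 + r ^ 2 / 4 / 2 := by positivity
    have hX := tendsto_exp_neg_atTop_nhds_zero.comp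
      ((tendsto_inv_nhdsGT_zero (𝕜 := ℝ)).const_mul_atTop hq)
    have hlim := hE.mul hX
    rw [mul_zero] at hlim
    refine squeeze_zero_norm' ?_ hlim
    filter_upwards [self_mem_nhdsWithin] with t ht
    refine (hC r z t hr hz ht).trans (le_of_eq ?_)
    rw [Function.comp_apply, ← div_eq_mul_inv, neg_div]
end

section
/- Special case of Theorem 1 with 2β = 1 (classical incomplete lumped formulation, linear case). Let a, λ, α, γ, A > 0 and let h : [0,∞) → ℝ be continuous and bounded with h(0) = 0. Define u(x,z,t) = (A x e^{γx}/(4aπ)) ∫_0^t τ^{−3/2}·exp(−x²/(4τ) − γ²τ)·exp(λ(z+ατ)/(2a²))·[ (z+ατ) ∫_0^{t−τ} w^{−3/2}·exp(−(z+ατ)²/(4a²w))·exp(−λ²w/(4a²))·h(t−τ−w) dw ] dτ. Then u solves the classical boundary value problem: (i) ∂u/∂t(x,z,t) = a² ∂²u/∂z²(x,z,t) − λ ∂u/∂z(x,z,t) for all x, z, t > 0; (ii) ∂u/∂t(x,0,t) = ∂²u/∂x²(x,0,t) − 2γ ∂u/∂x(x,0,t) + α ∂u/∂z(x,0,t) for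 all x, t > 0; (iii) u(x,z,t) → A·h(t) as (x,z) → (0,0) for each t > 0; (iv) u(x,z,t) → 0 as x² + z² → ∞ for each t > 0; (v) u(x,z,t) → 0 as t → 0⁺ for all x, z > 0. -/
open MeasureTheory Real Filter Set

/-- The heat kernel factor `w^{-3/2} exp (-(x - μ w)² / (4 d w))`, extended by zero to `w ≤ 0`. -/
noncomputable def driftGaussian (d μ x w : ℝ) : ℝ :=
  if 0 < w then w ^ (-(3 / 2 : ℝ)) * exp (-(x - μ * w) ^ 2 / (4 * d * w)) else 0

/-- The (unnormalised) first-passage density at time `w` of level `x` for a diffusion with drift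
`μ` and diffusivity `d`, extended by zero to `w ≤ 0`. -/
noncomputable def passage (d μ x w : ℝ) : ℝ := x * driftGaussian d μ x w

/-- The derivative of `passage` in `x`. -/
noncomputable def passageX (d μ x w : ℝ) : ℝ :=
  (1 - x * ((x - μ * w) / (2 * d * w))) * driftGaussian d μ x w

/-- The second derivative of `passage` in `x`. -/
noncomputable def passageXX (d μ x w : ℝ) : ℝ :=
  (-((x - μ * w) / (2 * d * w)) * (1 - x * ((x - μ * w) / (2 * d * w)))
    - (2 * x - μ * w) / (2 * d * w)) * driftGaussian d μ x w

/-- The derivative of `passage` in `w`. -/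
noncomputable def passageW (d μ x w : ℝ) : ℝ :=
  x * (-3 / (2 * w) + x ^ 2 / (4 * d * w ^ 2) - μ ^ 2 / (4 * d)) * driftGaussian d μ x w

lemma driftGaussian_of_nonpos (d μ x : ℝ) {w : ℝ} (hw : w ≤ 0) : driftGaussian d μ x w = 0 :=
  if_neg hw.not_gt

lemma driftGaussian_of_pos (d μ x : ℝ) {w : ℝ} (hw : 0 < w) :
    driftGaussian d μ x w = w ^ (-(3 / 2 : ℝ)) * exp (-(x - μ * w) ^ 2 / (4 * d * w)) :=
  if_pos hw

lemma driftGaussian_nonneg (d μ x w : ℝ) : 0 ≤ driftGaussian d μ x w := by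
  unfold driftGaussian
  split_ifs <;> positivity

lemma measurable_driftGaussian (d μ : ℝ) : Measurable (Function.uncurry (driftGaussian d μ)) := by
  unfold driftGaussian Function.uncurry
  refine Measurable.ite (measurableSet_lt measurable_const measurable_snd) ?_ measurable_const
  fun_prop

/-- The advection–diffusion equation satisfied by the first-passage density. -/
lemma passageW_eq {d : ℝ} (hd : 0 < d) (μ x w : ℝ) :
    passageW d μ x w = d * passageXX d μ x w - μ * passageX d μ x w := by
  unfold passageW passageXX passageX
  rcases le_or_gt w 0 with hw | hw
  · simp [driftGaussian_of_nonpos d μ x hw]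
  · field_simp
    ring

/-- Functions vanishing for nonpositive times and decaying at time zero faster than any power,
with a polynomial loss in the space variable. -/
structure FlatKernel (D : ℝ → ℝ → ℝ) : Prop where
  meas : Measurable (Function.uncurry D)
  zero : ∀ x w, w ≤ 0 → D x w = 0
  bound : ∀ (X T : ℝ) (k : ℕ), ∃ C, 0 ≤ C ∧ ∀ x w, 0 < x → x ≤ X → 0 < w → w ≤ T →
    |D x w| * x ^ (2 * k + 8) ≤ C * w ^ k

lemma exp_neg_mul_pow_le {d x w : ℝ} (hd : 0 < d) (hw : 0 < w) (n : ℕ) :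
    exp (-(x ^ 2 / (4 * d * w))) * x ^ (2 * n) ≤ n.factorial * (4 * d) ^ n * w ^ n := by
  have hq : 0 ≤ x ^ 2 / (4 * d * w) := by positivity
  have h1 := Real.pow_div_factorial_le_exp _ hq n
  rw [div_le_iff₀ (by positivity)] at h1
  have h2 : x ^ (2 * n) = (x ^ 2 / (4 * d * w)) ^ n * ((4 * d) ^ n * w ^ n) := by
    rw [← mul_pow, ← mul_pow, div_mul_cancel₀ _ (by positivity), pow_mul]
  rw [h2, Real.exp_neg, inv_mul_le_iff₀ (exp_pos _)]
  calc _ ≤ (exp (x ^ 2 / (4 * d * w)) * n.factorial) * ((4 * d) ^ n * w ^ n) := by gcongr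
    _ = _ := by ring

lemma exp_drift_eq {d w : ℝ} (hd : 0 < d) (hw : 0 < w) (μ x : ℝ) :
    exp (-(x - μ * w) ^ 2 / (4 * d * w)) =
      exp (μ * x / (2 * d)) * exp (-(μ ^ 2 * w / (4 * d))) * exp (-(x ^ 2 / (4 * d * w))) := by
  rw [← exp_add, ← exp_add]
  congr 1
  field_simp
  ring

lemma exp_drift_le {d w : ℝ} (hd : 0 < d) (hw : 0 < w) (μ x : ℝ) :
    exp (-(x - μ * w) ^ 2 / (4 * d * w)) ≤
      exp (|μ| * |x| / (2 * d)) * exp (-(x ^ 2 / (4 * d * w))) := by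
  rw [exp_drift_eq hd hw]
  gcongr
  rw [← exp_add, exp_le_exp, ← abs_mul]
  have h1 : μ * x / (2 * d) ≤ |μ * x| / (2 * d) := by gcongr; exact le_abs_self _
  have h2 : 0 ≤ μ ^ 2 * w / (4 * d) := by positivity
  linarith

lemma rpow_neg_three_halves {w : ℝ} (hw : 0 < w) : w ^ 2 * w ^ (-(3 / 2 : ℝ)) = √w := by
  rw [← rpow_natCast, ← rpow_add hw, sqrt_eq_rpow]
  norm_num

lemma FlatKernel.of_mul_driftGaussian {d : ℝ} (hd : 0 < d) (μ : ℝ) {p P : ℝ → ℝ → ℝ}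
    (hp : Measurable (Function.uncurry p)) (hP : Continuous (Function.uncurry P))
    (hpP : ∀ x w, 0 < w → p x w * w ^ 4 = P x w * w ^ 2) :
    FlatKernel fun x w => p x w * driftGaussian d μ x w where
  meas := hp.mul (measurable_driftGaussian d μ)
  zero x w hw := by simp [driftGaussian_of_nonpos d μ x hw]
  bound X T k := by
    obtain ⟨C, hC⟩ := (isCompact_Icc (a := ((0 : ℝ), (0 : ℝ))) (b := (X, T))).exists_bound_of_continuousOn
      hP.continuousOn
    refine ⟨|C| * √T * exp (|μ| * X / (2 * d)) * ((k + 4).factorial * (4 * d) ^ (k + 4)),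
      by positivity, fun x w hx hxX hw hwT => ?_⟩
    have hPC : |P x w| ≤ |C| := (hC (x, w) ⟨⟨hx.le, hw.le⟩, ⟨hxX, hwT⟩⟩).trans (le_abs_self C)
    have hpw : p x w = P x w / w ^ 2 := by
      rw [eq_div_iff (by positivity)]
      have := hpP x w hw
      have h2 : w ^ 2 ≠ 0 := by positivity
      apply mul_right_cancel₀ h2
      linear_combination this
    have hE := exp_neg_mul_pow_le (x := x) hd hw (k + 4)
    have hD := exp_drift_le hd hw μ x
    have hX : exp (|μ| * |x| / (2 * d)) ≤ exp (|μ| * X / (2 * d)) := by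
      rw [abs_of_pos hx]; gcongr
    have hrp : w ^ (-(3 / 2 : ℝ)) = √w / w ^ 2 := by
      rw [← rpow_neg_three_halves hw]; field_simp
    have hsq : √w ≤ √T := sqrt_le_sqrt hwT
    rw [driftGaussian_of_pos _ _ _ hw, hrp, hpw, abs_mul, abs_div, abs_of_pos (pow_pos hw 2),
      abs_of_nonneg (a := _ * exp _) (by positivity)]
    calc |P x w| / w ^ 2 * (√w / w ^ 2 * exp (-(x - μ * w) ^ 2 / (4 * d * w))) * x ^ (2 * k + 8)
        ≤ |C| / w ^ 2 * (√T / w ^ 2 *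
          (exp (|μ| * X / (2 * d)) * exp (-(x ^ 2 / (4 * d * w))))) * x ^ (2 * k + 8) := by
          gcongr
          exact hD.trans (by gcongr)
      _ = |C| / w ^ 2 * (√T / w ^ 2) * exp (|μ| * X / (2 * d)) *
          (exp (-(x ^ 2 / (4 * d * w))) * x ^ (2 * (k + 4))) := by ring
      _ ≤ |C| / w ^ 2 * (√T / w ^ 2) * exp (|μ| * X / (2 * d)) *
          ((k + 4).factorial * (4 * d) ^ (k + 4) * w ^ (k + 4)) := by gcongr
      _ = _ := by
          rw [pow_add w k 4]
          field_simp

lemma flatKernel_passage {d : ℝ} (hd : 0 < d) (μ : ℝ) : FlatKernel (passage d μ) :=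
  .of_mul_driftGaussian hd μ (p := fun x _ => x) (P := fun x w => x * w ^ 2)
    measurable_fst (by fun_prop) (fun x w _ => by ring)

lemma flatKernel_passageX {d : ℝ} (hd : 0 < d) (μ : ℝ) : FlatKernel (passageX d μ) :=
  .of_mul_driftGaussian hd μ (P := fun x w => w ^ 2 - x * (x - μ * w) * w / (2 * d))
    (by fun_prop) (by fun_prop) (fun x w hw => by field_simp)

lemma flatKernel_passageXX {d : ℝ} (hd : 0 < d) (μ : ℝ) : FlatKernel (passageXX d μ) :=
  .of_mul_driftGaussian hd μ
    (P := fun x w => -(x - μ * w) / (2 * d) * (w - x * ((x - μ * w) / (2 * d)))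
      - (2 * x - μ * w) * w / (2 * d))
    (by fun_prop) (by fun_prop) (fun x w hw => by field_simp)

lemma flatKernel_passageW {d : ℝ} (hd : 0 < d) (μ : ℝ) : FlatKernel (passageW d μ) :=
  .of_mul_driftGaussian hd μ
    (P := fun x w => x * (-3 / 2 * w + x ^ 2 / (4 * d) - μ ^ 2 * w ^ 2 / (4 * d)))
    (by fun_prop) (by fun_prop) (fun x w hw => by field_simp)

/-- The chain rule for the first-passage density along a curve. -/
lemma hasDerivAt_passage {d : ℝ} (hd : 0 < d) (μ : ℝ) {y w : ℝ → ℝ} {y' w' s : ℝ}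
    (hy : HasDerivAt y y' s) (hw : HasDerivAt w w' s) (hpos : 0 < y s) :
    HasDerivAt (fun σ => passage d μ (y σ) (w σ))
      (passageX d μ (y s) (w s) * y' + passageW d μ (y s) (w s) * w') s := by
  rcases lt_trichotomy (w s) 0 with h | h | h
  · have hz : passageX d μ (y s) (w s) * y' + passageW d μ (y s) (w s) * w' = 0 := by
      simp [(flatKernel_passageX hd μ).zero _ _ h.le, (flatKernel_passageW hd μ).zero _ _ h.le]
    rw [hz]
    refine (hasDerivAt_const s (0 : ℝ)).congr_of_eventuallyEq ?_
    filter_upwards [hw.continuousAt.eventually_lt continuousAt_const h] with σ hσ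
    exact (flatKernel_passage hd μ).zero _ _ hσ.le
  · have hz : passageX d μ (y s) (w s) * y' + passageW d μ (y s) (w s) * w' = 0 := by
      simp [(flatKernel_passageX hd μ).zero _ _ h.le, (flatKernel_passageW hd μ).zero _ _ h.le]
    rw [hz]
    obtain ⟨C, hC0, hC⟩ := (flatKernel_passage hd μ).bound (y s + 1) 1 2
    have h1 : (fun σ => passage d μ (y σ) (w σ)) =O[nhds s] fun σ => (w σ - w s) ^ 2 := by
      refine Asymptotics.IsBigO.of_bound (C / (y s / 2) ^ 12) ?_
      filter_upwards [hw.continuousAt.eventually_lt continuousAt_const (h.trans_lt one_pos),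
        hy.continuousAt.eventually_lt continuousAt_const (lt_add_one (y s)),
        continuousAt_const.eventually_lt hy.continuousAt (half_lt_self hpos)] with σ h1 h2 h3
      rw [h, sub_zero]
      rcases le_or_gt (w σ) 0 with h4 | h4
      · rw [(flatKernel_passage hd μ).zero _ _ h4, norm_zero]; positivity
      · have h5 := hC (y σ) (w σ) ((half_pos hpos).trans h3) h2.le h4 h1.le
        rw [norm_eq_abs, norm_eq_abs, abs_of_nonneg (sq_nonneg (w σ)), div_mul_eq_mul_div,
          le_div_iff₀ (by positivity)]
        refine le_trans ?_ h5
        gcongr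
    have h2 : (fun σ => (w σ - w s) ^ 2) =O[nhds s] fun σ => (σ - s) ^ 2 :=
      hw.differentiableAt.isBigO_sub.pow 2
    have h3 := h1.trans h2
    have h4 : (fun σ => passage d μ (y σ) (w σ)) =O[nhds s] fun σ => ‖σ - s‖ ^ 2 := by
      refine h3.trans (Asymptotics.IsBigO.of_bound 1 (Eventually.of_forall fun σ => ?_))
      simp
    simpa using (h4.hasFDerivAt (𝕜 := ℝ) one_lt_two).hasDerivAt
  · have hev : (fun σ => passage d μ (y σ) (w σ)) =ᶠ[nhds s] fun σ =>
        y σ * ((w σ) ^ (-(3 / 2 : ℝ)) * exp (-(y σ - μ * w σ) ^ 2 / (4 * d * w σ))) := by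
      filter_upwards [continuousAt_const.eventually_lt hw.continuousAt h] with σ hσ
      rw [passage, driftGaussian_of_pos _ _ _ hσ]
    refine HasDerivAt.congr_of_eventuallyEq ?_ hev
    have h1 := hw.rpow_const (p := -(3 / 2 : ℝ)) (Or.inl h.ne')
    have h2 := ((((hy.sub (hw.const_mul μ)).pow 2).neg).div (hw.const_mul (4 * d))
      (by positivity : 4 * d * w s ≠ 0)).exp
    have h3 := hy.mul (h1.mul h2)
    refine h3.congr_deriv ?_
    have hr : (w s) ^ (-(3 / 2 : ℝ) - 1) = (w s) ^ (-(3 / 2 : ℝ)) / w s := by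
      rw [rpow_sub h, rpow_one]
    simp only [Pi.mul_apply, Pi.sub_apply, Pi.neg_apply, Pi.pow_apply, Pi.div_apply, hr]
    rw [passageX, passageW, driftGaussian_of_pos _ _ _ h]
    field_simp
    ring

lemma hasDerivAt_passageX {d : ℝ} (hd : 0 < d) (μ x w : ℝ) :
    HasDerivAt (fun x => passageX d μ x w) (passageXX d μ x w) x := by
  rcases le_or_gt w 0 with h | h
  · simp only [(flatKernel_passageX hd μ).zero _ _ h, (flatKernel_passageXX hd μ).zero _ _ h]
    exact hasDerivAt_const _ _
  · unfold passageX passageXX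
    simp only [driftGaussian_of_pos _ _ _ h]
    have hl : HasDerivAt (fun x => x - μ * w) 1 x := (hasDerivAt_id x).sub_const _
    have h1 := ((hl.pow 2).neg.div_const (4 * d * w)).exp.const_mul (w ^ (-(3 / 2 : ℝ)))
    have h2 := ((hasDerivAt_id x).mul (hl.div_const (2 * d * w))).const_sub 1
    refine (h2.mul h1).congr_deriv ?_
    simp only [Pi.mul_apply, Pi.neg_apply, Pi.pow_apply, id]
    field_simp
    ring

/-- Product of two kernels in cascade, integrated against `H` over the square `(0, T]²`. -/
noncomputable def cascade (α T : ℝ) (H : ℝ → ℝ) (D₁ D₂ : ℝ → ℝ → ℝ) (x z t : ℝ) : ℝ :=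
  ∫ p, D₁ x p.1 * D₂ (z + α * p.1) (t - p.1 - p.2) * H p.2
    ∂((volume.restrict (Ioc (0 : ℝ) T)).prod (volume.restrict (Ioc (0 : ℝ) T)))

lemma ae_mem_square (T : ℝ) :
    ∀ᵐ p ∂((volume.restrict (Ioc (0 : ℝ) T)).prod (volume.restrict (Ioc (0 : ℝ) T))),
      p.1 ∈ Ioc 0 T ∧ p.2 ∈ Ioc 0 T := by
  rw [Measure.prod_restrict]
  exact ae_restrict_mem (measurableSet_Ioc.prod measurableSet_Ioc)

section Cascade

variable {α T B : ℝ} {H : ℝ → ℝ} {D₁ D₁' D₂ D₂' : ℝ → ℝ → ℝ}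

lemma FlatKernel.measurable_cascade (h₁ : FlatKernel D₁) (h₂ : FlatKernel D₂)
    (hH : Continuous H) (α x z t : ℝ) :
    Measurable fun p : ℝ × ℝ => D₁ x p.1 * D₂ (z + α * p.1) (t - p.1 - p.2) * H p.2 := by
  have e₁ : Measurable fun p : ℝ × ℝ => D₁ x p.1 :=
    h₁.meas.comp (f := fun p : ℝ × ℝ => (x, p.1)) (by fun_prop)
  have e₂ : Measurable fun p : ℝ × ℝ => D₂ (z + α * p.1) (t - p.1 - p.2) :=
    h₂.meas.comp (f := fun p : ℝ × ℝ => (z + α * p.1, t - p.1 - p.2)) (by fun_prop)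
  have e₃ : Measurable fun p : ℝ × ℝ => H p.2 := hH.measurable.comp measurable_snd
  exact (e₁.mul e₂).mul e₃

lemma FlatKernel.abs_le_pow (h₁ : FlatKernel D₁) {x₁ : ℝ} (hx₁ : 0 < x₁) (X T : ℝ) (k : ℕ) :
    ∃ C, 0 ≤ C ∧ ∀ x τ, x₁ ≤ x → x ≤ X → 0 < τ → τ ≤ T → |D₁ x τ| ≤ C * τ ^ k := by
  obtain ⟨C, hC0, hC⟩ := h₁.bound X T k
  refine ⟨C / x₁ ^ (2 * k + 8), by positivity, fun x τ hx hX hτ hT => ?_⟩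
  have := hC x τ (hx₁.trans_le hx) hX hτ hT
  rw [div_mul_eq_mul_div, le_div_iff₀ (by positivity)]
  refine le_trans ?_ this
  gcongr

lemma FlatKernel.abs_mul_pow_le (h₂ : FlatKernel D₂) (Y T : ℝ) :
    ∃ C, 0 ≤ C ∧ ∀ y w, 0 < y → y ≤ Y → w ≤ T → |D₂ y w| * y ^ 8 ≤ C := by
  obtain ⟨C, hC0, hC⟩ := h₂.bound Y T 0
  refine ⟨C, hC0, fun y w hy hY hT => ?_⟩
  rcases le_or_gt w 0 with hw | hw
  · simpa [h₂.zero y w hw] using hC0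
  · simpa using hC y w hy hY hw hT

lemma FlatKernel.cascade_bound (h₁ : FlatKernel D₁) (h₂ : FlatKernel D₂) (hα : 0 < α)
    (hB : ∀ r, |H r| ≤ B) {x₁ : ℝ} (hx₁ : 0 < x₁) (X Z T : ℝ) :
    ∃ C, 0 ≤ C ∧ ∀ x z t τ r, x₁ ≤ x → x ≤ X → 0 ≤ z → z ≤ Z → t ≤ T → 0 < τ → τ ≤ T → 0 < r →
      |D₁ x τ * D₂ (z + α * τ) (t - τ - r) * H r| ≤ C * τ := by
  have hB0 : 0 ≤ B := (abs_nonneg _).trans (hB 0)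
  obtain ⟨C₁, hC₁, b₁⟩ := h₁.abs_le_pow hx₁ X T 9
  obtain ⟨C₂, hC₂, b₂⟩ := h₂.abs_mul_pow_le (Z + α * T) T
  refine ⟨C₁ * (C₂ / α ^ 8) * B, by positivity, fun x z t τ r hx hX hz hZ ht hτ hT hr => ?_⟩
  have e₁ := b₁ x τ hx hX hτ hT
  have e₂ := b₂ (z + α * τ) (t - τ - r) (by positivity) (by gcongr) (by linarith)
  have e₃ : |D₂ (z + α * τ) (t - τ - r)| ≤ C₂ / (α * τ) ^ 8 := by
    rw [le_div_iff₀ (by positivity)]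
    refine le_trans ?_ e₂
    gcongr
    linarith
  rw [abs_mul, abs_mul]
  calc _ ≤ C₁ * τ ^ 9 * (C₂ / (α * τ) ^ 8) * B := by gcongr; exact hB r
    _ = _ := by field_simp

lemma FlatKernel.integrable_cascade (h₁ : FlatKernel D₁) (h₂ : FlatKernel D₂) (hα : 0 < α)
    (hH : Continuous H) (hB : ∀ r, |H r| ≤ B) {x z t : ℝ} (hx : 0 < x) (hz : 0 ≤ z) (ht : t ≤ T) :
    Integrable (fun p : ℝ × ℝ => D₁ x p.1 * D₂ (z + α * p.1) (t - p.1 - p.2) * H p.2)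
      ((volume.restrict (Ioc (0 : ℝ) T)).prod (volume.restrict (Ioc (0 : ℝ) T))) := by
  obtain ⟨C, hC0, hC⟩ := h₁.cascade_bound h₂ hα hB hx x z T
  refine (integrable_const (C * T)).mono' (h₁.measurable_cascade h₂ hH α x z t).aestronglyMeasurable ?_
  filter_upwards [ae_mem_square T] with p hp
  refine (hC x z t p.1 p.2 le_rfl le_rfl hz le_rfl ht hp.1.1 hp.1.2 hp.2.1).trans ?_
  gcongr
  exact hp.1.2

lemma hasDerivAt_cascade_x (h₁ : FlatKernel D₁) (h₁' : FlatKernel D₁') (h₂ : FlatKernel D₂)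
    (hα : 0 < α) (hH : Continuous H) (hB : ∀ r, |H r| ≤ B)
    (hD : ∀ x τ, 0 < x → HasDerivAt (fun x => D₁ x τ) (D₁' x τ) x)
    {x z t : ℝ} (hx : 0 < x) (hz : 0 ≤ z) (ht : t ≤ T) :
    HasDerivAt (fun x => cascade α T H D₁ D₂ x z t) (cascade α T H D₁' D₂ x z t) x := by
  obtain ⟨C, hC0, hC⟩ := h₁'.cascade_bound h₂ hα hB (half_pos hx) (x + 1) z T
  refine (hasDerivAt_integral_of_dominated_loc_of_deriv_le (bound := fun _ => C * T)
    (s := Ioo (x / 2) (x + 1))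
    (F := fun x (p : ℝ × ℝ) => D₁ x p.1 * D₂ (z + α * p.1) (t - p.1 - p.2) * H p.2)
    (F' := fun x (p : ℝ × ℝ) => D₁' x p.1 * D₂ (z + α * p.1) (t - p.1 - p.2) * H p.2)
    (Ioo_mem_nhds (half_lt_self hx) (lt_add_one x))
    (Eventually.of_forall fun _ => (h₁.measurable_cascade h₂ hH ..).aestronglyMeasurable)
    (h₁.integrable_cascade h₂ hα hH hB hx hz ht)
    (h₁'.measurable_cascade h₂ hH ..).aestronglyMeasurable ?_ (integrable_const _) ?_).2
  · filter_upwards [ae_mem_square T] with p hp y hy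
    refine (hC y z t p.1 p.2 hy.1.le hy.2.le hz le_rfl ht hp.1.1 hp.1.2 hp.2.1).trans ?_
    gcongr
    exact hp.1.2
  · filter_upwards with p y hy
    exact ((hD y p.1 ((half_pos hx).trans hy.1)).mul_const _).mul_const _

lemma hasDerivAt_cascade_z (h₁ : FlatKernel D₁) (h₂ : FlatKernel D₂) (h₂' : FlatKernel D₂')
    (hα : 0 < α) (hH : Continuous H) (hB : ∀ r, |H r| ≤ B)
    (hD : ∀ y w, 0 < y → HasDerivAt (fun y => D₂ y w) (D₂' y w) y)
    {x z t : ℝ} (hx : 0 < x) (hz : 0 < z) (ht : t ≤ T) :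
    HasDerivAt (fun z => cascade α T H D₁ D₂ x z t) (cascade α T H D₁ D₂' x z t) z := by
  obtain ⟨C, hC0, hC⟩ := h₁.cascade_bound h₂' hα hB hx x (z + 1) T
  refine (hasDerivAt_integral_of_dominated_loc_of_deriv_le (bound := fun _ => C * T)
    (s := Ioo 0 (z + 1))
    (F := fun z (p : ℝ × ℝ) => D₁ x p.1 * D₂ (z + α * p.1) (t - p.1 - p.2) * H p.2)
    (F' := fun z (p : ℝ × ℝ) => D₁ x p.1 * D₂' (z + α * p.1) (t - p.1 - p.2) * H p.2)
    (Ioo_mem_nhds hz (lt_add_one z))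
    (Eventually.of_forall fun _ => (h₁.measurable_cascade h₂ hH ..).aestronglyMeasurable)
    (h₁.integrable_cascade h₂ hα hH hB hx hz.le ht)
    (h₁.measurable_cascade h₂' hH ..).aestronglyMeasurable ?_ (integrable_const _) ?_).2
  · filter_upwards [ae_mem_square T] with p hp y hy
    refine (hC x y t p.1 p.2 le_rfl le_rfl hy.1.le hy.2.le ht hp.1.1 hp.1.2 hp.2.1).trans ?_
    gcongr
    exact hp.1.2
  · filter_upwards [ae_mem_square T] with p hp y hy
    have hpos : 0 < y + α * p.1 := add_pos hy.1 (mul_pos hα hp.1.1)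
    exact (((hD _ (t - p.1 - p.2) hpos).comp_add_const y (α * p.1)).const_mul _).mul_const _

lemma hasDerivAt_cascade_t (h₁ : FlatKernel D₁) (h₂ : FlatKernel D₂) (h₂' : FlatKernel D₂')
    (hα : 0 < α) (hH : Continuous H) (hB : ∀ r, |H r| ≤ B)
    (hD : ∀ y w, 0 < y → HasDerivAt (fun w => D₂ y w) (D₂' y w) w)
    {x z t : ℝ} (hx : 0 < x) (hz : 0 ≤ z) (ht : t < T) :
    HasDerivAt (fun t => cascade α T H D₁ D₂ x z t) (cascade α T H D₁ D₂' x z t) t := by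
  obtain ⟨C, hC0, hC⟩ := h₁.cascade_bound h₂' hα hB hx x z T
  refine (hasDerivAt_integral_of_dominated_loc_of_deriv_le (bound := fun _ => C * T)
    (s := Iio T)
    (F := fun t (p : ℝ × ℝ) => D₁ x p.1 * D₂ (z + α * p.1) (t - p.1 - p.2) * H p.2)
    (F' := fun t (p : ℝ × ℝ) => D₁ x p.1 * D₂' (z + α * p.1) (t - p.1 - p.2) * H p.2)
    (Iio_mem_nhds ht)
    (Eventually.of_forall fun _ => (h₁.measurable_cascade h₂ hH ..).aestronglyMeasurable)
    (h₁.integrable_cascade h₂ hα hH hB hx hz ht.le)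
    (h₁.measurable_cascade h₂' hH ..).aestronglyMeasurable ?_ (integrable_const _) ?_).2
  · filter_upwards [ae_mem_square T] with p hp y hy
    refine (hC x z y p.1 p.2 le_rfl le_rfl hz le_rfl hy.le hp.1.1 hp.1.2 hp.2.1).trans ?_
    gcongr
    exact hp.1.2
  · filter_upwards [ae_mem_square T] with p hp y hy
    have hpos : 0 < z + α * p.1 := add_pos_of_nonneg_of_pos hz (mul_pos hα hp.1.1)
    simp only [sub_sub]
    exact (((hD _ (y - (p.1 + p.2)) hpos).comp_sub_const y (p.1 + p.2)).const_mul _).mul_const _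

/-- The advection–diffusion equation in the second kernel passes to the cascade. -/
lemma cascade_passageW {d : ℝ} (hd : 0 < d) (μ : ℝ) (h₁ : FlatKernel D₁) (hα : 0 < α)
    (hH : Continuous H) (hB : ∀ r, |H r| ≤ B) {x z t : ℝ} (hx : 0 < x) (hz : 0 ≤ z) (ht : t ≤ T) :
    cascade α T H D₁ (passageW d μ) x z t =
      d * cascade α T H D₁ (passageXX d μ) x z t - μ * cascade α T H D₁ (passageX d μ) x z t := by
  have i₁ := h₁.integrable_cascade (flatKernel_passageXX hd μ) hα hH hB hx hz ht
  have i₂ := h₁.integrable_cascade (flatKernel_passageX hd μ) hα hH hB hx hz ht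
  unfold cascade
  rw [← integral_const_mul, ← integral_const_mul, ← integral_sub (i₁.const_mul d) (i₂.const_mul μ)]
  congr 1 with p
  rw [passageW_eq hd]
  ring

/-- Integration by parts along the characteristic direction on the boundary `z = 0`. -/
lemma cascade_boundary {d₁ d₂ : ℝ} (hd₁ : 0 < d₁) (hd₂ : 0 < d₂) (μ₁ μ₂ : ℝ) (hα : 0 < α)
    (hH : Continuous H) (hB : ∀ r, |H r| ≤ B) {x t : ℝ} (hx : 0 < x) (ht : t ≤ T) (hT : 0 < T) :
    cascade α T H (passage d₁ μ₁) (passageW d₂ μ₂) x 0 t =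
      cascade α T H (passageW d₁ μ₁) (passage d₂ μ₂) x 0 t +
        α * cascade α T H (passage d₁ μ₁) (passageX d₂ μ₂) x 0 t := by
  have f₁ := flatKernel_passage hd₁ μ₁
  have f₂ := flatKernel_passage hd₂ μ₂
  have i₁ := (flatKernel_passageW hd₁ μ₁).integrable_cascade f₂ hα hH hB hx le_rfl ht
  have i₂ := f₁.integrable_cascade (flatKernel_passageX hd₂ μ₂) hα hH hB hx le_rfl ht
  have i₃ := f₁.integrable_cascade (flatKernel_passageW hd₂ μ₂) hα hH hB hx le_rfl ht
  have i₄ := (i₁.add (i₂.const_mul α)).sub i₃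
  rw [← sub_eq_zero, ← neg_eq_zero, neg_sub]
  unfold cascade
  rw [← integral_const_mul, ← integral_add' i₁ (i₂.const_mul α),
    ← integral_sub' (i₁.add (i₂.const_mul α)) i₃, integral_prod_symm _ i₄]
  have i₅ := i₄.prod_left_ae
  apply integral_eq_zero_of_ae
  filter_upwards [i₅, ae_restrict_mem measurableSet_Ioc] with r hr hrT
  simp only [Pi.sub_apply, Pi.add_apply] at hr ⊢
  rw [← intervalIntegral.integral_of_le hT.le]
  set f : ℝ → ℝ := fun τ =>
    passage d₁ μ₁ x τ * passage d₂ μ₂ (0 + α * τ) (t - τ - r) * H r with hf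
  have hder : ∀ τ, 0 < τ → HasDerivAt f
      (passageW d₁ μ₁ x τ * passage d₂ μ₂ (0 + α * τ) (t - τ - r) * H r +
        α * (passage d₁ μ₁ x τ * passageX d₂ μ₂ (0 + α * τ) (t - τ - r) * H r) -
        passage d₁ μ₁ x τ * passageW d₂ μ₂ (0 + α * τ) (t - τ - r) * H r) τ := by
    intro τ hτ
    have e₁ := hasDerivAt_passage hd₁ μ₁ (hasDerivAt_const τ x) (hasDerivAt_id τ) hx
    have e₂ := hasDerivAt_passage hd₂ μ₂ (((hasDerivAt_id τ).const_mul α).const_add 0)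
      (((hasDerivAt_id τ).const_sub t).sub_const r) (by simp; positivity)
    refine ((e₁.mul e₂).mul_const (H r)).congr_deriv ?_
    simp only [id]
    ring
  rw [intervalIntegral.integral_eq_sub_of_hasDerivAt_of_le (f := f) hT.le ?_
    (fun τ hτ => hder τ hτ.1) ?_]
  · simp only [hf]
    rw [f₁.zero x 0 le_rfl, f₂.zero _ (t - T - r) (by linarith [hrT.1])]
    simp
  · intro τ hτ
    rcases hτ.1.eq_or_lt with rfl | hpos
    · obtain ⟨C, hC0, hC⟩ := f₁.cascade_bound f₂ hα hB hx x 0 T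
      have hf0 : f 0 = 0 := by simp [hf, f₁.zero x 0 le_rfl]
      rw [ContinuousWithinAt, hf0]
      refine squeeze_zero_norm' (a := fun τ => C * τ) ?_ ?_
      · filter_upwards [self_mem_nhdsWithin] with τ hτ
        rcases hτ.1.eq_or_lt with rfl | hpos
        · simp [hf0]
        · exact hC x 0 t τ r le_rfl le_rfl le_rfl le_rfl ht hpos hτ.2 hrT.1
      · have : ContinuousWithinAt (fun τ => C * τ) (Icc 0 T) 0 := by fun_prop
        simpa [ContinuousWithinAt] using this
    · exact (hder τ hpos).continuousAt.continuousWithinAt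
  · rw [intervalIntegrable_iff_integrableOn_Ioc_of_le hT.le]
    exact hr

end Cascade

lemma rpow_mul_exp_eq {d w : ℝ} (hw : w ∈ Ioi (0 : ℝ)) :
    w ^ (-(3 / 2 : ℝ)) * exp (-(1 / (4 * d * w))) =
      2 * ((|(-(1 / 2 : ℝ))| * w ^ (-(1 / 2 : ℝ) - 1)) •
        exp (-(1 / (4 * d)) * (w ^ (-(1 / 2 : ℝ))) ^ 2)) := by
  have hw' : 0 < w := hw
  have h1 : (w ^ (-(1 / 2 : ℝ))) ^ 2 = w⁻¹ := by
    rw [← rpow_natCast, ← rpow_mul hw'.le, ← rpow_neg_one]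
    norm_num
  rw [h1, abs_neg, abs_of_pos (by norm_num), smul_eq_mul]
  have h2 : (-(1 / 2 : ℝ) - 1) = -(3 / 2) := by norm_num
  have h3 : -(1 / (4 * d)) * w⁻¹ = -(1 / (4 * d * w)) := by
    rw [one_div, one_div, mul_inv (4 * d) w]; ring
  rw [h2, h3]
  ring

lemma integrableOn_rpow_mul_exp {d : ℝ} (hd : 0 < d) :
    IntegrableOn (fun w : ℝ => w ^ (-(3 / 2 : ℝ)) * exp (-(1 / (4 * d * w)))) (Ioi 0) := by
  rw [integrableOn_congr_fun (fun w hw => rpow_mul_exp_eq hw) measurableSet_Ioi]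
  refine Integrable.const_mul ?_ 2
  exact (integrableOn_Ioi_comp_rpow_iff _ (by norm_num : (-(1 / 2 : ℝ)) ≠ 0)).2
    (integrable_exp_neg_mul_sq (by positivity)).integrableOn

lemma integral_rpow_mul_exp {d : ℝ} (hd : 0 < d) :
    ∫ w in Ioi (0 : ℝ), w ^ (-(3 / 2 : ℝ)) * exp (-(1 / (4 * d * w))) = 2 * √(π * d) := by
  rw [setIntegral_congr_fun measurableSet_Ioi (fun w hw => rpow_mul_exp_eq hw),
    integral_const_mul,
    integral_comp_rpow_Ioi (fun v => exp (-(1 / (4 * d)) * v ^ 2))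
      (by norm_num : (-(1 / 2 : ℝ)) ≠ 0), integral_gaussian_Ioi]
  have : π / (1 / (4 * d)) = 2 ^ 2 * (π * d) := by field_simp; norm_num
  rw [this, sqrt_mul (by positivity), sqrt_sq (by norm_num)]
  ring

lemma passage_zero_one_eq_indicator (d : ℝ) :
    passage d 0 1 = (Ioi (0 : ℝ)).indicator
      fun w => w ^ (-(3 / 2 : ℝ)) * exp (-(1 / (4 * d * w))) := by
  ext w
  by_cases hw : 0 < w
  · rw [indicator_of_mem (show w ∈ Ioi 0 from hw), passage, driftGaussian_of_pos _ _ _ hw]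
    simp [neg_div]
  · rw [indicator_of_notMem (by simpa using hw), passage,
      driftGaussian_of_nonpos _ _ _ (not_lt.1 hw), mul_zero]

/-- Parabolic scaling of the first-passage density. -/
lemma passage_scale {d x : ℝ} (hx : 0 < x) (μ σ : ℝ) :
    x ^ 2 * passage d μ x (x ^ 2 * σ) = passage d (μ * x) 1 σ := by
  rcases le_or_gt σ 0 with h | h
  · rw [passage, passage, driftGaussian_of_nonpos _ _ _ h,
      driftGaussian_of_nonpos _ _ _ (mul_nonpos_of_nonneg_of_nonpos (sq_nonneg x) h)]
    simp
  · rw [passage, passage, driftGaussian_of_pos _ _ _ h, driftGaussian_of_pos _ _ _ (by positivity),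
      mul_rpow (by positivity) h.le]
    have h1 : (x ^ 2) ^ (-(3 / 2 : ℝ)) = (x ^ 3)⁻¹ := by
      rw [← rpow_natCast, ← rpow_mul hx.le, ← rpow_natCast x 3, ← rpow_neg hx.le]
      norm_num
    have h2 : -(x - μ * (x ^ 2 * σ)) ^ 2 / (4 * d * (x ^ 2 * σ)) =
        -(1 - μ * x * σ) ^ 2 / (4 * d * σ) := by
      have : -(x - μ * (x ^ 2 * σ)) ^ 2 = x ^ 2 * (-(1 - μ * x * σ) ^ 2) := by ring
      rw [this, show 4 * d * (x ^ 2 * σ) = x ^ 2 * (4 * d * σ) by ring,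
        mul_div_mul_left _ _ (by positivity)]
    rw [h1, h2]
    field_simp

lemma integral_passage_mul {d x : ℝ} (hx : 0 < x) (μ : ℝ) (Φ : ℝ → ℝ) :
    ∫ τ, passage d μ x τ * Φ τ = ∫ σ, passage d (μ * x) 1 σ * Φ (x ^ 2 * σ) := by
  have h := Measure.integral_comp_mul_left (fun τ => passage d μ x τ * Φ τ) (x ^ 2)
  have hx2 : 0 < x ^ 2 := by positivity
  rw [abs_of_pos (inv_pos.2 hx2), smul_eq_mul, eq_inv_mul_iff_mul_eq₀ hx2.ne',
    ← integral_const_mul] at h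
  rw [← h]
  congr 1 with σ
  rw [← passage_scale hx, mul_assoc]

lemma integrable_passage_zero {d x : ℝ} (hd : 0 < d) (hx : 0 ≤ x) :
    Integrable (passage d 0 x) := by
  rcases hx.eq_or_lt with rfl | hx
  · unfold passage; simp
  have h1 : Integrable (passage d 0 1) := by
    rw [passage_zero_one_eq_indicator, integrable_indicator_iff measurableSet_Ioi]
    exact integrableOn_rpow_mul_exp hd
  have hx2 : x ^ 2 ≠ 0 := by positivity
  rw [← integrable_comp_mul_left_iff _ hx2, ← integrable_const_mul_iff (IsUnit.mk0 _ hx2)]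
  simpa only [passage_scale hx, zero_mul] using h1

lemma integral_passage_zero {d x : ℝ} (hd : 0 < d) (hx : 0 < x) :
    ∫ τ, passage d 0 x τ = 2 * √(π * d) := by
  have := integral_passage_mul (d := d) hx 0 fun _ => 1
  simp only [mul_one, zero_mul] at this
  rw [this, passage_zero_one_eq_indicator, integral_indicator measurableSet_Ioi,
    integral_rpow_mul_exp hd]

lemma abs_passage_le {d t w : ℝ} (hd : 0 < d) (μ y : ℝ) (hw : w ≤ t) :
    |passage d μ y w| ≤
      exp (|μ| * |y| / (2 * d) - y ^ 2 / (8 * d * t)) * passage (2 * d) 0 |y| w := by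
  rcases le_or_gt w 0 with h | h
  · simp [passage, driftGaussian_of_nonpos _ _ _ h]
  · rw [passage, passage, abs_mul, abs_of_nonneg (driftGaussian_nonneg ..),
      driftGaussian_of_pos _ _ _ h, driftGaussian_of_pos _ _ _ h]
    have h1 := exp_drift_le hd h μ y
    have h2 : exp (-(y ^ 2 / (4 * d * w))) ≤
        exp (-(y ^ 2 / (8 * d * t))) * exp (-(y ^ 2 / (8 * d * w))) := by
      rw [← exp_add, exp_le_exp]
      have : y ^ 2 / (8 * d * t) ≤ y ^ 2 / (8 * d * w) := by gcongr
      have e : y ^ 2 / (4 * d * w) = y ^ 2 / (8 * d * w) + y ^ 2 / (8 * d * w) := by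
        field_simp; ring
      linarith
    have h3 : -(|y| - 0 * w) ^ 2 / (4 * (2 * d) * w) = -(y ^ 2 / (8 * d * w)) := by
      rw [zero_mul, sub_zero, sq_abs, neg_div]; ring_nf
    rw [h3, sub_eq_add_neg (|μ| * |y| / (2 * d)), exp_add]
    calc |y| * (w ^ (-(3 / 2 : ℝ)) * exp (-(y - μ * w) ^ 2 / (4 * d * w)))
        ≤ |y| * (w ^ (-(3 / 2 : ℝ)) * (exp (|μ| * |y| / (2 * d)) *
            (exp (-(y ^ 2 / (8 * d * t))) * exp (-(y ^ 2 / (8 * d * w)))))) := by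
          gcongr
          exact h1.trans (by gcongr)
      _ = _ := by ring

lemma abs_integral_passage_mul_le {d t C : ℝ} (hd : 0 < d) (μ y : ℝ) (hC : 0 ≤ C)
    {Φ : ℝ → ℝ} (hΦ : ∀ τ, 0 < τ → τ < t → |Φ τ| ≤ C) (hΦ0 : ∀ τ, t ≤ τ → Φ τ = 0) :
    |∫ τ, passage d μ y τ * Φ τ| ≤
      2 * √(π * (2 * d)) * C * exp (|μ| * |y| / (2 * d) - y ^ 2 / (8 * d * t)) := by
  rcases eq_or_ne y 0 with rfl | hy
  · simp only [passage, zero_mul, integral_zero, abs_zero]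
    positivity
  · have hy' : 0 < |y| := abs_pos.2 hy
    have h2d : 0 < 2 * d := by positivity
    set E := exp (|μ| * |y| / (2 * d) - y ^ 2 / (8 * d * t)) with hE
    have h1 := norm_integral_le_of_norm_le (f := fun τ => passage d μ y τ * Φ τ)
      (((integrable_passage_zero h2d hy'.le).const_mul (C * E))) (Eventually.of_forall fun τ => ?_)
    · rw [integral_const_mul, integral_passage_zero h2d hy'] at h1
      refine h1.trans (le_of_eq ?_)
      ring
    · have hp : 0 ≤ passage (2 * d) 0 |y| τ :=
        mul_nonneg (abs_nonneg y) (driftGaussian_nonneg ..)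
      rcases le_or_gt τ 0 with h | h
      · simp [passage, driftGaussian_of_nonpos _ _ _ h]
      rcases le_or_gt t τ with h' | h'
      · rw [hΦ0 τ h', mul_zero, norm_zero]; positivity
      · rw [norm_mul, norm_eq_abs, norm_eq_abs]
        calc _ ≤ (E * passage (2 * d) 0 |y| τ) * C := by
              gcongr
              · exact abs_passage_le hd μ y h'.le
              · exact hΦ τ h h'
          _ = _ := by ring

/-- First-passage densities form an approximate identity as the level tends to zero. -/
lemma tendsto_integral_passage_mul {ι : Type*} {l : Filter ι} [l.IsCountablyGenerated]
    {d C L : ℝ} (hd : 0 < d) (μ : ℝ) {x : ι → ℝ} (hx : Tendsto x l (nhds 0))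
    (hpos : ∀ᶠ i in l, 0 < x i) {Φ : ι → ℝ → ℝ} (hmeas : ∀ i, Measurable (Φ i))
    (hC : ∀ᶠ i in l, ∀ τ, 0 < τ → |Φ i τ| ≤ C)
    (hlim : ∀ σ, 0 < σ → Tendsto (fun i => Φ i (x i ^ 2 * σ)) l (nhds L)) :
    Tendsto (fun i => ∫ τ, passage d μ (x i) τ * Φ i τ) l (nhds (2 * √(π * d) * L)) := by
  have hev : (fun i => ∫ σ, passage d (μ * x i) 1 σ * Φ i (x i ^ 2 * σ)) =ᶠ[l]
      fun i => ∫ τ, passage d μ (x i) τ * Φ i τ := by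
    filter_upwards [hpos] with i hi
    exact (integral_passage_mul hi μ _).symm
  refine Tendsto.congr' hev ?_
  rw [← integral_passage_zero hd one_pos, ← integral_mul_const]
  refine tendsto_integral_filter_of_dominated_convergence
    (fun σ => exp (|μ| / (2 * d)) * passage d 0 1 σ * C) ?_ ?_ ?_ ?_
  · refine Eventually.of_forall fun i => Measurable.aestronglyMeasurable ?_
    have h1 : Measurable fun σ => passage d (μ * x i) 1 σ :=
      (flatKernel_passage hd (μ * x i)).meas.comp (f := fun σ : ℝ => ((1 : ℝ), σ)) (by fun_prop)
    exact h1.mul ((hmeas i).comp (by fun_prop))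
  · filter_upwards [hpos, hC, hx.eventually_lt_const one_pos] with i hi hCi hi1
    refine Eventually.of_forall fun σ => ?_
    rcases le_or_gt σ 0 with h | h
    · simp [passage, driftGaussian_of_nonpos _ _ _ h]
    · have hτ : 0 < x i ^ 2 * σ := by positivity
      have h1 := exp_drift_le hd h (μ * x i) 1
      have h2 : exp (|μ * x i| * |1| / (2 * d)) ≤ exp (|μ| / (2 * d)) := by
        rw [abs_one, mul_one, abs_mul, abs_of_pos hi]
        gcongr
        exact mul_le_of_le_one_right (abs_nonneg μ) hi1.le
      rw [norm_mul, norm_eq_abs, norm_eq_abs, passage, passage, one_mul, one_mul,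
        abs_of_nonneg (driftGaussian_nonneg ..)]
      gcongr
      · exact mul_nonneg (exp_pos _).le (driftGaussian_nonneg ..)
      · rw [driftGaussian_of_pos _ _ _ h, driftGaussian_of_pos _ _ _ h]
        have h3 : -(1 - 0 * σ) ^ 2 / (4 * d * σ) = -(1 ^ 2 / (4 * d * σ)) := by
          rw [zero_mul, sub_zero, neg_div]
        rw [h3]
        calc _ ≤ σ ^ (-(3 / 2 : ℝ)) *
              (exp (|μ| / (2 * d)) * exp (-(1 ^ 2 / (4 * d * σ)))) := by
              gcongr
              exact h1.trans (by gcongr)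
          _ = _ := by ring
      · exact hCi _ hτ
  · exact ((integrable_passage_zero hd zero_le_one).const_mul _).mul_const _
  · refine Eventually.of_forall fun σ => ?_
    rcases le_or_gt σ 0 with h | h
    · simpa [passage, driftGaussian_of_nonpos _ _ _ h] using tendsto_const_nhds
    · refine Tendsto.mul ?_ (hlim σ h)
      simp only [passage, driftGaussian_of_pos _ _ _ h]
      have hc : Continuous fun ν : ℝ =>
          1 * (σ ^ (-(3 / 2 : ℝ)) * exp (-(1 - μ * ν * σ) ^ 2 / (4 * d * σ))) := by fun_prop
      have := (hc.tendsto 0).comp hx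
      simpa [Function.comp_def] using this

/-- The response at depth `y` to boundary data `H` of the half-line advection–diffusion problem
(unnormalised). -/
noncomputable def response (d μ : ℝ) (H : ℝ → ℝ) (y s : ℝ) : ℝ :=
  ∫ w, passage d μ y w * H (s - w)

section Response

variable {d μ α T B : ℝ} {H : ℝ → ℝ}

lemma response_eq (hd : 0 < d) (hH0 : ∀ r, r ≤ 0 → H r = 0) {s : ℝ} (hs : s ≤ T) (y : ℝ) :
    response d μ H y s = ∫ r in Ioc 0 T, passage d μ y (s - r) * H r := by
  rw [setIntegral_eq_integral_of_forall_compl_eq_zero, response,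
    ← integral_sub_left_eq_self _ volume s]
  · simp
  · intro r hr
    rcases le_or_gt r 0 with h | h
    · rw [hH0 r h, mul_zero]
    · have : T < r := by
        by_contra! h'
        exact hr ⟨h, h'⟩
      rw [(flatKernel_passage hd μ).zero _ _ (by linarith), zero_mul]

lemma response_of_nonpos (hd : 0 < d) (hH0 : ∀ r, r ≤ 0 → H r = 0) {s : ℝ} (hs : s ≤ 0) (y : ℝ) :
    response d μ H y s = 0 := by
  rw [response_eq hd hH0 hs]
  simp

lemma measurable_response (hd : 0 < d) (hH : Continuous H) :
    Measurable (Function.uncurry (response d μ H)) := by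
  have h1 : Measurable fun q : (ℝ × ℝ) × ℝ => passage d μ q.1.1 q.2 :=
    (flatKernel_passage hd μ).meas.comp (f := fun q : (ℝ × ℝ) × ℝ => (q.1.1, q.2)) (by fun_prop)
  have h2 : Measurable fun q : (ℝ × ℝ) × ℝ => H (q.1.2 - q.2) :=
    hH.measurable.comp (by fun_prop)
  exact ((h1.mul h2).stronglyMeasurable.integral_prod_right' (ν := volume)).measurable

lemma abs_response_le (hd : 0 < d) (hB : ∀ r, |H r| ≤ B) (hH0 : ∀ r, r ≤ 0 → H r = 0)
    {s t : ℝ} (hs : s ≤ t) (y : ℝ) :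
    |response d μ H y s| ≤
      2 * √(π * (2 * d)) * B * exp (|μ| * |y| / (2 * d) - y ^ 2 / (8 * d * t)) :=
  abs_integral_passage_mul_le hd μ y ((abs_nonneg _).trans (hB 0)) (fun _ _ _ => hB _)
    fun _ hτ => hH0 _ (by linarith)

lemma abs_response_le_of_abs_le (hd : 0 < d) (hB : ∀ r, |H r| ≤ B)
    (hH0 : ∀ r, r ≤ 0 → H r = 0) {s y Y : ℝ} (hy : |y| ≤ Y) :
    |response d μ H y s| ≤ 2 * √(π * (2 * d)) * B * exp (|μ| * Y / (2 * d)) := by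
  have hB0 : 0 ≤ B := (abs_nonneg _).trans (hB 0)
  rcases le_or_gt s 0 with hs | hs
  · rw [response_of_nonpos hd hH0 hs, abs_zero]; positivity
  refine (abs_response_le hd hB hH0 le_rfl y).trans ?_
  gcongr
  have : 0 ≤ y ^ 2 / (8 * d * s) := by positivity
  have : |μ| * |y| / (2 * d) ≤ |μ| * Y / (2 * d) := by gcongr
  linarith

lemma tendsto_response (hd : 0 < d) (hH : Continuous H) (hB : ∀ r, |H r| ≤ B) {ι : Type*}
    {l : Filter ι} [l.IsCountablyGenerated] {y s : ι → ℝ} {s₀ : ℝ} (hy : Tendsto y l (nhds 0))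
    (hpos : ∀ᶠ i in l, 0 < y i) (hs : Tendsto s l (nhds s₀)) :
    Tendsto (fun i => response d μ H (y i) (s i)) l (nhds (2 * √(π * d) * H s₀)) := by
  refine tendsto_integral_passage_mul hd μ hy hpos (Φ := fun i w => H (s i - w)) (C := B)
    (fun i => hH.measurable.comp (by fun_prop)) (Eventually.of_forall fun i τ _ => hB _)
    fun σ _ => ?_
  have : Tendsto (fun i => s i - y i ^ 2 * σ) l (nhds s₀) := by
    simpa using hs.sub ((hy.pow 2).mul_const σ)
  exact (hH.tendsto s₀).comp this

lemma hasDerivAt_response (hd : 0 < d) (hH : Continuous H) (hB : ∀ r, |H r| ≤ B)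
    (hH0 : ∀ r, r ≤ 0 → H r = 0) {s y : ℝ} (hs : s ≤ T) (hy : 0 < y) :
    HasDerivAt (fun y => response d μ H y s)
      (∫ r in Ioc 0 T, passageX d μ y (s - r) * H r) y := by
  have hB0 : 0 ≤ B := (abs_nonneg _).trans (hB 0)
  simp only [response_eq hd hH0 hs]
  have meas : ∀ {D : ℝ → ℝ → ℝ}, FlatKernel D → ∀ y,
      AEStronglyMeasurable (fun r => D y (s - r) * H r) (volume.restrict (Ioc 0 T)) :=
    fun hD y => ((hD.meas.comp (f := fun r : ℝ => (y, s - r)) (by fun_prop)).mul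
      hH.measurable).aestronglyMeasurable
  obtain ⟨C₀, hC₀0, hC₀⟩ := (flatKernel_passage hd μ).abs_mul_pow_le y T
  obtain ⟨C, hC0, hC⟩ := (flatKernel_passageX hd μ).abs_mul_pow_le (y + 1) T
  refine (hasDerivAt_integral_of_dominated_loc_of_deriv_le (s := Ioo (y / 2) (y + 1))
    (bound := fun _ => C / (y / 2) ^ 8 * B) (F' := fun y r => passageX d μ y (s - r) * H r)
    (Ioo_mem_nhds (half_lt_self hy) (lt_add_one y))
    (Eventually.of_forall fun y => meas (flatKernel_passage hd μ) y) ?_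
    (meas (flatKernel_passageX hd μ) y) ?_ (integrable_const _) ?_).2
  · refine (integrable_const (C₀ / y ^ 8 * B)).mono' (meas (flatKernel_passage hd μ) y) ?_
    filter_upwards [ae_restrict_mem measurableSet_Ioc] with r hr
    rw [norm_mul, norm_eq_abs, norm_eq_abs]
    gcongr
    · rw [le_div_iff₀ (by positivity)]
      exact hC₀ y (s - r) hy le_rfl (by linarith [hr.1])
    · exact hB r
  · filter_upwards [ae_restrict_mem measurableSet_Ioc] with r hr v hv
    have hv0 : 0 < v := (half_pos hy).trans hv.1
    rw [norm_mul, norm_eq_abs, norm_eq_abs]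
    gcongr
    · rw [le_div_iff₀ (by positivity)]
      refine le_trans ?_ (hC v (s - r) hv0 hv.2.le (by linarith [hr.1]))
      gcongr
      exact hv.1.le
    · exact hB r
  · filter_upwards with r v hv
    have := hasDerivAt_passage hd μ (hasDerivAt_id v) (hasDerivAt_const v (s - r))
      ((half_pos hy).trans hv.1)
    simpa using this.mul_const (H r)

lemma abs_integral_passageX_le (hd : 0 < d) (hB : ∀ r, |H r| ≤ B) (hT : 0 < T) (Y : ℝ) :
    ∃ C, 0 ≤ C ∧ ∀ y s, 0 < y → y ≤ Y → s ≤ T →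
      |∫ r in Ioc 0 T, passageX d μ y (s - r) * H r| ≤ C / y ^ 8 := by
  have hB0 : 0 ≤ B := (abs_nonneg _).trans (hB 0)
  obtain ⟨C, hC0, hC⟩ := (flatKernel_passageX hd μ).abs_mul_pow_le (D₂ := passageX d μ) Y T
  refine ⟨C * B * T, by positivity, fun y s hy hY hs => ?_⟩
  have := norm_setIntegral_le_of_norm_le_const (μ := volume) (s := Ioc 0 T)
    (f := fun r => passageX d μ y (s - r) * H r) (C := C / y ^ 8 * B) (by simp) ?_
  · refine this.trans (le_of_eq ?_)
    simp [hT.le]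
    ring
  · intro r hr
    rw [norm_mul, norm_eq_abs, norm_eq_abs]
    gcongr
    · rw [le_div_iff₀ (by positivity)]
      exact hC y (s - r) hy hY (by linarith [hr.1])
    · exact hB r

lemma cascade_eq_integral_response {D₁ : ℝ → ℝ → ℝ} (h₁ : FlatKernel D₁) (hd : 0 < d)
    (hα : 0 < α) (hH : Continuous H) (hB : ∀ r, |H r| ≤ B) (hH0 : ∀ r, r ≤ 0 → H r = 0)
    {x z t : ℝ} (hx : 0 < x) (hz : 0 ≤ z) (ht : t ≤ T) :
    cascade α T H D₁ (passage d μ) x z t =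
      ∫ τ in Ioc 0 T, D₁ x τ * response d μ H (z + α * τ) (t - τ) := by
  rw [cascade, integral_prod _ (h₁.integrable_cascade (flatKernel_passage hd μ) hα hH hB hx hz ht)]
  refine setIntegral_congr_fun measurableSet_Ioc fun τ hτ => ?_
  simp only [mul_assoc]
  rw [integral_const_mul, response_eq hd hH0 (by linarith [hτ.1] : t - τ ≤ T)]

/-- Differentiation under the integral sign at the boundary `z = 0`, where the response itself is
discontinuous but the first kernel is flat. -/
lemma hasDerivAt_integral_response_zero {D₁ : ℝ → ℝ → ℝ} (h₁ : FlatKernel D₁) (hd : 0 < d)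
    (hα : 0 < α) (hH : Continuous H) (hB : ∀ r, |H r| ≤ B) (hH0 : ∀ r, r ≤ 0 → H r = 0)
    {x t : ℝ} (hx : 0 < x) (ht : t ≤ T) (hT : 0 < T) :
    HasDerivAt (fun z => ∫ τ in Ioc 0 T, D₁ x τ * response d μ H (z + α * τ) (t - τ))
      (cascade α T H D₁ (passageX d μ) x 0 t) 0 := by
  have hB0 : 0 ≤ B := (abs_nonneg _).trans (hB 0)
  have hX := flatKernel_passageX hd μ
  have iX := h₁.integrable_cascade hX hα hH hB hx le_rfl ht
  rw [cascade, integral_prod _ iX]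
  simp only [mul_assoc, integral_const_mul]
  have iX' := iX.integral_prod_left
  simp only [mul_assoc, integral_const_mul] at iX'
  set F' : ℝ → ℝ := fun τ =>
    D₁ x τ * ∫ r in Ioc 0 T, passageX d μ (0 + α * τ) (t - τ - r) * H r with hF'
  set F : ℝ → ℝ → ℝ := fun z τ => D₁ x τ * response d μ H (z + α * τ) (t - τ) with hF
  have hFmeas : ∀ z, Measurable (F z) := fun z =>
    (h₁.meas.comp (f := fun τ : ℝ => (x, τ)) (by fun_prop)).mul
      ((measurable_response hd hH).comp (f := fun τ : ℝ => (z + α * τ, t - τ)) (by fun_prop))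
  have hFint : Integrable (F 0) (volume.restrict (Ioc 0 T)) := by
    have := (h₁.integrable_cascade (flatKernel_passage hd μ) hα hH hB hx le_rfl ht).integral_prod_left
    refine this.congr ?_
    filter_upwards [ae_restrict_mem measurableSet_Ioc] with τ hτ
    simp only [mul_assoc, hF]
    rw [integral_const_mul, response_eq hd hH0 (by linarith [hτ.1] : t - τ ≤ T)]
  have hder : ∀ τ, 0 < τ → HasDerivAt (fun z => F z τ) (F' τ) 0 := by
    intro τ hτ
    have hpos : 0 < 0 + α * τ := by positivity
    exact ((hasDerivAt_response hd hH hB hH0 (by linarith : t - τ ≤ T) hpos).comp_add_const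
      0 (α * τ)).const_mul _
  obtain ⟨C₁, hC₁0, hC₁⟩ := h₁.abs_le_pow hx x T 9
  obtain ⟨C₂, hC₂0, hC₂⟩ := abs_integral_passageX_le (μ := μ) hd hB hT (2 * α * T)
  set M := 2 * √(π * (2 * d)) * B * exp (|μ| * (1 + α * T) / (2 * d)) with hM
  have hM0 : 0 ≤ M := by positivity
  have hlip : ∀ τ ∈ Ioc 0 T, ∀ z ∈ Ioo (-1 : ℝ) 1,
      ‖F z τ - F 0 τ‖ ≤ (C₁ * C₂ * (2 / α) ^ 8 * T + C₁ * T ^ 8 * (4 * M / α)) * ‖z - 0‖ := by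
    intro τ hτ z hz
    have hτ0 : 0 < τ := hτ.1
    have hατ : 0 < α * τ := mul_pos hα hτ0
    have hατT : α * τ ≤ α * T := by gcongr; exact hτ.2
    have hs : t - τ ≤ T := by linarith
    have e₁ := hC₁ x τ le_rfl le_rfl hτ0 hτ.2
    rw [hF]
    simp only
    rw [← mul_sub, norm_mul, norm_eq_abs, sub_zero]
    rcases le_or_gt |z| (α * τ / 2) with h | h
    · have hz' := abs_le.1 h
      have hmv := (convex_Icc (α * τ / 2) (2 * (α * τ))).norm_image_sub_le_of_norm_hasDerivWithin_le
        (f := fun y => response d μ H y (t - τ)) (C := C₂ / (α * τ / 2) ^ 8)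
        (fun y hy => (hasDerivAt_response hd hH hB hH0 hs
          ((half_pos hατ).trans_le hy.1)).hasDerivWithinAt)
        (fun y hy => ?_) (x := 0 + α * τ) (y := z + α * τ)
        ⟨by linarith, by linarith⟩ ⟨by linarith, by linarith⟩
      · calc _ ≤ C₁ * τ ^ 9 * (C₂ / (α * τ / 2) ^ 8 * ‖z‖) := by
              gcongr
              simpa using hmv
          _ = C₁ * C₂ * (2 / α) ^ 8 * τ * ‖z‖ := by field_simp
          _ ≤ (C₁ * C₂ * (2 / α) ^ 8 * T) * ‖z‖ := by gcongr; exact hτ.2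
          _ ≤ _ := by
              gcongr
              exact le_add_of_nonneg_right (by positivity)
      · have hy0 : 0 < y := (half_pos hατ).trans_le hy.1
        refine (hC₂ y (t - τ) hy0 (by linarith [hy.2]) hs).trans ?_
        gcongr
        exact hy.1
    · have hz1 : |z| < 1 := abs_lt.2 hz
      have hM1 : |response d μ H (z + α * τ) (t - τ)| ≤ M := by
        refine abs_response_le_of_abs_le hd hB hH0 ((abs_add_le _ _).trans ?_)
        rw [abs_of_pos hατ]
        linarith
      have hM2 : |response d μ H (0 + α * τ) (t - τ)| ≤ M := by
        refine abs_response_le_of_abs_le hd hB hH0 ?_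
        rw [zero_add, abs_of_pos hατ]
        linarith
      have hz2 : 1 ≤ 2 * |z| / (α * τ) := by
        rw [le_div_iff₀ hατ]
        linarith
      calc _ ≤ C₁ * τ ^ 9 * (2 * M) := by
            gcongr
            refine (norm_sub_le _ _).trans ?_
            rw [norm_eq_abs, norm_eq_abs]
            linarith
        _ ≤ C₁ * τ ^ 9 * (2 * M) * (2 * |z| / (α * τ)) :=
            le_mul_of_one_le_right (by positivity) hz2
        _ = C₁ * τ ^ 8 * (4 * M / α) * ‖z‖ := by
            rw [norm_eq_abs]
            field_simp
            ring
        _ ≤ (C₁ * T ^ 8 * (4 * M / α)) * ‖z‖ := by gcongr; exact hτ.2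
        _ ≤ _ := by
            gcongr
            exact le_add_of_nonneg_left (by positivity)
  set L : ℝ →L[ℝ] ℝ →L[ℝ] ℝ := ContinuousLinearMap.smulRightL ℝ ℝ ℝ 1 with hL
  have key := (hasFDerivAt_integral_of_dominated_loc_of_lip' (F := F) (F' := fun τ => L (F' τ))
    (μ := volume.restrict (Ioc 0 T))
    (Ioo_mem_nhds (by norm_num : (-1 : ℝ) < 0) one_pos)
    (fun z _ => (hFmeas z).aestronglyMeasurable) hFint
    (L.continuous.comp_aestronglyMeasurable iX'.aestronglyMeasurable)
    ((ae_restrict_mem measurableSet_Ioc).mono hlip) (integrable_const _)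
    ((ae_restrict_mem measurableSet_Ioc).mono fun τ hτ => (hder τ hτ.1).hasFDerivAt)).2
  rw [ContinuousLinearMap.integral_comp_comm _ iX'] at key
  simpa [hL] using key.hasDerivAt

end Response

/-- First passage through depth `x`, followed by the response at depth `z + α τ` (unnormalised). -/
noncomputable def lumped (d₁ μ₁ d₂ μ₂ α : ℝ) (H : ℝ → ℝ) (x z t : ℝ) : ℝ :=
  ∫ τ, passage d₁ μ₁ x τ * response d₂ μ₂ H (z + α * τ) (t - τ)

section Lumped

variable {d₁ μ₁ d₂ μ₂ α T B : ℝ} {H : ℝ → ℝ}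

lemma lumped_eq_setIntegral (hd₁ : 0 < d₁) (hd₂ : 0 < d₂) (hH0 : ∀ r, r ≤ 0 → H r = 0) {t : ℝ}
    (ht : t ≤ T) (x z : ℝ) :
    lumped d₁ μ₁ d₂ μ₂ α H x z t =
      ∫ τ in Ioc 0 T, passage d₁ μ₁ x τ * response d₂ μ₂ H (z + α * τ) (t - τ) := by
  rw [setIntegral_eq_integral_of_forall_compl_eq_zero, lumped]
  intro τ hτ
  rcases le_or_gt τ 0 with h | h
  · rw [(flatKernel_passage hd₁ μ₁).zero _ _ h, zero_mul]
  · have : T < τ := by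
      by_contra! h'
      exact hτ ⟨h, h'⟩
    rw [response_of_nonpos hd₂ hH0 (by linarith), mul_zero]

lemma lumped_eq_cascade (hd₁ : 0 < d₁) (hd₂ : 0 < d₂) (hα : 0 < α) (hH : Continuous H)
    (hB : ∀ r, |H r| ≤ B) (hH0 : ∀ r, r ≤ 0 → H r = 0) {x z t : ℝ} (hx : 0 < x) (hz : 0 ≤ z)
    (ht : t ≤ T) :
    lumped d₁ μ₁ d₂ μ₂ α H x z t = cascade α T H (passage d₁ μ₁) (passage d₂ μ₂) x z t := by
  rw [cascade_eq_integral_response (flatKernel_passage hd₁ μ₁) hd₂ hα hH hB hH0 hx hz ht,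
    lumped_eq_setIntegral hd₁ hd₂ hH0 ht]

lemma hasDerivAt_passage_fst {d : ℝ} (hd : 0 < d) (μ : ℝ) {x : ℝ} (w : ℝ) (hx : 0 < x) :
    HasDerivAt (fun x => passage d μ x w) (passageX d μ x w) x := by
  simpa using hasDerivAt_passage hd μ (hasDerivAt_id x) (hasDerivAt_const x w) hx

lemma hasDerivAt_passage_snd {d : ℝ} (hd : 0 < d) (μ : ℝ) {x : ℝ} (w : ℝ) (hx : 0 < x) :
    HasDerivAt (fun w => passage d μ x w) (passageW d μ x w) w := by
  simpa using hasDerivAt_passage hd μ (hasDerivAt_const w x) (hasDerivAt_id w) hx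

lemma hasDerivAt_lumped_t (hd₁ : 0 < d₁) (hd₂ : 0 < d₂) (hα : 0 < α) (hH : Continuous H)
    (hB : ∀ r, |H r| ≤ B) (hH0 : ∀ r, r ≤ 0 → H r = 0) {x z t : ℝ} (hx : 0 < x) (hz : 0 ≤ z)
    (ht : t < T) :
    HasDerivAt (fun t => lumped d₁ μ₁ d₂ μ₂ α H x z t)
      (cascade α T H (passage d₁ μ₁) (passageW d₂ μ₂) x z t) t := by
  refine (hasDerivAt_cascade_t (flatKernel_passage hd₁ μ₁) (flatKernel_passage hd₂ μ₂)
    (flatKernel_passageW hd₂ μ₂) hα hH hB (fun _ w hy => hasDerivAt_passage_snd hd₂ μ₂ w hy)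
    hx hz ht).congr_of_eventuallyEq ?_
  filter_upwards [Iio_mem_nhds ht] with s hs
  exact lumped_eq_cascade hd₁ hd₂ hα hH hB hH0 hx hz (le_of_lt hs)

lemma deriv_lumped_z (hd₁ : 0 < d₁) (hd₂ : 0 < d₂) (hα : 0 < α) (hH : Continuous H)
    (hB : ∀ r, |H r| ≤ B) (hH0 : ∀ r, r ≤ 0 → H r = 0) {x z t : ℝ} (hx : 0 < x) (hz : 0 < z)
    (ht : t ≤ T) :
    deriv (fun z => lumped d₁ μ₁ d₂ μ₂ α H x z t) z =
      cascade α T H (passage d₁ μ₁) (passageX d₂ μ₂) x z t := by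
  refine ((hasDerivAt_cascade_z (flatKernel_passage hd₁ μ₁) (flatKernel_passage hd₂ μ₂)
    (flatKernel_passageX hd₂ μ₂) hα hH hB (fun _ w hy => hasDerivAt_passage_fst hd₂ μ₂ w hy)
    hx hz ht).congr_of_eventuallyEq ?_).deriv
  filter_upwards [Ioi_mem_nhds hz] with s hs
  exact lumped_eq_cascade hd₁ hd₂ hα hH hB hH0 hx (le_of_lt hs) ht

lemma deriv_lumped_x (hd₁ : 0 < d₁) (hd₂ : 0 < d₂) (hα : 0 < α) (hH : Continuous H)
    (hB : ∀ r, |H r| ≤ B) (hH0 : ∀ r, r ≤ 0 → H r = 0) {x z t : ℝ} (hx : 0 < x) (hz : 0 ≤ z)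
    (ht : t ≤ T) :
    deriv (fun x => lumped d₁ μ₁ d₂ μ₂ α H x z t) x =
      cascade α T H (passageX d₁ μ₁) (passage d₂ μ₂) x z t := by
  refine ((hasDerivAt_cascade_x (flatKernel_passage hd₁ μ₁) (flatKernel_passageX hd₁ μ₁)
    (flatKernel_passage hd₂ μ₂) hα hH hB (fun _ w hy => hasDerivAt_passage_fst hd₁ μ₁ w hy)
    hx hz ht).congr_of_eventuallyEq ?_).deriv
  filter_upwards [Ioi_mem_nhds hx] with s hs
  exact lumped_eq_cascade hd₁ hd₂ hα hH hB hH0 hs hz ht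

lemma iteratedDeriv_two_lumped_z (hd₁ : 0 < d₁) (hd₂ : 0 < d₂) (hα : 0 < α) (hH : Continuous H)
    (hB : ∀ r, |H r| ≤ B) (hH0 : ∀ r, r ≤ 0 → H r = 0) {x z t : ℝ} (hx : 0 < x) (hz : 0 < z)
    (ht : t ≤ T) :
    iteratedDeriv 2 (fun z => lumped d₁ μ₁ d₂ μ₂ α H x z t) z =
      cascade α T H (passage d₁ μ₁) (passageXX d₂ μ₂) x z t := by
  rw [iteratedDeriv_succ, iteratedDeriv_one]
  refine ((hasDerivAt_cascade_z (flatKernel_passage hd₁ μ₁) (flatKernel_passageX hd₂ μ₂)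
    (flatKernel_passageXX hd₂ μ₂) hα hH hB (fun y w _ => hasDerivAt_passageX hd₂ μ₂ y w)
    hx hz ht).congr_of_eventuallyEq ?_).deriv
  filter_upwards [Ioi_mem_nhds hz] with s hs
  exact deriv_lumped_z hd₁ hd₂ hα hH hB hH0 hx hs ht

lemma iteratedDeriv_two_lumped_x (hd₁ : 0 < d₁) (hd₂ : 0 < d₂) (hα : 0 < α) (hH : Continuous H)
    (hB : ∀ r, |H r| ≤ B) (hH0 : ∀ r, r ≤ 0 → H r = 0) {x z t : ℝ} (hx : 0 < x) (hz : 0 ≤ z)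
    (ht : t ≤ T) :
    iteratedDeriv 2 (fun x => lumped d₁ μ₁ d₂ μ₂ α H x z t) x =
      cascade α T H (passageXX d₁ μ₁) (passage d₂ μ₂) x z t := by
  rw [iteratedDeriv_succ, iteratedDeriv_one]
  refine ((hasDerivAt_cascade_x (flatKernel_passageX hd₁ μ₁) (flatKernel_passageXX hd₁ μ₁)
    (flatKernel_passage hd₂ μ₂) hα hH hB (fun y w _ => hasDerivAt_passageX hd₁ μ₁ y w)
    hx hz ht).congr_of_eventuallyEq ?_).deriv
  filter_upwards [Ioi_mem_nhds hx] with s hs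
  exact deriv_lumped_x hd₁ hd₂ hα hH hB hH0 hs hz ht

/-- The interior advection–diffusion equation. -/
lemma deriv_lumped_interior (hd₁ : 0 < d₁) (hd₂ : 0 < d₂) (hα : 0 < α) (hH : Continuous H)
    (hB : ∀ r, |H r| ≤ B) (hH0 : ∀ r, r ≤ 0 → H r = 0) {x z : ℝ} (t : ℝ) (hx : 0 < x)
    (hz : 0 < z) :
    deriv (fun t => lumped d₁ μ₁ d₂ μ₂ α H x z t) t =
      d₂ * iteratedDeriv 2 (fun z => lumped d₁ μ₁ d₂ μ₂ α H x z t) z -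
        μ₂ * deriv (fun z => lumped d₁ μ₁ d₂ μ₂ α H x z t) z := by
  have hT : t < t + 1 := lt_add_one t
  rw [(hasDerivAt_lumped_t hd₁ hd₂ hα hH hB hH0 hx hz.le hT).deriv,
    iteratedDeriv_two_lumped_z hd₁ hd₂ hα hH hB hH0 hx hz hT.le,
    deriv_lumped_z hd₁ hd₂ hα hH hB hH0 hx hz hT.le,
    cascade_passageW hd₂ μ₂ (flatKernel_passage hd₁ μ₁) hα hH hB hx hz.le hT.le]

lemma cascade_passageW_fst {d : ℝ} {D₂ : ℝ → ℝ → ℝ} (hd : 0 < d) (μ : ℝ) (h₂ : FlatKernel D₂)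
    (hα : 0 < α) (hH : Continuous H) (hB : ∀ r, |H r| ≤ B) {x z t : ℝ} (hx : 0 < x) (hz : 0 ≤ z)
    (ht : t ≤ T) :
    cascade α T H (passageW d μ) D₂ x z t =
      d * cascade α T H (passageXX d μ) D₂ x z t - μ * cascade α T H (passageX d μ) D₂ x z t := by
  have i₁ := (flatKernel_passageXX hd μ).integrable_cascade h₂ hα hH hB hx hz ht
  have i₂ := (flatKernel_passageX hd μ).integrable_cascade h₂ hα hH hB hx hz ht
  unfold cascade
  rw [← integral_const_mul, ← integral_const_mul, ← integral_sub (i₁.const_mul d) (i₂.const_mul μ)]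
  congr 1 with p
  rw [passageW_eq hd]
  ring

/-- The dynamic boundary condition on `z = 0`. -/
lemma deriv_lumped_boundary (hd₁ : 0 < d₁) (hd₂ : 0 < d₂) (hα : 0 < α) (hH : Continuous H)
    (hB : ∀ r, |H r| ≤ B) (hH0 : ∀ r, r ≤ 0 → H r = 0) {x t : ℝ} (hx : 0 < x) (ht : 0 < t) :
    deriv (fun t => lumped d₁ μ₁ d₂ μ₂ α H x 0 t) t =
      d₁ * iteratedDeriv 2 (fun x => lumped d₁ μ₁ d₂ μ₂ α H x 0 t) x -
        μ₁ * deriv (fun x => lumped d₁ μ₁ d₂ μ₂ α H x 0 t) x +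
        α * deriv (fun z => lumped d₁ μ₁ d₂ μ₂ α H x z t) 0 := by
  have hT : t < t + 1 := lt_add_one t
  have hT0 : 0 < t + 1 := ht.trans hT
  have hz := (hasDerivAt_integral_response_zero (flatKernel_passage hd₁ μ₁) hd₂ (μ := μ₂) hα hH hB
    hH0 hx hT.le hT0).deriv
  simp only [← lumped_eq_setIntegral hd₁ hd₂ hH0 hT.le] at hz
  rw [(hasDerivAt_lumped_t hd₁ hd₂ hα hH hB hH0 hx le_rfl hT).deriv,
    iteratedDeriv_two_lumped_x hd₁ hd₂ hα hH hB hH0 hx le_rfl hT.le,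
    deriv_lumped_x hd₁ hd₂ hα hH hB hH0 hx le_rfl hT.le, hz,
    cascade_boundary hd₁ hd₂ μ₁ μ₂ hα hH hB hx hT.le hT0,
    cascade_passageW_fst hd₁ μ₁ (flatKernel_passage hd₂ μ₂) hα hH hB hx le_rfl hT.le]

/-- The boundary value at the corner. -/
lemma tendsto_lumped_corner (hd₁ : 0 < d₁) (hd₂ : 0 < d₂) (hα : 0 < α) (hH : Continuous H)
    (hB : ∀ r, |H r| ≤ B) (hH0 : ∀ r, r ≤ 0 → H r = 0) (t : ℝ) :
    Tendsto (fun w : ℝ × ℝ => lumped d₁ μ₁ d₂ μ₂ α H w.1 w.2 t)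
      (nhdsWithin (0, 0) (Ioi (0 : ℝ) ×ˢ Ioi (0 : ℝ)))
      (nhds (2 * √(π * d₁) * (2 * √(π * d₂) * H t))) := by
  have hB0 : 0 ≤ B := (abs_nonneg _).trans (hB 0)
  set l := nhdsWithin ((0, 0) : ℝ × ℝ) (Ioi (0 : ℝ) ×ˢ Ioi (0 : ℝ)) with hl
  have h1 : Tendsto (fun w : ℝ × ℝ => w.1) l (nhds 0) :=
    (continuous_fst.tendsto ((0, 0) : ℝ × ℝ)).mono_left nhdsWithin_le_nhds
  have h2 : Tendsto (fun w : ℝ × ℝ => w.2) l (nhds 0) :=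
    (continuous_snd.tendsto ((0, 0) : ℝ × ℝ)).mono_left nhdsWithin_le_nhds
  have hpos : ∀ᶠ w : ℝ × ℝ in l, w ∈ Ioi (0 : ℝ) ×ˢ Ioi (0 : ℝ) := self_mem_nhdsWithin
  refine tendsto_integral_passage_mul hd₁ μ₁ h1 (hpos.mono fun w hw => hw.1)
    (Φ := fun w τ => response d₂ μ₂ H (w.2 + α * τ) (t - τ))
    (C := 2 * √(π * (2 * d₂)) * B * exp (|μ₂| * (1 + α * t) / (2 * d₂))) (fun w => ?_) ?_
    fun σ hσ => ?_
  · exact (measurable_response (μ := μ₂) hd₂ hH).comp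
      (f := fun τ : ℝ => (w.2 + α * τ, t - τ)) (by fun_prop)
  · filter_upwards [hpos, h2.eventually (Iio_mem_nhds one_pos)] with w hw hw1 τ hτ
    rcases le_or_gt t τ with h | h
    · rw [response_of_nonpos hd₂ hH0 (by linarith), abs_zero]
      positivity
    · have hw2 : 0 < w.2 := hw.2
      have hw1 : w.2 < 1 := hw1
      refine abs_response_le_of_abs_le hd₂ hB hH0 ?_
      rw [abs_of_pos (by positivity)]
      gcongr
  · have hq : Tendsto (fun w : ℝ × ℝ => w.1 ^ 2 * σ) l (nhds 0) := by
      simpa using (h1.pow 2).mul_const σ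
    refine tendsto_response hd₂ hH hB ?_ ?_ ?_
    · simpa using h2.add (hq.const_mul α)
    · filter_upwards [hpos] with w hw
      have hw1 : 0 < w.1 := hw.1
      have hw2 : 0 < w.2 := hw.2
      positivity
    · simpa using hq.const_sub t

lemma abs_lumped_le (hd₁ : 0 < d₁) (hd₂ : 0 < d₂) (hα : 0 < α)
    (hB : ∀ r, |H r| ≤ B) (hH0 : ∀ r, r ≤ 0 → H r = 0) {x z t : ℝ} (hx : 0 < x) (hz : 0 < z)
    (ht : 0 < t) :
    |lumped d₁ μ₁ d₂ μ₂ α H x z t| ≤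
      2 * √(π * (2 * d₁)) * (2 * √(π * (2 * d₂)) * B *
        exp (|μ₂| * (z + α * t) / (2 * d₂) - z ^ 2 / (8 * d₂ * t))) *
        exp (|μ₁| * x / (2 * d₁) - x ^ 2 / (8 * d₁ * t)) := by
  have hB0 : 0 ≤ B := (abs_nonneg _).trans (hB 0)
  conv_rhs => rw [← abs_of_pos hx, sq_abs]
  refine abs_integral_passage_mul_le hd₁ μ₁ x (by positivity) (fun τ hτ hτt => ?_)
    fun τ hτ => response_of_nonpos hd₂ hH0 (by linarith) _
  refine (abs_response_le hd₂ hB hH0 (t := t) (by linarith) _).trans ?_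
  rw [abs_of_pos (show 0 < z + α * τ by positivity)]
  gcongr
  nlinarith [mul_pos hα hτ]

/-- Decay at spatial infinity. -/
lemma tendsto_lumped_infinity (hd₁ : 0 < d₁) (hd₂ : 0 < d₂) (hα : 0 < α)
    (hB : ∀ r, |H r| ≤ B) (hH0 : ∀ r, r ≤ 0 → H r = 0) {t : ℝ} (ht : 0 < t) :
    Tendsto (fun w : ℝ × ℝ => lumped d₁ μ₁ d₂ μ₂ α H w.1 w.2 t)
      ((comap (fun w : ℝ × ℝ => w.1 ^ 2 + w.2 ^ 2) atTop) ⊓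
        𝓟 (Ioi (0 : ℝ) ×ˢ Ioi (0 : ℝ))) (nhds 0) := by
  have hB0 : 0 ≤ B := (abs_nonneg _).trans (hB 0)
  -- a linear term is absorbed by half of the quadratic one
  have absorb : ∀ {d : ℝ}, 0 < d → ∀ m y : ℝ,
      m * y / (2 * d) - y ^ 2 / (8 * d * t) ≤ m ^ 2 * t / d - y ^ 2 / (16 * d * t) := by
    intro d hd m y
    have : m ^ 2 * t / d - y ^ 2 / (16 * d * t) - (m * y / (2 * d) - y ^ 2 / (8 * d * t)) =
        (4 * m * t - y) ^ 2 / (16 * d * t) := by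
      field_simp
      ring
    have h2 : 0 ≤ (4 * m * t - y) ^ 2 / (16 * d * t) := by positivity
    linarith
  set κ := 1 / (16 * (d₁ + d₂) * t) with hκ
  have hκ0 : 0 < κ := by positivity
  have weaken₁ : ∀ y : ℝ, κ * y ^ 2 ≤ y ^ 2 / (16 * d₁ * t) := fun y => by
    rw [hκ, div_mul_eq_mul_div, one_mul]
    gcongr
    linarith
  have weaken₂ : ∀ y : ℝ, κ * y ^ 2 ≤ y ^ 2 / (16 * d₂ * t) := fun y => by
    rw [hκ, div_mul_eq_mul_div, one_mul]
    gcongr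
    linarith
  set K := 2 * √(π * (2 * d₁)) * (2 * √(π * (2 * d₂)) * B) with hK
  set M := |μ₂| * (α * t) / (2 * d₂) + |μ₂| ^ 2 * t / d₂ + |μ₁| ^ 2 * t / d₁ with hM
  have hbot : Tendsto (fun r : ℝ => K * exp (M - κ * r)) atTop (nhds 0) := by
    have : Tendsto (fun r : ℝ => M - κ * r) atTop atBot :=
      tendsto_const_nhds.add_atBot (tendsto_neg_atTop_atBot.comp (tendsto_id.const_mul_atTop hκ0))
    simpa using (tendsto_exp_atBot.comp this).const_mul K
  refine squeeze_zero_norm' ?_ ((hbot.comp tendsto_comap).mono_left inf_le_left)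
  filter_upwards [mem_inf_of_right (mem_principal_self _)] with w hw
  refine (abs_lumped_le hd₁ hd₂ hα hB hH0 hw.1 hw.2 ht).trans ?_
  rw [Function.comp_apply, hK, mul_assoc _ _ (exp _), mul_assoc _ (exp _) (exp _), ← exp_add,
    ← mul_assoc]
  gcongr
  have e₁ := absorb hd₁ |μ₁| w.1
  have e₂ := absorb hd₂ |μ₂| w.2
  have e₃ := weaken₁ w.1
  have e₄ := weaken₂ w.2
  have e₅ : |μ₂| * (w.2 + α * t) / (2 * d₂) =
      |μ₂| * w.2 / (2 * d₂) + |μ₂| * (α * t) / (2 * d₂) := by ring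
  rw [e₅, hM]
  linarith

/-- Vanishing at the initial time. -/
lemma tendsto_lumped_initial (hd₁ : 0 < d₁) (hd₂ : 0 < d₂) (hα : 0 < α)
    (hB : ∀ r, |H r| ≤ B) (hH0 : ∀ r, r ≤ 0 → H r = 0) {x z : ℝ} (hx : 0 < x) (hz : 0 < z) :
    Tendsto (fun t => lumped d₁ μ₁ d₂ μ₂ α H x z t) (nhdsWithin 0 (Ioi 0)) (nhds 0) := by
  have hB0 : 0 ≤ B := (abs_nonneg _).trans (hB 0)
  set K := 2 * √(π * (2 * d₁)) * (2 * √(π * (2 * d₂)) * B *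
    exp (|μ₂| * (z + α) / (2 * d₂))) with hK
  have hlim : Tendsto (fun t : ℝ => K * exp (|μ₁| * x / (2 * d₁) - x ^ 2 / (8 * d₁) * t⁻¹))
      (nhdsWithin 0 (Ioi 0)) (nhds 0) := by
    have : Tendsto (fun t : ℝ => |μ₁| * x / (2 * d₁) - x ^ 2 / (8 * d₁) * t⁻¹)
        (nhdsWithin 0 (Ioi 0)) atBot :=
      tendsto_const_nhds.add_atBot (tendsto_neg_atTop_atBot.comp
        (tendsto_inv_nhdsGT_zero.const_mul_atTop (by positivity)))
    simpa using (tendsto_exp_atBot.comp this).const_mul K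
  refine squeeze_zero_norm' ?_ hlim
  filter_upwards [Ioo_mem_nhdsGT one_pos] with t ht
  have ht0 : 0 < t := ht.1
  refine (abs_lumped_le hd₁ hd₂ hα hB hH0 hx hz ht.1).trans ?_
  have e : x ^ 2 / (8 * d₁) * t⁻¹ = x ^ 2 / (8 * d₁ * t) := by field_simp
  rw [e, hK]
  gcongr
  have h1 : 0 ≤ z ^ 2 / (8 * d₂ * t) := by positivity
  have h2 : |μ₂| * (z + α * t) / (2 * d₂) ≤ |μ₂| * (z + α) / (2 * d₂) := by
    gcongr
    nlinarith [ht.2]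
  linarith

/-- The iterated integral written out. -/
lemma lumped_eq_intervalIntegral (hd₁ : 0 < d₁) (hd₂ : 0 < d₂) (hH0 : ∀ r, r ≤ 0 → H r = 0) {t : ℝ}
    (ht : 0 ≤ t) (x z : ℝ) :
    lumped d₁ μ₁ d₂ μ₂ α H x z t =
      x * exp (μ₁ * x / (2 * d₁)) * ∫ τ in (0 : ℝ)..t, τ ^ (-(3 / 2 : ℝ)) *
        exp (-x ^ 2 / (4 * d₁ * τ) - μ₁ ^ 2 * τ / (4 * d₁)) *
        exp (μ₂ * (z + α * τ) / (2 * d₂)) * ((z + α * τ) *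
          ∫ w in (0 : ℝ)..(t - τ), w ^ (-(3 / 2 : ℝ)) *
            exp (-(z + α * τ) ^ 2 / (4 * d₂ * w)) * exp (-μ₂ ^ 2 * w / (4 * d₂)) *
            H (t - τ - w)) := by
  have inner : ∀ y s : ℝ, 0 ≤ s → response d₂ μ₂ H y s =
      exp (μ₂ * y / (2 * d₂)) * (y * ∫ w in (0 : ℝ)..s, w ^ (-(3 / 2 : ℝ)) *
        exp (-y ^ 2 / (4 * d₂ * w)) * exp (-μ₂ ^ 2 * w / (4 * d₂)) * H (s - w)) := by
    intro y s hs
    rw [intervalIntegral.integral_of_le hs, ← integral_const_mul, ← integral_const_mul, response,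
      ← setIntegral_eq_integral_of_forall_compl_eq_zero (s := Ioc 0 s)]
    · refine setIntegral_congr_fun measurableSet_Ioc fun w hw => ?_
      rw [passage, driftGaussian_of_pos _ _ _ hw.1, exp_drift_eq hd₂ hw.1]
      simp only [neg_div, neg_mul]
      ring
    · intro w hw
      rcases le_or_gt w 0 with h | h
      · rw [(flatKernel_passage hd₂ μ₂).zero _ _ h, zero_mul]
      · have : s < w := by
          by_contra! h'
          exact hw ⟨h, h'⟩
        rw [hH0 _ (by linarith), mul_zero]
  rw [lumped_eq_setIntegral hd₁ hd₂ hH0 le_rfl, intervalIntegral.integral_of_le ht,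
    ← integral_const_mul]
  refine setIntegral_congr_fun measurableSet_Ioc fun τ hτ => ?_
  rw [inner _ _ (sub_nonneg.2 hτ.2), passage, driftGaussian_of_pos _ _ _ hτ.1,
    exp_drift_eq hd₁ hτ.1, sub_eq_add_neg (-x ^ 2 / _), exp_add]
  simp only [neg_div]
  ring

end Lumped

/-- Special case of Theorem 1 with `2β = 1` (classical incomplete lumped formulation,
linear case): the function
`u(x,z,t) = (A x e^{γx}/(4aπ)) ∫_0^t τ^{−3/2} e^{−x²/(4τ)−γ²τ} e^{λ(z+ατ)/(2a²)}
  [ (z+ατ) ∫_0^{t−τ} w^{−3/2} e^{−(z+ατ)²/(4a²w)} e^{−λ²w/(4a²)} h(t−τ−w) dw ] dτ`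
solves the classical boundary value problem (1.1)–(1.3) (with data `A h(t)`). -/
theorem classical_incomplete_lumped_linear
    (a lam α γ A : ℝ) (ha : 0 < a) (hlam : 0 < lam) (hα : 0 < α) (hγ : 0 < γ)
    (hA : 0 < A)
    (h : ℝ → ℝ) (hcont : ContinuousOn h (Ici 0))
    (hbdd : ∃ Cb : ℝ, ∀ t : ℝ, 0 ≤ t → |h t| ≤ Cb) (h0 : h 0 = 0)
    (u : ℝ → ℝ → ℝ → ℝ)
    (hu : ∀ x z t : ℝ, u x z t =
      (A * x * Real.exp (γ * x) / (4 * a * π)) *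
        ∫ τ in (0 : ℝ)..t, τ ^ (-(3 / 2 : ℝ)) *
          Real.exp (-x ^ 2 / (4 * τ) - γ ^ 2 * τ) *
          Real.exp (lam * (z + α * τ) / (2 * a ^ 2)) *
          ((z + α * τ) *
            ∫ w in (0 : ℝ)..(t - τ), w ^ (-(3 / 2 : ℝ)) *
              Real.exp (-(z + α * τ) ^ 2 / (4 * a ^ 2 * w)) *
              Real.exp (-lam ^ 2 * w / (4 * a ^ 2)) * h (t - τ - w))) :
    -- (i) the heat equation for `x, z, t > 0`
    (∀ x z t : ℝ, 0 < x → 0 < z → 0 < t →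
      deriv (fun t' => u x z t') t =
        a ^ 2 * iteratedDeriv 2 (fun z' => u x z' t) z -
          lam * deriv (fun z' => u x z' t) z) ∧
    -- (ii) the boundary condition at `z = 0`
    (∀ x t : ℝ, 0 < x → 0 < t →
      deriv (fun t' => u x 0 t') t =
        iteratedDeriv 2 (fun x' => u x' 0 t) x -
          2 * γ * deriv (fun x' => u x' 0 t) x +
          α * deriv (fun z' => u x z' t) 0) ∧
    -- (iii) `u → A h(t)` as `(x,z) → (0,0)`
    (∀ t : ℝ, 0 < t →
      Tendsto (fun w : ℝ × ℝ => u w.1 w.2 t)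
        (nhdsWithin (0, 0) (Ioi (0 : ℝ) ×ˢ Ioi (0 : ℝ))) (nhds (A * h t))) ∧
    -- (iv) `u → 0` as `x² + z² → ∞`
    (∀ t : ℝ, 0 < t →
      Tendsto (fun w : ℝ × ℝ => u w.1 w.2 t)
        ((comap (fun w : ℝ × ℝ => w.1 ^ 2 + w.2 ^ 2) atTop) ⊓
          𝓟 (Ioi (0 : ℝ) ×ˢ Ioi (0 : ℝ))) (nhds 0)) ∧
    -- (v) `u → 0` as `t → 0⁺`
    (∀ x z : ℝ, 0 < x → 0 < z →
      Tendsto (fun t => u x z t) (nhdsWithin 0 (Ioi 0)) (nhds 0)) := by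
  obtain ⟨Cb, hCb⟩ := hbdd
  set H : ℝ → ℝ := fun r => h (max r 0) with hHdef
  have hH : Continuous H := hcont.comp_continuous (by fun_prop) fun r => le_max_right r 0
  have hB : ∀ r, |H r| ≤ Cb := fun r => hCb _ (le_max_right r 0)
  have hH0 : ∀ r, r ≤ 0 → H r = 0 := fun r hr => by rw [hHdef]; simp [max_eq_right hr, h0]
  have hd : 0 < a ^ 2 := by positivity
  have key : ∀ x z t, 0 ≤ t →
      u x z t = A / (4 * a * π) * lumped 1 (2 * γ) (a ^ 2) lam α H x z t := by
    intro x z t ht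
    rw [hu, lumped_eq_intervalIntegral one_pos hd hH0 ht, ← mul_assoc]
    congr 1
    · ring_nf
    · refine intervalIntegral.integral_congr fun τ hτ => ?_
      rw [uIcc_of_le ht] at hτ
      have e : -x ^ 2 / (4 * 1 * τ) - (2 * γ) ^ 2 * τ / (4 * 1) =
          -x ^ 2 / (4 * τ) - γ ^ 2 * τ := by ring
      simp only [e]
      congr 2
      refine intervalIntegral.integral_congr fun w hw => ?_
      rw [uIcc_of_le (sub_nonneg.2 hτ.2)] at hw
      simp only [hHdef, max_eq_left (sub_nonneg.2 hw.2)]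
  have time : ∀ x z t, 0 < t → deriv (fun t' => u x z t') t =
      A / (4 * a * π) * deriv (fun t' => lumped 1 (2 * γ) (a ^ 2) lam α H x z t') t := by
    intro x z t ht
    rw [← deriv_const_mul_field]
    refine EventuallyEq.deriv_eq ?_
    filter_upwards [Ioi_mem_nhds ht] with s hs using key x z s (le_of_lt hs)
  refine ⟨fun x z t hx hz ht => ?_, fun x t hx ht => ?_, fun t ht => ?_, fun t ht => ?_,
    fun x z hx hz => ?_⟩
  · rw [time x z t ht, deriv_lumped_interior one_pos hd hα hH hB hH0 t hx hz]
    simp only [key _ _ t ht.le, iteratedDeriv_const_mul_field, deriv_const_mul_field]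
    ring
  · rw [time x 0 t ht, deriv_lumped_boundary one_pos hd hα hH hB hH0 hx ht]
    simp only [key _ _ t ht.le, iteratedDeriv_const_mul_field, deriv_const_mul_field]
    ring
  · simp only [key _ _ t ht.le]
    convert (tendsto_lumped_corner (μ₁ := 2 * γ) (μ₂ := lam) one_pos hd hα hH hB hH0 t).const_mul
      (A / (4 * a * π)) using 2
    rw [mul_one, sqrt_mul pi_pos.le, sqrt_sq ha.le, hHdef]
    simp only [max_eq_left ht.le]
    have hπ : √π ^ 2 = π := sq_sqrt pi_pos.le
    field_simp
    rw [hπ]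
    ring
  · simp only [key _ _ t ht.le]
    simpa using (tendsto_lumped_infinity one_pos hd hα hB hH0 ht).const_mul (A / (4 * a * π))
  · have := (tendsto_lumped_initial (μ₁ := 2 * γ) (μ₂ := lam) one_pos hd hα hB hH0 hx hz).const_mul
      (A / (4 * a * π))
    rw [mul_zero] at this
    refine this.congr' ?_
    filter_upwards [self_mem_nhdsWithin] with t ht using (key x z t (le_of_lt ht)).symm
end

section
/- Efros' theorem (generalized Laplace convolution theorem). Let p be a real number, q : ℝ → ℝ, F, G : ℝ → ℝ, f : [0,∞) → ℝ and g : [0,∞) × [0,∞) → ℝ. Assume: (i) ∫_0^∞ e^{−q(p)τ} f(τ) dτ = F(q(p)); (ii) for every τ ≥ 0, ∫_0^∞ e^{−pt} g(t,τ) dt = e^{−q(p)τ} G(p); (iii) the function (t,τ) ↦ e^{−pt} f(τ) g(t,τ) is integrable on (0,∞) × (0,∞). Then ∫_0^∞ e^{−pt} ( ∫_0^∞ f(τ) g(t,τ) dτ ) dt = F(q(p))·G(p). -/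
open MeasureTheory Real Filter Set

/-- Efros' theorem (generalized Laplace-transform convolution theorem):
if `L[f](q(p)) = F(q(p))`, `L[g(·,τ)](p) = e^{−q(p)τ} G(p)` for all `τ ≥ 0`, and
`(t,τ) ↦ e^{−pt} f(τ) g(t,τ)` is integrable on `(0,∞) × (0,∞)`, then
`L[ ∫_0^∞ f(τ) g(·,τ) dτ ](p) = F(q(p)) G(p)`. -/
theorem efros_theorem (p : ℝ) (q F G : ℝ → ℝ) (f : ℝ → ℝ) (g : ℝ → ℝ → ℝ)
    (h₁ : ∫ τ in Ioi (0 : ℝ), Real.exp (-q p * τ) * f τ = F (q p))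
    (h₂ : ∀ τ : ℝ, 0 ≤ τ →
      ∫ t in Ioi (0 : ℝ), Real.exp (-p * t) * g t τ = Real.exp (-q p * τ) * G p)
    (h₃ : IntegrableOn (fun w : ℝ × ℝ => Real.exp (-p * w.1) * f w.2 * g w.1 w.2)
      (Ioi (0 : ℝ) ×ˢ Ioi (0 : ℝ))) :
    ∫ t in Ioi (0 : ℝ), Real.exp (-p * t) * ∫ τ in Ioi (0 : ℝ), f τ * g t τ =
      F (q p) * G p := by
  rw [IntegrableOn, Measure.volume_eq_prod, ← Measure.prod_restrict] at h₃
  calc ∫ t in Ioi (0 : ℝ), Real.exp (-p * t) * ∫ τ in Ioi (0 : ℝ), f τ * g t τ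
      = ∫ t in Ioi (0 : ℝ), ∫ τ in Ioi (0 : ℝ), Real.exp (-p * t) * f τ * g t τ := by
        simp only [mul_assoc, integral_const_mul]
    _ = ∫ τ in Ioi (0 : ℝ), ∫ t in Ioi (0 : ℝ), Real.exp (-p * t) * f τ * g t τ :=
        integral_integral_swap h₃
    _ = ∫ τ in Ioi (0 : ℝ), Real.exp (-q p * τ) * f τ * G p := by
        refine setIntegral_congr_fun measurableSet_Ioi fun τ hτ => ?_
        simp only [mul_comm _ (f τ), mul_assoc, integral_const_mul, h₂ τ (le_of_lt hτ)]
    _ = F (q p) * G p := by rw [integral_mul_const, h₁]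
end
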